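/- arXiv:2311.07542 — 3 statements merged into one kernel-verified Lean document; each statement's English description precedes it below -/
import Mathlib

section
/- Let n ≥ 2 and let Γ ⊂ ℝⁿ satisfy condition (C) with μ_Γ⁺ < +∞. Let 0 < a < b < ∞ and α, β ∈ ℝ. Then there exists a unique function v, continuous on {a ≤ |x| ≤ b}, which is a viscosity solution of λ(A[v]) ∈ ∂Γ in the annulus {a < |x| < b} with v = α on {|x| = a} and v = β on {|x| = b}, if and only if one of the following holds: (a) β − α ∈ [−2(log b − log a), 0]; (b) β − α ∈ (−∞, −2(log b − log a)) ∪ (0, +∞) and μ_Γ⁻ < +∞. -/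
open Filter Topology MeasureTheory Metric Set
open scoped BigOperators ENNReal NNReal

noncomputable section

/-- `ℝⁿ` with the Euclidean norm. -/
abbrev Euc (n : ℕ) := EuclideanSpace ℝ (Fin n)

/-- The positive cone `Γₙ = {λ : λᵢ > 0 ∀ i}`. -/
def GammaN (n : ℕ) : Set (Fin n → ℝ) := {lam | ∀ i, 0 < lam i}

/-- Condition (C): `Γ ⊊ ℝⁿ` is a nonempty open symmetric cone with vertex at the origin
satisfying `Γ + Γₙ ⊆ Γ`. -/
def CondC {n : ℕ} (Γ : Set (Fin n → ℝ)) : Prop :=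
  Γ.Nonempty ∧ Γ ≠ Set.univ ∧ IsOpen Γ ∧
    (∀ σ : Equiv.Perm (Fin n), ∀ lam ∈ Γ, lam ∘ σ ∈ Γ) ∧
    (∀ lam ∈ Γ, ∀ t : ℝ, 0 < t → t • lam ∈ Γ) ∧
    (∀ lam ∈ Γ, ∀ mu ∈ GammaN n, lam + mu ∈ Γ)

/-- `λ* = (1, -1, …, -1)`. -/
def lamStar (n : ℕ) : Fin n → ℝ := fun i => if i.val = 0 then 1 else -1

/-- Partial derivative `∂ᵢ v (x)`. -/
def pgrad {n : ℕ} (v : Euc n → ℝ) (x : Euc n) (i : Fin n) : ℝ :=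
  fderiv ℝ v x (EuclideanSpace.single i 1)

/-- Second partial derivative `∂ᵢ∂ⱼ v (x)`. -/
def phess {n : ℕ} (v : Euc n → ℝ) (x : Euc n) (i j : Fin n) : ℝ :=
  fderiv ℝ (fun y => fderiv ℝ v y (EuclideanSpace.single j 1)) x (EuclideanSpace.single i 1)

/-- The Möbius Hessian
`A[v](x) = e^{-2v(x)} (-∇²v + ∇v ⊗ ∇v - ½ |∇v|² I)` as a matrix. -/
def mobius {n : ℕ} (v : Euc n → ℝ) (x : Euc n) : Matrix (Fin n) (Fin n) ℝ :=
  Real.exp (-2 * v x) • Matrix.of fun i j =>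
    - phess v x i j + pgrad v x i * pgrad v x j
      - (1 / 2) * (∑ k, (pgrad v x k) ^ 2) * (if i = j then (1 : ℝ) else 0)

/-- The (unordered, permutation-invariant) eigenvalue tuple of the symmetric matrix `M`
belongs to the (permutation-invariant) set `S`. -/
def EigIn {n : ℕ} (M : Matrix (Fin n) (Fin n) ℝ) (S : Set (Fin n → ℝ)) : Prop :=
  ∃ hM : M.IsHermitian, hM.eigenvalues ∈ S

/-- Viscosity supersolution of `λ(A[v]) ∈ ∂Γ` in `Ω`, i.e. `λ(A[v]) ∈ closure Γ`
in the viscosity sense (for a real-valued `v`). -/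
def Supersol {n : ℕ} (Γ : Set (Fin n → ℝ)) (Ω : Set (Euc n)) (v : Euc n → ℝ) : Prop :=
  ∀ x₀ ∈ Ω, ∀ φ : Euc n → ℝ, ContDiff ℝ 2 φ → φ x₀ = v x₀ →
    (∀ᶠ x in 𝓝[Ω] x₀, φ x ≤ v x) → EigIn (mobius φ x₀) (closure Γ)

/-- Viscosity subsolution of `λ(A[v]) ∈ ∂Γ` in `Ω`, i.e. `λ(A[v]) ∈ ℝⁿ ∖ Γ`
in the viscosity sense (for a real-valued `v`). -/
def Subsol {n : ℕ} (Γ : Set (Fin n → ℝ)) (Ω : Set (Euc n)) (v : Euc n → ℝ) : Prop :=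
  ∀ x₀ ∈ Ω, ∀ φ : Euc n → ℝ, ContDiff ℝ 2 φ → φ x₀ = v x₀ →
    (∀ᶠ x in 𝓝[Ω] x₀, v x ≤ φ x) → EigIn (mobius φ x₀) Γᶜ


/-- `μ_Γ⁻ = inf {c : (c,-1,…,-1) ∈ closure Γ} ∈ [0,∞]` (with `inf ∅ = +∞`). -/
def muMinus {n : ℕ} (Γ : Set (Fin n → ℝ)) : EReal :=
  sInf {c : EReal | ∃ r : ℝ, c = (r : EReal) ∧
    (fun i : Fin n => if i.val = 0 then r else -1) ∈ closure Γ}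

/-- `μ_Γ⁺ = sup {c : (-c,1,…,1) ∈ closure Γ} ∈ [0,∞]`. -/
def muPlus {n : ℕ} (Γ : Set (Fin n → ℝ)) : EReal :=
  sSup {c : EReal | ∃ r : ℝ, c = (r : EReal) ∧
    (fun i : Fin n => if i.val = 0 then -r else 1) ∈ closure Γ}

/-!
In the variable `t = log |x|`, the radial function `v = u(t) - t` has
`A[v] = e^{-2u} (½ (1 - u'²) I - (u'' + 1 - u'²) x ⊗ x / |x|²)`, whose eigenvalues are
`-u'' - ½ (1 - u'²)`, in the radial direction, and `½ (1 - u'²)`. So `λ(A[v])` lies in the cone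
`∂Γ` as soon as `u'' = k (1 - u'²)`, where `k` comes from a boundary point `(-m, 1, …, 1)` of `Γ`
if `|u'| < 1`, and from a boundary point `(m, -1, …, -1)` if `|u'| > 1`. Such points exist when
`μ_Γ⁺ < ∞` and when `μ_Γ⁻ < ∞`, respectively. The equation is solved through `w = e^{ku}`, and the
first integral `(1 - u'²) e^{2ku}` shows that `1 - u'²` has on the whole interval the sign it has
at a mean value point, where `u'` is the slope `(β - α) / (log b - log a) + 1`. If that slope is
`±1`, then `u` is affine and `λ(A[v]) = 0`.

These solutions deform: for a suitable `h` the profile `u - ε h` is strictly in `Γ` for small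
`ε > 0` and strictly outside `closure Γ` for small `ε < 0`, so comparison with it, followed by
`ε → 0`, shows that every solution with the same boundary values is equal to `v`.

If `μ_Γ⁻ = ∞`, no point `(p, q, …, q)` with `q < 0` is in `closure Γ`, so every `u` with `|u'| > 1`
is a strict barrier from below. Barriers with a steep boundary layer force the slope of the boundary
values of a supersolution into `[-1, 1]`.
-/

open scoped MatrixOrder Matrix

section Eigenvalues

variable {𝕜 : Type*} [RCLike 𝕜]

section Operators

variable {E : Type*} [NormedAddCommGroup E] [InnerProductSpace 𝕜 E] [FiniteDimensional 𝕜 E]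
  {m : ℕ} (hm : Module.finrank 𝕜 E = m) {S T : E →ₗ[𝕜] E}

theorem re_inner_apply_self_eq_sum_eigenvalues (hT : T.IsSymmetric) (x : E) :
    RCLike.re (inner 𝕜 (T x) x) =
      ∑ j, hT.eigenvalues hm j * ‖(hT.eigenvectorBasis hm).repr x j‖ ^ 2 := by
  rw [← (hT.eigenvectorBasis hm).repr.inner_map_map, PiLp.inner_apply, map_sum]
  refine Finset.sum_congr rfl fun j _ => ?_
  rw [hT.eigenvectorBasis_apply_self_apply hm x j, ← smul_eq_mul, inner_smul_left,
    inner_self_eq_norm_sq_to_K, RCLike.conj_ofReal]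
  norm_cast

theorem eigenvalues_le_of_inner_le
    (hS : S.IsSymmetric) (hT : T.IsSymmetric)
    (hST : ∀ x, RCLike.re (inner 𝕜 (S x) x) ≤ RCLike.re (inner 𝕜 (T x) x)) (i : Fin m) :
    hS.eigenvalues hm i ≤ hT.eigenvalues hm i := by
  set bS := hS.eigenvectorBasis hm
  set bT := hT.eigenvectorBasis hm
  -- A nonzero vector in the span of the eigenvectors of `S` up to `i` and of those of `T` from `i`.
  obtain ⟨x, hx0, hxS, hxT⟩ : ∃ x : E, x ≠ 0 ∧ (∀ j, i < j → bS.repr x j = 0) ∧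
      ∀ j, j < i → bT.repr x j = 0 := by
    let L : E →ₗ[𝕜] Fin m → 𝕜 := LinearMap.pi fun j =>
      if i < j then (bS.toBasis.coord j) else if j < i then (bT.toBasis.coord j) else 0
    have hL : ¬ Function.Injective L := fun hinj => by
      obtain ⟨x, hx⟩ := (LinearMap.injective_iff_surjective_of_finrank_eq_finrank
        (by simp [hm])).1 hinj (Pi.single i 1)
      simpa [L] using congrFun hx i
    obtain ⟨x, hLx, hx0⟩ : ∃ x, L x = 0 ∧ x ≠ 0 := by
      simpa [injective_iff_map_eq_zero] using hL
    refine ⟨x, hx0, fun j hj => ?_, fun j hj => ?_⟩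
    · simpa [L, hj] using congrFun hLx j
    · simpa [L, hj, hj.not_gt] using congrFun hLx j
  have hSx : hS.eigenvalues hm i * ‖x‖ ^ 2 ≤ RCLike.re (inner 𝕜 (S x) x) := by
    rw [re_inner_apply_self_eq_sum_eigenvalues hm hS, ← bS.repr.norm_map,
      EuclideanSpace.norm_sq_eq, Finset.mul_sum]
    refine Finset.sum_le_sum fun j _ => ?_
    rcases lt_or_ge i j with hj | hj
    · simp [bS, hxS j hj]
    · gcongr
      exact hS.eigenvalues_antitone hm hj
  have hTx : RCLike.re (inner 𝕜 (T x) x) ≤ hT.eigenvalues hm i * ‖x‖ ^ 2 := by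
    rw [re_inner_apply_self_eq_sum_eigenvalues hm hT, ← bT.repr.norm_map,
      EuclideanSpace.norm_sq_eq, Finset.mul_sum]
    refine Finset.sum_le_sum fun j _ => ?_
    rcases lt_or_ge j i with hj | hj
    · simp [bT, hxT j hj]
    · gcongr
      exact hT.eigenvalues_antitone hm hj
  exact le_of_mul_le_mul_right (hSx.trans ((hST x).trans hTx)) (by positivity)

end Operators

theorem exists_perm_eq_comp {ι α : Type*} [Fintype ι] {f g : ι → α}
    (h : Finset.univ.val.map f = Finset.univ.val.map g) : ∃ σ : Equiv.Perm ι, f = g ∘ σ := by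
  classical
  have e : ∀ c : α, Nonempty ({i // f i = c} ≃ {i // g i = c}) := fun c => by
    refine ⟨Fintype.equivOfCardEq ?_⟩
    simpa [Multiset.count_map, Fintype.card_subtype, Finset.card_def, eq_comm]
      using congrArg (Multiset.count c) h
  exact ⟨Equiv.ofFiberEquiv fun c => (e c).some, funext fun i =>
    (Equiv.ofFiberEquiv_map (fun c => (e c).some) i).symm⟩

variable {ι : Type*} [Fintype ι] [DecidableEq ι]

theorem exists_perm_eigenvalues_eq {A : Matrix ι ι 𝕜} (hA : A.IsHermitian) {d : ι → ℝ}
    (h : A.charpoly = ∏ i, (Polynomial.X - Polynomial.C (d i : 𝕜))) :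
    ∃ σ : Equiv.Perm ι, hA.eigenvalues = d ∘ σ := by
  refine exists_perm_eq_comp (Multiset.map_injective (RCLike.ofReal_injective (K := 𝕜)) ?_)
  have hroots := hA.roots_charpoly_eq_eigenvalues
  rw [h, Polynomial.roots_prod _ _ (Finset.prod_ne_zero_iff.2 fun i _ =>
    Polynomial.X_sub_C_ne_zero _)] at hroots
  simpa using hroots.symm

theorem charpoly_smul_one_add_vecMulVec {R : Type*} [CommRing R] [Nonempty ι] (q : R)
    (u v : ι → R) : (q • (1 : Matrix ι ι R) + Matrix.vecMulVec u v).charpoly =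
      (Polynomial.X - Polynomial.C (q + u ⬝ᵥ v)) *
        (Polynomial.X - Polynomial.C q) ^ (Fintype.card ι - 1) := by
  have hshift : q • (1 : Matrix ι ι R) + Matrix.vecMulVec u v =
      Matrix.vecMulVec u v - Matrix.scalar ι (-q) := by
    rw [map_neg, sub_neg_eq_add, add_comm, Matrix.scalar_apply, Matrix.smul_one_eq_diagonal]
  obtain ⟨k, hk⟩ : ∃ k, Fintype.card ι = k + 1 :=
    Nat.exists_eq_add_one_of_ne_zero Fintype.card_ne_zero
  rw [hshift, Matrix.charpoly_sub_scalar, Matrix.charpoly_vecMulVec, hk]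
  simp only [add_tsub_cancel_right, Polynomial.smul_eq_C_mul, map_neg, Polynomial.sub_comp,
    Polynomial.pow_comp, Polynomial.X_comp, Polynomial.mul_comp, Polynomial.C_comp, map_add]
  ring

theorem exists_perm_eigenvalues_smul {A : Matrix ι ι ℝ} (hA : A.IsHermitian) {t : ℝ}
    (htA : (t • A).IsHermitian) :
    ∃ σ : Equiv.Perm ι, htA.eigenvalues = (t • hA.eigenvalues) ∘ σ := by
  refine exists_perm_eigenvalues_eq htA ?_
  have := hA.charpoly_cfc_eq (fun x => t * x)
  rw [cfc_const_mul_id (R := ℝ) t A] at this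
  simpa using this

theorem eigenvalues_mono {A B : Matrix ι ι 𝕜} (hA : A.IsHermitian) (hB : B.IsHermitian)
    (hAB : A ≤ B) : hA.eigenvalues ≤ hB.eigenvalues := by
  intro i
  refine eigenvalues_le_of_inner_le _ _ _ (fun x => ?_) _
  have hpos := (Matrix.isPositive_toEuclideanLin_iff.2 (Matrix.le_iff.1 hAB)).re_inner_nonneg_left x
  simpa [inner_sub_left] using hpos

end Eigenvalues

section SymmetricCones

variable {n : ℕ} {S : Set (Fin n → ℝ)}

/-- A symmetric cone of tuples: the membership of the eigenvalues of a matrix in such a set neither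
depends on their order nor changes under multiplication of the matrix by a positive number. -/
structure IsSymmetricCone (S : Set (Fin n → ℝ)) : Prop where
  comp_perm : ∀ σ : Equiv.Perm (Fin n), ∀ lam ∈ S, lam ∘ σ ∈ S
  smul_mem : ∀ lam ∈ S, ∀ t : ℝ, 0 < t → t • lam ∈ S

namespace IsSymmetricCone

theorem comp_perm_mem_iff (hS : IsSymmetricCone S) (σ : Equiv.Perm (Fin n)) {lam : Fin n → ℝ} :
    lam ∘ σ ∈ S ↔ lam ∈ S :=
  ⟨fun h => by simpa [Function.comp_assoc] using hS.comp_perm σ⁻¹ _ h, hS.comp_perm σ lam⟩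

theorem smul_mem_iff (hS : IsSymmetricCone S) {t : ℝ} (ht : 0 < t) {lam : Fin n → ℝ} :
    t • lam ∈ S ↔ lam ∈ S :=
  ⟨fun h => by simpa [ht.ne'] using hS.smul_mem _ h t⁻¹ (inv_pos.2 ht),
    fun h => hS.smul_mem lam h t ht⟩

theorem compl (hS : IsSymmetricCone S) : IsSymmetricCone Sᶜ where
  comp_perm σ lam h := by rwa [mem_compl_iff, hS.comp_perm_mem_iff]
  smul_mem lam h t ht := by rwa [mem_compl_iff, hS.smul_mem_iff ht]

theorem closure (hS : IsSymmetricCone S) : IsSymmetricCone (closure S) where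
  comp_perm σ lam h := map_mem_closure (f := fun lam => lam ∘ σ) (by fun_prop) h (hS.comp_perm σ)
  smul_mem lam h t ht :=
    map_mem_closure (continuous_const_smul t) h fun lam hlam => hS.smul_mem lam hlam t ht

end IsSymmetricCone

/-- The tuple `(p, q, …, q)`, written as in `muMinus` and `muPlus`. -/
def headTail (n : ℕ) (p q : ℝ) : Fin n → ℝ := fun i => if i.val = 0 then p else q

variable {A B M : Matrix (Fin n) (Fin n) ℝ}

theorem eigIn_iff (hM : M.IsHermitian) : EigIn M S ↔ hM.eigenvalues ∈ S :=
  ⟨fun h => h.2, fun h => ⟨hM, h⟩⟩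

theorem eigIn_compl_iff (hM : M.IsHermitian) : EigIn M Sᶜ ↔ ¬ EigIn M S := by
  rw [eigIn_iff hM, eigIn_iff hM, mem_compl_iff]

namespace EigIn

theorem mono (h : EigIn A S) (hS : IsUpperSet S) (hAB : A ≤ B) : EigIn B S := by
  have hB : B.IsHermitian := by simpa using (Matrix.le_iff.1 hAB).isHermitian.add h.1
  exact ⟨hB, hS (eigenvalues_mono h.1 hB hAB) h.2⟩

theorem anti (h : EigIn B S) (hS : IsLowerSet S) (hAB : A ≤ B) : EigIn A S := by
  have hA : A.IsHermitian := by simpa using h.1.sub (Matrix.le_iff.1 hAB).isHermitian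
  exact ⟨hA, hS (eigenvalues_mono hA h.1 hAB) h.2⟩

end EigIn

theorem eigIn_smul_iff (hS : IsSymmetricCone S) (hM : M.IsHermitian) {t : ℝ} (ht : 0 < t) :
    EigIn (t • M) S ↔ EigIn M S := by
  have htM : (t • M).IsHermitian := (IsSelfAdjoint.all t).smul hM
  obtain ⟨σ, hσ⟩ := exists_perm_eigenvalues_smul hM htM
  rw [eigIn_iff htM, eigIn_iff hM, hσ, hS.comp_perm_mem_iff, hS.smul_mem_iff ht]

theorem isHermitian_smul_one_add_smul_vecMulVec (q c : ℝ) (x : Fin n → ℝ) :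
    (q • (1 : Matrix (Fin n) (Fin n) ℝ) + c • Matrix.vecMulVec x x).IsHermitian := by
  ext i j
  simp [Matrix.vecMulVec_apply, mul_comm, Matrix.one_apply, eq_comm]

theorem eigIn_smul_one_add_smul_vecMulVec_iff [NeZero n] (hS : IsSymmetricCone S) (q c : ℝ)
    (x : Fin n → ℝ) : EigIn (q • 1 + c • Matrix.vecMulVec x x) S ↔
      headTail n (q + c * x ⬝ᵥ x) q ∈ S := by
  have hM := isHermitian_smul_one_add_smul_vecMulVec q c x
  obtain ⟨σ, hσ⟩ := exists_perm_eigenvalues_eq hM (d := headTail n (q + c * x ⬝ᵥ x) q) (by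
    obtain ⟨k, rfl⟩ := Nat.exists_eq_add_one_of_ne_zero (NeZero.ne n)
    rw [← Matrix.smul_vecMulVec, charpoly_smul_one_add_vecMulVec, Fin.prod_univ_succ]
    simp [headTail])
  rw [eigIn_iff hM, hσ, hS.comp_perm_mem_iff]

end SymmetricCones

section ConditionC

variable {n : ℕ} {Γ : Set (Fin n → ℝ)}

theorem tendsto_smul_nhdsGT_zero {E : Type*} [TopologicalSpace E] [AddCommGroup E] [Module ℝ E]
    [ContinuousSMul ℝ E] (x : E) : Tendsto (fun t : ℝ => t • x) (𝓝[>] 0) (𝓝 0) := by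
  have : Continuous fun t : ℝ => t • x := by fun_prop
  simpa using (this.tendsto 0).mono_left nhdsWithin_le_nhds

@[fun_prop]
theorem continuous_headTail {X : Type*} [TopologicalSpace X] {p q : X → ℝ} (hp : Continuous p)
    (hq : Continuous q) : Continuous fun x => headTail n (p x) (q x) := by
  refine continuous_pi fun i => ?_
  unfold headTail
  split_ifs
  exacts [hp, hq]

namespace CondC

theorem isOpen (hΓ : CondC Γ) : IsOpen Γ := hΓ.2.2.1

theorem isSymmetricCone (hΓ : CondC Γ) : IsSymmetricCone Γ := ⟨hΓ.2.2.2.1, hΓ.2.2.2.2.1⟩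

theorem add_mem (hΓ : CondC Γ) {lam mu : Fin n → ℝ} (hlam : lam ∈ Γ) (hmu : ∀ i, 0 < mu i) :
    lam + mu ∈ Γ := hΓ.2.2.2.2.2 lam hlam mu hmu

theorem isUpperSet (hΓ : CondC Γ) : IsUpperSet Γ := by
  intro lam mu hle hlam
  have hlim : Tendsto (fun ε : ℝ => lam - ε • 1) (𝓝[>] 0) (𝓝 lam) := by
    simpa using (tendsto_smul_nhdsGT_zero 1).const_sub lam
  obtain ⟨ε, hε, hpos⟩ :=
    ((hlim.eventually_mem (hΓ.isOpen.mem_nhds hlam)).and self_mem_nhdsWithin).exists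
  have hsub := hΓ.add_mem hε (mu := mu - lam + ε • 1) fun i =>
    add_pos_of_nonneg_of_pos (sub_nonneg.2 (hle i)) (by simpa using hpos)
  convert hsub using 1
  abel

theorem mem_of_forall_lt (hΓ : CondC Γ) {lam mu : Fin n → ℝ} (hlam : lam ∈ closure Γ)
    (hlt : ∀ i, lam i < mu i) : mu ∈ Γ :=
  interior_subset (hΓ.isUpperSet.mem_interior_of_forall_lt hlam hlt)

theorem zero_mem_closure (hΓ : CondC Γ) : 0 ∈ closure Γ := by
  obtain ⟨lam, hlam⟩ := hΓ.1
  exact mem_closure_of_tendsto (tendsto_smul_nhdsGT_zero lam)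
    (eventually_nhdsWithin_of_forall (hΓ.isSymmetricCone.smul_mem lam hlam))

theorem mem_of_forall_pos (hΓ : CondC Γ) {lam : Fin n → ℝ} (hlam : ∀ i, 0 < lam i) : lam ∈ Γ :=
  hΓ.mem_of_forall_lt hΓ.zero_mem_closure hlam

theorem zero_notMem (hΓ : CondC Γ) : 0 ∉ Γ := by
  intro h0
  refine hΓ.2.1 (eq_univ_of_forall fun lam => ?_)
  have hmem := (tendsto_smul_nhdsGT_zero lam).eventually_mem (hΓ.isOpen.mem_nhds h0)
  obtain ⟨t, ht, hpos⟩ := (hmem.and self_mem_nhdsWithin).exists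
  exact (hΓ.isSymmetricCone.smul_mem_iff hpos).1 ht

theorem notMem_closure_of_forall_neg (hΓ : CondC Γ) {lam : Fin n → ℝ} (hlam : ∀ i, lam i < 0) :
    lam ∉ closure Γ := fun h => hΓ.zero_notMem (hΓ.mem_of_forall_lt h hlam)

end CondC

theorem exists_mem_frontier_of_continuous {X : Type*} [TopologicalSpace X] {S : Set X} {f : ℝ → X}
    (hf : Continuous f) (hin : ∃ r, f r ∈ closure S) (hout : ∃ r, f r ∉ closure S) :
    ∃ r, f r ∈ frontier S := by
  obtain ⟨r, hr⟩ : (frontier (f ⁻¹' closure S)).Nonempty :=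
    nonempty_frontier_iff.2 ⟨hin, (ne_univ_iff_exists_notMem _).2 hout⟩
  exact ⟨r, frontier_closure_subset (hf.frontier_preimage_subset _ hr)⟩

theorem CondC.exists_headTail_one_mem_frontier (hΓ : CondC Γ) (hmu : muPlus Γ ≠ ⊤) :
    ∃ m : ℝ, headTail n (-m) 1 ∈ frontier Γ := by
  refine exists_mem_frontier_of_continuous (f := fun m => headTail n (-m) 1) (by fun_prop)
    ⟨-1, subset_closure (hΓ.mem_of_forall_pos fun i => by simp [headTail])⟩ ?_
  by_contra! hall
  exact hmu (EReal.eq_top_iff_forall_lt _ |>.2 fun r =>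
    (EReal.coe_lt_coe_iff.2 (lt_add_one r)).trans_le (le_sSup ⟨r + 1, rfl, hall (r + 1)⟩))

theorem CondC.exists_headTail_neg_one_mem_frontier (hΓ : CondC Γ) (hmu : muMinus Γ < ⊤) :
    ∃ m : ℝ, headTail n m (-1) ∈ frontier Γ := by
  obtain ⟨_, ⟨r, -, hr⟩, -⟩ := sInf_lt_iff.1 hmu
  refine exists_mem_frontier_of_continuous (f := fun m => headTail n m (-1)) (by fun_prop) ⟨r, hr⟩
    ⟨-1, hΓ.notMem_closure_of_forall_neg fun i => by simp [headTail]⟩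

theorem smul_headTail (t p q : ℝ) : t • headTail n p q = headTail n (t * p) (t * q) := by
  ext i
  by_cases hi : i.val = 0 <;> simp [headTail, hi]

theorem CondC.headTail_notMem_closure_of_neg (hΓ : CondC Γ) (hmu : ¬ muMinus Γ < ⊤) {p q : ℝ}
    (hq : q < 0) : headTail n p q ∉ closure Γ := by
  intro h
  refine hmu ((sInf_le ?_).trans_lt (EReal.coe_lt_top ((-q)⁻¹ * p)))
  refine ⟨(-q)⁻¹ * p, rfl, ?_⟩
  have hs := hΓ.isSymmetricCone.closure.smul_mem _ h (-q)⁻¹ (by simpa using hq)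
  have hneg : (-q)⁻¹ * q = -1 := by rw [inv_neg, neg_mul, inv_mul_cancel₀ hq.ne]
  rwa [smul_headTail, hneg] at hs

end ConditionC

section Touching

theorem deriv_deriv_nonneg_of_isLocalMin {f : ℝ → ℝ} {x : ℝ} (hmin : IsLocalMin f x)
    (hf : ContinuousAt f x) : 0 ≤ deriv (deriv f) x := by
  by_contra! hneg
  have hmax := isLocalMax_of_deriv_deriv_neg hneg hmin.deriv_eq_zero hf
  have hconst : f =ᶠ[𝓝 x] fun _ => f x := by
    filter_upwards [hmin, hmax] with y h₁ h₂ using le_antisymm h₂ h₁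
  simp [hconst.deriv.deriv_eq] at hneg

section NormedSpace

variable {E : Type*} [NormedAddCommGroup E] [NormedSpace ℝ E] {f : E → ℝ} {x : E}

theorem differentiableAt_fderiv_of_contDiffAt (hf : ContDiffAt ℝ 2 f x) :
    DifferentiableAt ℝ (fderiv ℝ f) x :=
  (hf.fderiv_right (m := 1) (by norm_num)).differentiableAt (by norm_num)

theorem deriv_deriv_comp_line (hf : ContDiffAt ℝ 2 f x) (y : E) :
    deriv (deriv fun t : ℝ => f (x + t • y)) 0 = fderiv ℝ (fderiv ℝ f) x y y := by
  have hline (t : ℝ) : HasDerivAt (fun t : ℝ => x + t • y) y t := by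
    simpa using ((hasDerivAt_id t).smul_const y).const_add x
  have hlim : Tendsto (fun t : ℝ => x + t • y) (𝓝 0) (𝓝 x) := by
    simpa using (hline 0).continuousAt.tendsto
  have hderiv : deriv (fun t : ℝ => f (x + t • y)) =ᶠ[𝓝 0] fun t => fderiv ℝ f (x + t • y) y := by
    filter_upwards [hlim.eventually (hf.eventually (by simp))] with t ht
    exact ((ht.differentiableAt (by norm_num)).hasFDerivAt.comp_hasDerivAt t (hline t)).deriv
  have hsecond : HasFDerivAt (fderiv ℝ f) (fderiv ℝ (fderiv ℝ f) x) (x + (0 : ℝ) • y) := by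
    simpa using (differentiableAt_fderiv_of_contDiffAt hf).hasFDerivAt
  have hcomp : HasDerivAt (fun t : ℝ => fderiv ℝ f (x + t • y) y)
      (fderiv ℝ (fderiv ℝ f) x y y) 0 := by
    have h := hsecond.comp_hasDerivAt (0 : ℝ) (hline 0)
    simpa using h.clm_apply (hasDerivAt_const (0 : ℝ) y)
  rw [hderiv.deriv_eq, hcomp.deriv]

theorem fderiv_fderiv_nonneg_of_isLocalMin (hf : ContDiffAt ℝ 2 f x) (hmin : IsLocalMin f x)
    (y : E) : 0 ≤ fderiv ℝ (fderiv ℝ f) x y y := by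
  have hline : Continuous fun t : ℝ => x + t • y := by fun_prop
  rw [← deriv_deriv_comp_line hf y]
  refine deriv_deriv_nonneg_of_isLocalMin ?_ ?_
  · refine IsMinFilter.comp_tendsto (f := f) (g := fun t : ℝ => x + t • y) (by simpa using! hmin) ?_
    exact hline.tendsto' 0 _ (by simp)
  · exact ContinuousAt.comp (f := fun t : ℝ => x + t • y) (g := f) (by simpa using hf.continuousAt)
      hline.continuousAt

end NormedSpace

variable {n : ℕ} {f φ ψ : Euc n → ℝ} {x : Euc n}

theorem phess_eq_fderiv_fderiv (hf : ContDiffAt ℝ 2 f x) (i j : Fin n) :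
    phess f x i j =
      fderiv ℝ (fderiv ℝ f) x (EuclideanSpace.single i 1) (EuclideanSpace.single j 1) := by
  rw [phess, fderiv_clm_apply (differentiableAt_fderiv_of_contDiffAt hf) (by fun_prop)]
  simp

theorem isHermitian_phess (hf : ContDiffAt ℝ 2 f x) : (Matrix.of (phess f x)).IsHermitian := by
  ext i j
  simp [phess_eq_fderiv_fderiv hf, (hf.isSymmSndFDerivAt (by simp)).eq (EuclideanSpace.single i 1)]

theorem of_phess_sub (hf : ContDiffAt ℝ 2 f x) (hφ : ContDiffAt ℝ 2 φ x) :
    Matrix.of (phess (fun y => f y - φ y) x) = Matrix.of (phess f x) - Matrix.of (phess φ x) := by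
  have h : fderiv ℝ (fun y => f y - φ y) =ᶠ[𝓝 x] fun y => fderiv ℝ f y - fderiv ℝ φ y := by
    filter_upwards [hf.eventually (by simp), hφ.eventually (by simp)] with y h₁ h₂
    exact fderiv_fun_sub (h₁.differentiableAt (by norm_num)) (h₂.differentiableAt (by norm_num))
  ext i j
  simp only [Matrix.of_apply, Matrix.sub_apply, phess_eq_fderiv_fderiv (hf.sub hφ),
    phess_eq_fderiv_fderiv hf, phess_eq_fderiv_fderiv hφ, h.fderiv_eq]
  rw [fderiv_fun_sub (differentiableAt_fderiv_of_contDiffAt hf)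
    (differentiableAt_fderiv_of_contDiffAt hφ)]
  rfl

theorem dotProduct_phess_mulVec (hf : ContDiffAt ℝ 2 f x) (y : Fin n → ℝ) :
    y ⬝ᵥ Matrix.of (phess f x) *ᵥ y =
      fderiv ℝ (fderiv ℝ f) x (WithLp.toLp 2 y) (WithLp.toLp 2 y) := by
  have hy : (WithLp.toLp 2 y : Euc n) = ∑ i, y i • EuclideanSpace.single i (1 : ℝ) := by
    ext j
    simp [Finset.sum_apply, Pi.single_apply]
  simp only [hy, dotProduct, Matrix.mulVec, Matrix.of_apply, phess_eq_fderiv_fderiv hf, map_sum,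
    map_smul, sum_apply, smul_apply, smul_eq_mul, Finset.mul_sum]
  rw [Finset.sum_comm]
  exact Finset.sum_congr rfl fun i _ => Finset.sum_congr rfl fun j _ => by ring

theorem posSemidef_phess_of_isLocalMin (hf : ContDiffAt ℝ 2 f x) (hmin : IsLocalMin f x) :
    (Matrix.of (phess f x)).PosSemidef := by
  refine .of_dotProduct_mulVec_nonneg (isHermitian_phess hf) fun y => ?_
  rw [star_trivial, dotProduct_phess_mulVec hf]
  exact fderiv_fderiv_nonneg_of_isLocalMin hf hmin _

theorem mobius_eq (v : Euc n → ℝ) (x : Euc n) :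
    mobius v x = Real.exp (-2 * v x) • (-Matrix.of (phess v x) +
      Matrix.vecMulVec (pgrad v x) (pgrad v x) - (1 / 2 * ∑ k, pgrad v x k ^ 2) • 1) := by
  ext i j
  simp [mobius, Matrix.vecMulVec_apply, Matrix.one_apply]

theorem isHermitian_mobius (hf : ContDiffAt ℝ 2 f x) : (mobius f x).IsHermitian := by
  rw [mobius_eq]
  refine (IsSelfAdjoint.all _).smul (((isHermitian_phess hf).neg.add ?_).sub ?_)
  · ext i j
    simp [Matrix.vecMulVec_apply, mul_comm]
  · exact (IsSelfAdjoint.all (1 / 2 * ∑ k, pgrad f x k ^ 2)).smul (IsSelfAdjoint.one _)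

theorem mobius_le_mobius_of_eventually_le (hφ : ContDiffAt ℝ 2 φ x) (hψ : ContDiffAt ℝ 2 ψ x)
    (heq : φ x = ψ x) (hle : ∀ᶠ y in 𝓝 x, φ y ≤ ψ y) : mobius ψ x ≤ mobius φ x := by
  have hmin : IsLocalMin (ψ - φ) x := by
    filter_upwards [hle] with y hy
    simpa [heq] using hy
  have hgrad : pgrad ψ x = pgrad φ x := by
    have h0 := hmin.fderiv_eq_zero
    rw [fderiv_sub (hψ.differentiableAt (by norm_num)) (hφ.differentiableAt (by norm_num)),
      sub_eq_zero] at h0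
    ext i
    rw [pgrad, h0, pgrad]
  have hpos := (posSemidef_phess_of_isLocalMin (hψ.sub hφ) hmin).smul (Real.exp_pos (-2 * φ x)).le
  have hdiff : mobius φ x - mobius ψ x =
      Real.exp (-2 * φ x) • Matrix.of (phess (fun y => ψ y - φ y) x) := by
    rw [mobius_eq, mobius_eq, ← heq, hgrad, of_phess_sub hψ hφ, ← smul_sub]
    congr 1
    abel
  rwa [Matrix.le_iff, hdiff]

theorem mobius_congr (h : φ =ᶠ[𝓝 x] ψ) : mobius φ x = mobius ψ x := by
  have hgrad : pgrad φ x = pgrad ψ x := by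
    ext i
    rw [pgrad, h.fderiv_eq, pgrad]
  have hhess : phess φ x = phess ψ x := by
    ext i j
    have h₁ : (fun y => fderiv ℝ φ y (EuclideanSpace.single j 1)) =ᶠ[𝓝 x]
        fun y => fderiv ℝ ψ y (EuclideanSpace.single j 1) :=
      h.fderiv.mono fun y hy => DFunLike.congr_fun hy _
    rw [phess, h₁.fderiv_eq, phess]
  rw [mobius_eq, mobius_eq, hgrad, hhess, h.eq_of_nhds]

theorem mobius_add_const (v : Euc n → ℝ) (k : ℝ) (x : Euc n) :
    mobius (fun y => v y + k) x = Real.exp (-2 * k) • mobius v x := by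
  have hgrad : pgrad (fun y => v y + k) = pgrad v := by
    ext y i
    simp [pgrad, fderiv_add_const]
  have hhess : phess (fun y => v y + k) = phess v := by
    ext y i j
    simp [phess, fderiv_add_const]
  rw [mobius_eq, mobius_eq, hgrad, hhess, smul_smul, ← Real.exp_add]
  ring_nf

theorem exists_contDiff_eventuallyEq {E : Type*} [NormedAddCommGroup E] [NormedSpace ℝ E]
    [HasContDiffBump E] [FiniteDimensional ℝ E] {f : E → ℝ} {x : E} {k : ℕ}
    (hf : ContDiffAt ℝ k f x) : ∃ g : E → ℝ, ContDiff ℝ k g ∧ g =ᶠ[𝓝 x] f := by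
  obtain ⟨r, hr, hball⟩ := Metric.eventually_nhds_iff_ball.1 (hf.eventually (by simp))
  let χ : ContDiffBump x := ⟨r / 4, r / 2, by positivity, by linarith⟩
  have hχ : tsupport χ ⊆ ball x r := by
    rw [χ.tsupport_eq]
    exact closedBall_subset_ball (half_lt_self hr)
  refine ⟨fun y => χ y * f y, ?_, ?_⟩
  · refine contDiff_iff_contDiffAt.2 fun y => ?_
    by_cases hy : y ∈ tsupport χ
    · exact χ.contDiffAt.mul (hball y (hχ hy))
    · refine contDiffAt_const (c := (0 : ℝ)) |>.congr_of_eventuallyEq ?_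
      filter_upwards [notMem_tsupport_iff_eventuallyEq.1 hy] with z hz
      simp [hz]
  · filter_upwards [χ.eventuallyEq_one] with y hy
    simp [hy]

variable {Γ : Set (Fin n → ℝ)} {Ω : Set (Euc n)} {v : Euc n → ℝ}

theorem Supersol.eigIn_of_contDiffAt (hv : Supersol Γ Ω v) (hΩ : Ω ∈ 𝓝 x) (hφ : ContDiffAt ℝ 2 φ x)
    (heq : φ x = v x) (hle : ∀ᶠ y in 𝓝 x, φ y ≤ v y) : EigIn (mobius φ x) (closure Γ) := by
  obtain ⟨ψ, hψ, hψφ⟩ := exists_contDiff_eventuallyEq hφ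
  rw [← mobius_congr hψφ]
  refine hv x (mem_of_mem_nhds hΩ) ψ hψ (hψφ.eq_of_nhds.trans heq) ?_
  rw [nhdsWithin_eq_nhds.2 hΩ]
  filter_upwards [hψφ, hle] with y h₁ h₂ using h₁.trans_le h₂

theorem Subsol.eigIn_of_contDiffAt (hv : Subsol Γ Ω v) (hΩ : Ω ∈ 𝓝 x) (hφ : ContDiffAt ℝ 2 φ x)
    (heq : φ x = v x) (hle : ∀ᶠ y in 𝓝 x, v y ≤ φ y) : EigIn (mobius φ x) Γᶜ := by
  obtain ⟨ψ, hψ, hψφ⟩ := exists_contDiff_eventuallyEq hφ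
  rw [← mobius_congr hψφ]
  refine hv x (mem_of_mem_nhds hΩ) ψ hψ (hψφ.eq_of_nhds.trans heq) ?_
  rw [nhdsWithin_eq_nhds.2 hΩ]
  filter_upwards [hψφ, hle] with y h₁ h₂ using h₂.trans_eq h₁.symm

theorem supersol_of_forall_eigIn (hS : IsUpperSet (closure Γ)) (hΩ : IsOpen Ω)
    (hv : ∀ x ∈ Ω, ContDiffAt ℝ 2 v x) (hmem : ∀ x ∈ Ω, EigIn (mobius v x) (closure Γ)) :
    Supersol Γ Ω v := by
  intro x hx φ hφ heq hle
  rw [hΩ.nhdsWithin_eq hx] at hle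
  exact (hmem x hx).mono hS (mobius_le_mobius_of_eventually_le hφ.contDiffAt (hv x hx) heq hle)

theorem subsol_of_forall_eigIn (hS : IsLowerSet Γᶜ) (hΩ : IsOpen Ω)
    (hv : ∀ x ∈ Ω, ContDiffAt ℝ 2 v x) (hmem : ∀ x ∈ Ω, EigIn (mobius v x) Γᶜ) :
    Subsol Γ Ω v := by
  intro x hx φ hφ heq hle
  rw [hΩ.nhdsWithin_eq hx] at hle
  exact (hmem x hx).anti hS
    (mobius_le_mobius_of_eventually_le (hv x hx) hφ.contDiffAt heq.symm hle)

end Touching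

section Radial

theorem exp_neg_two_mul_log {r : ℝ} (hr : 0 < r) : Real.exp (-2 * Real.log r) = (r ^ 2)⁻¹ := by
  rw [neg_mul, Real.exp_neg, two_mul, Real.exp_add, Real.exp_log hr, sq]

theorem differentiableAt_deriv_of_contDiffAt {g : ℝ → ℝ} {t : ℝ} (hg : ContDiffAt ℝ 2 g t) :
    DifferentiableAt ℝ (deriv g) t :=
  (hg.derivWithin (m := 1) (by norm_num)).differentiableAt (by norm_num)

section LogNorm

variable {E : Type*} [NormedAddCommGroup E] [InnerProductSpace ℝ E] {x : E}

theorem hasFDerivAt_log_norm (hx : x ≠ 0) :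
    HasFDerivAt (fun y : E => Real.log ‖y‖) ((‖x‖ ^ 2)⁻¹ • innerSL ℝ x) x := by
  have hlog : (fun y : E => Real.log ‖y‖) = fun y => 1 / 2 * Real.log (‖y‖ ^ 2) := by
    funext y
    rw [Real.log_pow]
    ring
  have hsq := (hasStrictFDerivAt_norm_sq x).hasFDerivAt.log (by positivity)
  rw [hlog]
  refine (hsq.const_mul (1 / 2 : ℝ)).congr_fderiv ?_
  ext y
  simp only [one_div, smul_apply, coe_innerSL_apply, nsmul_eq_mul, Nat.cast_ofNat, smul_eq_mul]
  ring

theorem contDiffAt_log_norm {k : WithTop ℕ∞} (hx : x ≠ 0) :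
    ContDiffAt ℝ k (fun y : E => Real.log ‖y‖) x :=
  (contDiffAt_norm ℝ hx).log (norm_ne_zero_iff.2 hx)

theorem hasFDerivAt_comp_log_norm (hx : x ≠ 0) {g : ℝ → ℝ} {d : ℝ}
    (hg : HasDerivAt g d (Real.log ‖x‖)) :
    HasFDerivAt (fun y : E => g (Real.log ‖y‖)) ((d / ‖x‖ ^ 2) • innerSL ℝ x) x := by
  rw [div_eq_mul_inv, mul_smul]
  exact hg.comp_hasFDerivAt x (hasFDerivAt_log_norm hx)

end LogNorm

variable {n : ℕ} {g u : ℝ → ℝ} {x : Euc n}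

theorem pgrad_comp_log_norm (hx : x ≠ 0) (hg : DifferentiableAt ℝ g (Real.log ‖x‖)) (i : Fin n) :
    pgrad (fun y => g (Real.log ‖y‖)) x i = deriv g (Real.log ‖x‖) / ‖x‖ ^ 2 * x i := by
  simp [pgrad, (hasFDerivAt_comp_log_norm hx hg.hasDerivAt).fderiv,
    EuclideanSpace.inner_single_right]

theorem phess_comp_log_norm (hx : x ≠ 0) (hg : ContDiffAt ℝ 2 g (Real.log ‖x‖)) (i j : Fin n) :
    phess (fun y => g (Real.log ‖y‖)) x i j =
      (deriv (deriv g) (Real.log ‖x‖) - 2 * deriv g (Real.log ‖x‖)) / ‖x‖ ^ 4 * (x i * x j) +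
        deriv g (Real.log ‖x‖) / ‖x‖ ^ 2 * (if i = j then 1 else 0) := by
  have hexp := exp_neg_two_mul_log (norm_pos_iff.2 hx)
  have hexp' := neg_mul (2 : ℝ) _ ▸ hexp
  set k : ℝ → ℝ := fun s => deriv g s * Real.exp (-2 * s) with hk
  have hpartial : (fun z => pgrad (fun y => g (Real.log ‖y‖)) z j) =ᶠ[𝓝 x]
      fun z => k (Real.log ‖z‖) * z j := by
    have hcont := (hasFDerivAt_log_norm hx).continuousAt
    filter_upwards [isOpen_ne.mem_nhds hx, hcont.eventually (hg.eventually (by simp))]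
      with z hz hgz
    simp only [pgrad_comp_log_norm hz (hgz.differentiableAt (by norm_num)), hk, div_eq_mul_inv,
      exp_neg_two_mul_log (norm_pos_iff.2 hz)]
  have hderiv : HasDerivAt k
      ((deriv (deriv g) (Real.log ‖x‖) - 2 * deriv g (Real.log ‖x‖)) * (‖x‖ ^ 2)⁻¹)
      (Real.log ‖x‖) := by
    have hg' : DifferentiableAt ℝ (deriv g) (Real.log ‖x‖) :=
      differentiableAt_deriv_of_contDiffAt hg
    have hmul := hg'.hasDerivAt.mul ((hasDerivAt_id (Real.log ‖x‖)).const_mul (-2)).exp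
    refine hmul.congr_deriv ?_
    simp only [id, hexp]
    ring
  have hproj : HasFDerivAt (fun z : Euc n => z j) (EuclideanSpace.proj j : Euc n →L[ℝ] ℝ) x :=
    (EuclideanSpace.proj j : Euc n →L[ℝ] ℝ).hasFDerivAt
  have hmul := (hasFDerivAt_comp_log_norm hx hderiv).mul hproj
  have hphess : phess (fun y => g (Real.log ‖y‖)) x i j = _ :=
    DFunLike.congr_fun (hpartial.fderiv_eq.trans hmul.fderiv) (EuclideanSpace.single i 1)
  rw [hphess]
  simp only [hk, neg_mul, hexp', add_apply, smul_apply, PiLp.proj_apply, PiLp.single_apply, eq_comm,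
    smul_eq_mul, mul_ite, mul_one, mul_zero, coe_innerSL_apply, EuclideanSpace.inner_single_right,
    Real.ringHom_apply, one_mul]
  field_simp
  ring

/-- The radial function `v(x) = u(t) - t` with `t = log |x|`; the profile `u` is the function `v`
read off on the cylinder, i.e. relative to the flat metric `|x|⁻² |dx|²`. -/
def radial (u : ℝ → ℝ) (x : Euc n) : ℝ := u (Real.log ‖x‖) - Real.log ‖x‖

/-- The eigenvalues of `A[v]` for `v = radial u` at `log |x| = τ`, up to the factor `e^{-2u}`. The
first one is in the radial direction. -/
def cylEig (n : ℕ) (u : ℝ → ℝ) (τ : ℝ) : Fin n → ℝ :=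
  headTail n (-deriv (deriv u) τ - (1 - deriv u τ ^ 2) / 2) ((1 - deriv u τ ^ 2) / 2)

theorem contDiffAt_radial {k : WithTop ℕ∞} (hx : x ≠ 0) (hu : ContDiffAt ℝ k u (Real.log ‖x‖)) :
    ContDiffAt ℝ k (radial u) x :=
  (hu.comp x (contDiffAt_log_norm hx)).sub (contDiffAt_log_norm hx)

theorem mobius_radial (hx : x ≠ 0) (hu : ContDiffAt ℝ 2 u (Real.log ‖x‖)) :
    mobius (radial u) x = Real.exp (-2 * u (Real.log ‖x‖)) •
      (((1 - deriv u (Real.log ‖x‖) ^ 2) / 2) • (1 : Matrix (Fin n) (Fin n) ℝ) +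
        (-(deriv (deriv u) (Real.log ‖x‖) + (1 - deriv u (Real.log ‖x‖) ^ 2)) / ‖x‖ ^ 2) •
          Matrix.vecMulVec x x) := by
  have hsub : ContDiffAt ℝ 2 (fun s => u s - s) (Real.log ‖x‖) := hu.sub contDiffAt_id
  have hderiv : deriv (fun s => u s - s) =ᶠ[𝓝 (Real.log ‖x‖)] fun s => deriv u s - 1 := by
    filter_upwards [hu.eventually (by simp)] with s hs
    rw [deriv_fun_sub (hs.differentiableAt (by norm_num)) differentiableAt_fun_id, deriv_id'']
  have hderiv₂ : deriv (deriv fun s => u s - s) (Real.log ‖x‖) =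
      deriv (deriv u) (Real.log ‖x‖) := by
    rw [hderiv.deriv_eq, deriv_sub_const]
  have hgrad (i : Fin n) : pgrad (radial u) x i = _ :=
    pgrad_comp_log_norm hx (hsub.differentiableAt (by norm_num)) i
  have hhess (i j : Fin n) : phess (radial u) x i j = _ := phess_comp_log_norm hx hsub i j
  simp only [hderiv₂, hderiv.eq_of_nhds] at hgrad hhess
  have hexp : Real.exp (-2 * radial u x) = Real.exp (-2 * u (Real.log ‖x‖)) * ‖x‖ ^ 2 := by
    rw [← Real.exp_log (by positivity : 0 < ‖x‖ ^ 2), ← Real.exp_add, Real.log_pow, radial]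
    ring_nf
  have hnorm : ∑ k, pgrad (radial u) x k ^ 2 =
      ((deriv u (Real.log ‖x‖) - 1) / ‖x‖ ^ 2) ^ 2 * ‖x‖ ^ 2 := by
    simp only [hgrad, mul_pow _ (x _)]
    rw [← Finset.mul_sum, ← EuclideanSpace.real_norm_sq_eq]
  ext i j
  simp only [mobius, hexp, hnorm, Matrix.smul_apply, Matrix.of_apply, Matrix.add_apply,
    Matrix.vecMulVec_apply, Matrix.one_apply, smul_eq_mul]
  simp only [hgrad, hhess]
  field_simp
  ring

theorem eigIn_mobius_radial_iff [NeZero n] {S : Set (Fin n → ℝ)} (hS : IsSymmetricCone S)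
    (hx : x ≠ 0) (hu : ContDiffAt ℝ 2 u (Real.log ‖x‖)) :
    EigIn (mobius (radial u) x) S ↔ cylEig n u (Real.log ‖x‖) ∈ S := by
  have hdot : (x : Fin n → ℝ) ⬝ᵥ x = ‖x‖ ^ 2 := by
    rw [EuclideanSpace.real_norm_sq_eq]
    simp [dotProduct, sq]
  have hcyl : cylEig n u (Real.log ‖x‖) = headTail n ((1 - deriv u (Real.log ‖x‖) ^ 2) / 2 +
      -(deriv (deriv u) (Real.log ‖x‖) + (1 - deriv u (Real.log ‖x‖) ^ 2)) / ‖x‖ ^ 2 *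
        (x : Fin n → ℝ) ⬝ᵥ x) ((1 - deriv u (Real.log ‖x‖) ^ 2) / 2) := by
    rw [hdot, div_mul_cancel₀ _ (by positivity), cylEig]
    congr 1
    ring
  rw [hcyl, ← eigIn_smul_one_add_smul_vecMulVec_iff hS, mobius_radial hx hu]
  refine eigIn_smul_iff hS (isHermitian_smul_one_add_smul_vecMulVec _ _ _) (Real.exp_pos _)

end Radial

section Comparison

variable {n : ℕ} {Γ : Set (Fin n → ℝ)} {K Ω : Set (Euc n)} {w ψ : Euc n → ℝ} {c : ℝ}

theorem Subsol.sub_le_of_eigIn (hw : Subsol Γ Ω w) (hΓ : IsSymmetricCone Γ) (hK : IsCompact K)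
    (hΩ : IsOpen Ω) (hΩK : Ω ⊆ K) (hcont : ContinuousOn (w - ψ) K)
    (hψ : ∀ x ∈ Ω, ContDiffAt ℝ 2 ψ x) (hmem : ∀ x ∈ Ω, EigIn (mobius ψ x) Γ)
    (hbd : ∀ x ∈ K \ Ω, w x - ψ x ≤ c) {x : Euc n} (hx : x ∈ K) : w x - ψ x ≤ c := by
  by_contra! hlt
  obtain ⟨y, hyΩ, hmin⟩ := hK.exists_isLocalMin_mem_open hΩK hcont.neg hx
    (fun z hz => neg_lt_neg ((hbd z hz).trans_lt hlt)) hΩ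
  refine (eigIn_compl_iff (isHermitian_mobius (hψ y hyΩ))).1 ?_ (hmem y hyΩ)
  rw [← eigIn_smul_iff hΓ.compl (isHermitian_mobius (hψ y hyΩ)) (Real.exp_pos _),
    ← mobius_add_const]
  refine hw.eigIn_of_contDiffAt (hΩ.mem_nhds hyΩ) ((hψ y hyΩ).add contDiffAt_const)
    (add_sub_cancel (ψ y) (w y)) ?_
  filter_upwards [hmin] with z hz
  simp only [Pi.neg_apply, Pi.sub_apply] at hz
  linarith

theorem Supersol.le_sub_of_not_eigIn (hw : Supersol Γ Ω w) (hΓ : IsSymmetricCone Γ)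
    (hK : IsCompact K) (hΩ : IsOpen Ω) (hΩK : Ω ⊆ K) (hcont : ContinuousOn (w - ψ) K)
    (hψ : ∀ x ∈ Ω, ContDiffAt ℝ 2 ψ x) (hmem : ∀ x ∈ Ω, ¬EigIn (mobius ψ x) (closure Γ))
    (hbd : ∀ x ∈ K \ Ω, c ≤ w x - ψ x) {x : Euc n} (hx : x ∈ K) : c ≤ w x - ψ x := by
  by_contra! hlt
  obtain ⟨y, hyΩ, hmin⟩ := hK.exists_isLocalMin_mem_open hΩK hcont hx
    (fun z hz => hlt.trans_le (hbd z hz)) hΩ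
  refine hmem y hyΩ ?_
  rw [← eigIn_smul_iff hΓ.closure (isHermitian_mobius (hψ y hyΩ)) (Real.exp_pos _),
    ← mobius_add_const]
  refine hw.eigIn_of_contDiffAt (hΩ.mem_nhds hyΩ) ((hψ y hyΩ).add contDiffAt_const)
    (add_sub_cancel (ψ y) (w y)) ?_
  filter_upwards [hmin] with z hz
  simp only [Pi.sub_apply] at hz
  linarith

end Comparison

section Annulus

variable {n : ℕ} {Γ : Set (Fin n → ℝ)} {a b c : ℝ} {u : ℝ → ℝ} {w : Euc n → ℝ}

/-- The annulus `{x : |x| ∈ I}`: open for `I = Ioo a b`, closed for `I = Icc a b`. -/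
def annulus (n : ℕ) (I : Set ℝ) : Set (Euc n) := {x | ‖x‖ ∈ I}

theorem isOpen_annulus {I : Set ℝ} (hI : IsOpen I) : IsOpen (annulus n I) :=
  hI.preimage continuous_norm

theorem annulus_mono {I J : Set ℝ} (h : I ⊆ J) : annulus n I ⊆ annulus n J :=
  fun _ hx => h hx

theorem isCompact_annulus_Icc (a b : ℝ) : IsCompact (annulus n (Icc a b)) := by
  refine (isCompact_closedBall (0 : Euc n) b).of_isClosed_subset
    (isClosed_Icc.preimage continuous_norm) fun x hx => ?_
  simpa using hx.2

theorem ne_zero_of_mem_annulus (ha : 0 < a) {x : Euc n} (hx : x ∈ annulus n (Icc a b)) : x ≠ 0 :=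
  norm_pos_iff.1 (ha.trans_le hx.1)

theorem log_norm_mem_Icc (ha : 0 < a) {x : Euc n} (hx : x ∈ annulus n (Icc a b)) :
    Real.log ‖x‖ ∈ Icc (Real.log a) (Real.log b) :=
  ⟨Real.log_le_log ha hx.1, Real.log_le_log (ha.trans_le hx.1) hx.2⟩

theorem norm_eq_or_norm_eq_of_mem_annulus {x : Euc n}
    (hx : x ∈ annulus n (Icc a b) \ annulus n (Ioo a b)) : ‖x‖ = a ∨ ‖x‖ = b := by
  obtain ⟨⟨h₁, h₂⟩, h⟩ := hx
  by_contra! hne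
  exact h ⟨h₁.lt_of_ne' hne.1, h₂.lt_of_ne hne.2⟩

theorem contDiffAt_radial_of_mem_annulus (ha : 0 < a)
    (hu : ∀ τ ∈ Icc (Real.log a) (Real.log b), ContDiffAt ℝ 2 u τ) {x : Euc n}
    (hx : x ∈ annulus n (Icc a b)) : ContDiffAt ℝ 2 (radial u) x :=
  contDiffAt_radial (ne_zero_of_mem_annulus ha hx) (hu _ (log_norm_mem_Icc ha hx))

theorem continuousOn_radial (ha : 0 < a)
    (hu : ∀ τ ∈ Icc (Real.log a) (Real.log b), ContDiffAt ℝ 2 u τ) :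
    ContinuousOn (radial u : Euc n → ℝ) (annulus n (Icc a b)) := fun _ hx =>
  (contDiffAt_radial_of_mem_annulus ha hu hx).continuousAt.continuousWithinAt

variable [NeZero n]

theorem eigIn_mobius_radial_iff_of_mem_annulus {S : Set (Fin n → ℝ)} (hS : IsSymmetricCone S)
    (ha : 0 < a) (hu : ∀ τ ∈ Icc (Real.log a) (Real.log b), ContDiffAt ℝ 2 u τ) {x : Euc n}
    (hx : x ∈ annulus n (Icc a b)) :
    EigIn (mobius (radial u) x) S ↔ cylEig n u (Real.log ‖x‖) ∈ S :=
  eigIn_mobius_radial_iff hS (ne_zero_of_mem_annulus ha hx) (hu _ (log_norm_mem_Icc ha hx))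

theorem Subsol.sub_radial_le (hw : Subsol Γ (annulus n (Ioo a b)) w) (hΓ : IsSymmetricCone Γ)
    (ha : 0 < a) (hcont : ContinuousOn w (annulus n (Icc a b)))
    (hu : ∀ τ ∈ Icc (Real.log a) (Real.log b), ContDiffAt ℝ 2 u τ)
    (hmem : ∀ τ ∈ Icc (Real.log a) (Real.log b), cylEig n u τ ∈ Γ)
    (hbd : ∀ x ∈ annulus n (Icc a b) \ annulus n (Ioo a b), w x - radial u x ≤ c) {x : Euc n}
    (hx : x ∈ annulus n (Icc a b)) : w x - radial u x ≤ c := by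
  have hsub : annulus n (Ioo a b) ⊆ annulus n (Icc a b) := annulus_mono Ioo_subset_Icc_self
  refine hw.sub_le_of_eigIn hΓ (isCompact_annulus_Icc a b) (isOpen_annulus isOpen_Ioo) hsub
    (hcont.sub (continuousOn_radial ha hu))
    (fun y hy => contDiffAt_radial_of_mem_annulus ha hu (hsub hy)) (fun y hy => ?_)
    hbd hx
  rw [eigIn_mobius_radial_iff_of_mem_annulus hΓ ha hu (hsub hy)]
  exact hmem _ (log_norm_mem_Icc ha (hsub hy))

theorem Supersol.le_sub_radial (hw : Supersol Γ (annulus n (Ioo a b)) w) (hΓ : IsSymmetricCone Γ)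
    (ha : 0 < a) (hcont : ContinuousOn w (annulus n (Icc a b)))
    (hu : ∀ τ ∈ Icc (Real.log a) (Real.log b), ContDiffAt ℝ 2 u τ)
    (hmem : ∀ τ ∈ Icc (Real.log a) (Real.log b), cylEig n u τ ∉ closure Γ)
    (hbd : ∀ x ∈ annulus n (Icc a b) \ annulus n (Ioo a b), c ≤ w x - radial u x) {x : Euc n}
    (hx : x ∈ annulus n (Icc a b)) : c ≤ w x - radial u x := by
  have hsub : annulus n (Ioo a b) ⊆ annulus n (Icc a b) := annulus_mono Ioo_subset_Icc_self
  refine hw.le_sub_of_not_eigIn hΓ (isCompact_annulus_Icc a b) (isOpen_annulus isOpen_Ioo) hsub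
    (hcont.sub (continuousOn_radial ha hu))
    (fun y hy => contDiffAt_radial_of_mem_annulus ha hu (hsub hy)) (fun y hy => ?_)
    hbd hx
  rw [eigIn_mobius_radial_iff_of_mem_annulus hΓ.closure ha hu (hsub hy)]
  exact hmem _ (log_norm_mem_Icc ha (hsub hy))

end Annulus

section Dirichlet

variable {n : ℕ} {Γ : Set (Fin n → ℝ)} {a b α β : ℝ} {u h : ℝ → ℝ} {v : Euc n → ℝ}

/-- `v` is a continuous viscosity solution of `λ(A[v]) ∈ ∂Γ` in the annulus `{a < |x| < b}` with
boundary values `α` on `{|x| = a}` and `β` on `{|x| = b}`. -/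
structure IsDirichletSolution (Γ : Set (Fin n → ℝ)) (a b α β : ℝ) (v : Euc n → ℝ) : Prop where
  continuousOn : ContinuousOn v (annulus n (Icc a b))
  supersol : Supersol Γ (annulus n (Ioo a b)) v
  subsol : Subsol Γ (annulus n (Ioo a b)) v
  eq_of_norm_eq_left : ∀ x, ‖x‖ = a → v x = α
  eq_of_norm_eq_right : ∀ x, ‖x‖ = b → v x = β

/-- The Dirichlet problem on the annulus has exactly one solution, where solutions are identified
if they agree on the closed annulus. -/
def UniquelySolvable (Γ : Set (Fin n → ℝ)) (a b α β : ℝ) : Prop :=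
  ∃ v, IsDirichletSolution Γ a b α β v ∧
    ∀ w, IsDirichletSolution Γ a b α β w → EqOn w v (annulus n (Icc a b))

theorem isDirichletSolution_radial [NeZero n] (hΓ : CondC Γ) (ha : 0 < a)
    (hu : ∀ τ ∈ Icc (Real.log a) (Real.log b), ContDiffAt ℝ 2 u τ)
    (hmem : ∀ τ ∈ Icc (Real.log a) (Real.log b), cylEig n u τ ∈ frontier Γ)
    (hua : u (Real.log a) = α + Real.log a) (hub : u (Real.log b) = β + Real.log b) :
    IsDirichletSolution Γ a b α β (radial u) := by
  have hsub : annulus n (Ioo a b) ⊆ annulus n (Icc a b) := annulus_mono Ioo_subset_Icc_self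
  have hsmooth (x : Euc n) (hx : x ∈ annulus n (Ioo a b)) : ContDiffAt ℝ 2 (radial u) x :=
    contDiffAt_radial_of_mem_annulus ha hu (hsub hx)
  have heig {S : Set (Fin n → ℝ)} (hS : IsSymmetricCone S) (hS' : frontier Γ ⊆ S) (x : Euc n)
      (hx : x ∈ annulus n (Ioo a b)) : EigIn (mobius (radial u) x) S :=
    (eigIn_mobius_radial_iff_of_mem_annulus hS ha hu (hsub hx)).2
      (hS' (hmem _ (log_norm_mem_Icc ha (hsub hx))))
  refine ⟨continuousOn_radial ha hu, ?_, ?_, ?_, ?_⟩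
  · exact supersol_of_forall_eigIn hΓ.isUpperSet.closure (isOpen_annulus isOpen_Ioo) hsmooth
      (heig hΓ.isSymmetricCone.closure frontier_subset_closure)
  · exact subsol_of_forall_eigIn hΓ.isUpperSet.compl (isOpen_annulus isOpen_Ioo) hsmooth
      (heig hΓ.isSymmetricCone.compl (disjoint_frontier_iff_isOpen.2 hΓ.isOpen).subset_compl_right)
  · rintro x rfl
    simp [radial, hua]
  · rintro x rfl
    simp [radial, hub]

theorem contDiffAt_sub_mul {τ : ℝ} (hu : ContDiffAt ℝ 2 u τ) (hh : ContDiffAt ℝ 2 h τ) (ε : ℝ) :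
    ContDiffAt ℝ 2 (fun s => u s - ε * h s) τ :=
  hu.sub (contDiffAt_const.mul hh)

theorem deriv_sub_const_mul {τ : ℝ} (hu : DifferentiableAt ℝ u τ) (hh : DifferentiableAt ℝ h τ)
    (ε : ℝ) : deriv (fun s => u s - ε * h s) τ = deriv u τ - ε * deriv h τ := by
  rw [deriv_fun_sub hu (hh.const_mul ε), deriv_const_mul ε hh]

theorem deriv_deriv_sub_const_mul {τ : ℝ} (hu : ContDiffAt ℝ 2 u τ) (hh : ContDiffAt ℝ 2 h τ)
    (ε : ℝ) : deriv (deriv fun s => u s - ε * h s) τ =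
      deriv (deriv u) τ - ε * deriv (deriv h) τ := by
  have hderiv : deriv (fun s => u s - ε * h s) =ᶠ[𝓝 τ] fun s => deriv u s - ε * deriv h s := by
    filter_upwards [hu.eventually (by simp), hh.eventually (by simp)] with s hus hhs
    exact deriv_sub_const_mul (hus.differentiableAt (by norm_num))
      (hhs.differentiableAt (by norm_num)) ε
  rw [hderiv.deriv_eq, deriv_sub_const_mul (differentiableAt_deriv_of_contDiffAt hu)
    (differentiableAt_deriv_of_contDiffAt hh)]

theorem tendsto_cylEig_sub_mul {τ : ℝ} (hu : ContDiffAt ℝ 2 u τ) (hh : ContDiffAt ℝ 2 h τ) :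
    Tendsto (fun ε => cylEig n (fun s => u s - ε * h s) τ) (𝓝 0) (𝓝 (cylEig n u τ)) := by
  simp only [cylEig, deriv_deriv_sub_const_mul hu hh, deriv_sub_const_mul
    (hu.differentiableAt two_ne_zero) (hh.differentiableAt two_ne_zero)]
  refine Continuous.tendsto' (by fun_prop) _ _ (by simp)

theorem cylEig_mem_frontier {τ : ℝ} (hu : ContDiffAt ℝ 2 u τ) (hh : ContDiffAt ℝ 2 h τ)
    (hin : ∀ᶠ ε in 𝓝[>] 0, cylEig n (fun s => u s - ε * h s) τ ∈ Γ)
    (hout : ∀ᶠ ε in 𝓝[<] 0, cylEig n (fun s => u s - ε * h s) τ ∉ closure Γ) :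
    cylEig n u τ ∈ frontier Γ := by
  have hlim := tendsto_cylEig_sub_mul (n := n) hu hh
  rw [frontier_eq_closure_inter_closure]
  exact ⟨mem_closure_of_tendsto (hlim.mono_left nhdsWithin_le_nhds) hin,
    mem_closure_of_tendsto (hlim.mono_left nhdsWithin_le_nhds)
      (hout.mono fun _ hε hmem => hε (subset_closure hmem))⟩

variable [NeZero n]

theorem Subsol.le_radial (hv : Subsol Γ (annulus n (Ioo a b)) v) (hΓ : IsSymmetricCone Γ)
    (ha : 0 < a) (hcont : ContinuousOn v (annulus n (Icc a b)))
    (hu : ∀ τ ∈ Icc (Real.log a) (Real.log b), ContDiffAt ℝ 2 u τ)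
    (hh : ∀ τ ∈ Icc (Real.log a) (Real.log b), ContDiffAt ℝ 2 h τ)
    (hin : ∀ᶠ ε in 𝓝[>] (0 : ℝ), ∀ τ ∈ Icc (Real.log a) (Real.log b),
      cylEig n (fun s => u s - ε * h s) τ ∈ Γ)
    (hbd : ∀ x ∈ annulus n (Icc a b) \ annulus n (Ioo a b), v x ≤ radial u x) {x : Euc n}
    (hx : x ∈ annulus n (Icc a b)) : v x ≤ radial u x := by
  obtain ⟨C, hC⟩ := isCompact_Icc.bddAbove_image fun τ hτ =>
    (hh τ hτ).continuousAt.continuousWithinAt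
  have hle (y : Euc n) (hy : y ∈ annulus n (Icc a b)) : h (Real.log ‖y‖) ≤ C :=
    hC (mem_image_of_mem h (log_norm_mem_Icc ha hy))
  have hlim : Tendsto (fun ε => radial u x - ε * h (Real.log ‖x‖) + ε * C) (𝓝[>] 0)
      (𝓝 (radial u x)) :=
    (Continuous.tendsto' (by fun_prop) _ _ (by simp)).mono_left nhdsWithin_le_nhds
  refine ge_of_tendsto hlim ?_
  filter_upwards [hin, self_mem_nhdsWithin] with ε hε hpos
  have hcomp := hv.sub_radial_le hΓ ha hcont (c := ε * C)
    (fun τ hτ => contDiffAt_sub_mul (hu τ hτ) (hh τ hτ) ε) hε (fun y hy => ?_) hx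
  · simp only [radial] at hcomp ⊢
    linarith
  · have h₁ := hbd y hy
    have h₂ := mul_le_mul_of_nonneg_left (hle y hy.1) (le_of_lt hpos)
    simp only [radial] at h₁ ⊢
    linarith

theorem Supersol.radial_le (hv : Supersol Γ (annulus n (Ioo a b)) v) (hΓ : IsSymmetricCone Γ)
    (ha : 0 < a) (hcont : ContinuousOn v (annulus n (Icc a b)))
    (hu : ∀ τ ∈ Icc (Real.log a) (Real.log b), ContDiffAt ℝ 2 u τ)
    (hh : ∀ τ ∈ Icc (Real.log a) (Real.log b), ContDiffAt ℝ 2 h τ)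
    (hout : ∀ᶠ ε in 𝓝[<] (0 : ℝ), ∀ τ ∈ Icc (Real.log a) (Real.log b),
      cylEig n (fun s => u s - ε * h s) τ ∉ closure Γ)
    (hbd : ∀ x ∈ annulus n (Icc a b) \ annulus n (Ioo a b), radial u x ≤ v x) {x : Euc n}
    (hx : x ∈ annulus n (Icc a b)) : radial u x ≤ v x := by
  obtain ⟨C, hC⟩ := isCompact_Icc.bddAbove_image fun τ hτ =>
    (hh τ hτ).continuousAt.continuousWithinAt
  have hle (y : Euc n) (hy : y ∈ annulus n (Icc a b)) : h (Real.log ‖y‖) ≤ C :=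
    hC (mem_image_of_mem h (log_norm_mem_Icc ha hy))
  have hlim : Tendsto (fun ε => radial u x - ε * h (Real.log ‖x‖) + ε * C) (𝓝[<] 0)
      (𝓝 (radial u x)) :=
    (Continuous.tendsto' (by fun_prop) _ _ (by simp)).mono_left nhdsWithin_le_nhds
  refine le_of_tendsto hlim ?_
  filter_upwards [hout, self_mem_nhdsWithin] with ε hε hneg
  have hcomp := hv.le_sub_radial hΓ ha hcont (c := ε * C)
    (fun τ hτ => contDiffAt_sub_mul (hu τ hτ) (hh τ hτ) ε) hε (fun y hy => ?_) hx
  · simp only [radial] at hcomp ⊢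
    linarith
  · have h₁ := hbd y hy
    have h₂ := mul_le_mul_of_nonpos_left (hle y hy.1) (le_of_lt hneg)
    simp only [radial] at h₁ ⊢
    linarith

theorem uniquelySolvable_of_perturbation (hΓ : CondC Γ) (ha : 0 < a)
    (hu : ∀ τ ∈ Icc (Real.log a) (Real.log b), ContDiffAt ℝ 2 u τ)
    (hh : ∀ τ ∈ Icc (Real.log a) (Real.log b), ContDiffAt ℝ 2 h τ)
    (hin : ∀ᶠ ε in 𝓝[>] (0 : ℝ), ∀ τ ∈ Icc (Real.log a) (Real.log b),
      cylEig n (fun s => u s - ε * h s) τ ∈ Γ)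
    (hout : ∀ᶠ ε in 𝓝[<] (0 : ℝ), ∀ τ ∈ Icc (Real.log a) (Real.log b),
      cylEig n (fun s => u s - ε * h s) τ ∉ closure Γ)
    (hua : u (Real.log a) = α + Real.log a) (hub : u (Real.log b) = β + Real.log b) :
    UniquelySolvable Γ a b α β := by
  have hsol : IsDirichletSolution Γ a b α β (radial u) :=
    isDirichletSolution_radial hΓ ha hu (fun τ hτ => cylEig_mem_frontier (hu τ hτ) (hh τ hτ)
      (hin.mono fun _ hε => hε τ hτ) (hout.mono fun _ hε => hε τ hτ)) hua hub
  refine ⟨radial u, hsol, fun w hw => ?_⟩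
  have hbd (x : Euc n) (hx : x ∈ annulus n (Icc a b) \ annulus n (Ioo a b)) :
      w x = radial u x := by
    obtain hxa | hxb := norm_eq_or_norm_eq_of_mem_annulus hx
    · rw [hw.eq_of_norm_eq_left x hxa, hsol.eq_of_norm_eq_left x hxa]
    · rw [hw.eq_of_norm_eq_right x hxb, hsol.eq_of_norm_eq_right x hxb]
  intro x hx
  refine le_antisymm ?_ ?_
  · exact hw.subsol.le_radial hΓ.isSymmetricCone ha hw.continuousOn hu hh hin
      (fun y hy => (hbd y hy).le) hx
  · exact hw.supersol.radial_le hΓ.isSymmetricCone ha hw.continuousOn hu hh hout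
      (fun y hy => (hbd y hy).ge) hx

end Dirichlet

section ScalarEquation

variable {n : ℕ} {Γ : Set (Fin n → ℝ)} {u : ℝ → ℝ} {k ς τ : ℝ}

theorem CondC.headTail_mem (hΓ : CondC Γ) {p₀ q₀ p q : ℝ} (h₀ : headTail n p₀ q₀ ∈ closure Γ)
    (hq : 0 < q / q₀) (hp : q / q₀ * p₀ < p) : headTail n p q ∈ Γ := by
  have hq₀ : q₀ ≠ 0 := (div_ne_zero_iff.1 hq.ne').2
  obtain ⟨r, hr, hrp, hrq⟩ : ∃ r, 0 < r ∧ r * p₀ < p ∧ r * q₀ < q := by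
    have hp' : ∀ᶠ r in 𝓝 (q / q₀), 0 < r ∧ r * p₀ < p :=
      (lt_mem_nhds hq).and (((continuous_mul_const p₀).tendsto _).eventually_lt_const hp)
    obtain hneg | hpos := hq₀.lt_or_gt
    · obtain ⟨r, ⟨hr, hrp⟩, hrq⟩ := ((hp'.filter_mono nhdsWithin_le_nhds).and
        (self_mem_nhdsWithin : Ioi (q / q₀) ∈ 𝓝[>] (q / q₀))).exists
      exact ⟨r, hr, hrp, (div_lt_iff_of_neg hneg).1 hrq⟩
    · obtain ⟨r, ⟨hr, hrp⟩, hrq⟩ := ((hp'.filter_mono nhdsWithin_le_nhds).and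
        (self_mem_nhdsWithin : Iio (q / q₀) ∈ 𝓝[<] (q / q₀))).exists
      exact ⟨r, hr, hrp, (lt_div_iff₀ hpos).1 hrq⟩
  refine hΓ.mem_of_forall_lt (hΓ.isSymmetricCone.closure.smul_mem _ h₀ r hr) fun i => ?_
  rw [smul_headTail]
  unfold headTail
  split_ifs
  exacts [hrp, hrq]

theorem CondC.headTail_notMem_closure (hΓ : CondC Γ) {p₀ q₀ p q : ℝ} (h₀ : headTail n p₀ q₀ ∉ Γ)
    (hq : 0 < q / q₀) (hp : p < q / q₀ * p₀) : headTail n p q ∉ closure Γ := by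
  intro hmem
  refine h₀ (hΓ.headTail_mem hmem ?_ ?_)
  · rwa [← inv_div, inv_pos]
  · rwa [← inv_div, inv_mul_lt_iff₀ hq]

theorem CondC.cylEig_mem (hΓ : CondC Γ) (hς : headTail n (-ς * (2 * k + 1)) ς ∈ closure Γ)
    (hpos : 0 < (1 - deriv u τ ^ 2) / ς)
    (hlt : deriv (deriv u) τ < k * (1 - deriv u τ ^ 2)) : cylEig n u τ ∈ Γ := by
  have hς₀ : ς ≠ 0 := (div_ne_zero_iff.1 hpos.ne').2
  refine hΓ.headTail_mem hς ?_ ?_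
  · rw [div_right_comm]
    exact half_pos hpos
  · field_simp
    linarith

theorem CondC.cylEig_notMem_closure (hΓ : CondC Γ) (hς : headTail n (-ς * (2 * k + 1)) ς ∉ Γ)
    (hpos : 0 < (1 - deriv u τ ^ 2) / ς)
    (hlt : k * (1 - deriv u τ ^ 2) < deriv (deriv u) τ) : cylEig n u τ ∉ closure Γ := by
  have hς₀ : ς ≠ 0 := (div_ne_zero_iff.1 hpos.ne').2
  refine hΓ.headTail_notMem_closure hς ?_ ?_
  · rw [div_right_comm]
    exact half_pos hpos
  · field_simp
    linarith

theorem deriv_exp_mul (K : ℝ) :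
    (deriv fun s => Real.exp (K * s)) = fun s => K * Real.exp (K * s) := by
  funext s
  simpa [mul_comm] using ((hasDerivAt_id s).const_mul K).exp.deriv

theorem deriv_deriv_exp_mul (K τ : ℝ) :
    deriv (deriv fun s => Real.exp (K * s)) τ = K ^ 2 * Real.exp (K * τ) := by
  rw [deriv_exp_mul, deriv_const_mul _ (by fun_prop), deriv_exp_mul, sq, mul_assoc]

theorem exists_pos_forall_lt_of_isCompact {X : Type*} [TopologicalSpace X] {S : Set X}
    (hS : IsCompact S) {f : X → ℝ} (hf : ContinuousOn f S) : ∃ M > 0, ∀ x ∈ S, f x < M := by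
  obtain ⟨M, hM⟩ := hS.bddAbove_image hf
  refine ⟨max M 0 + 1, by positivity, fun x hx => ?_⟩
  exact (hM (mem_image_of_mem f hx)).trans_lt ((le_max_left M 0).trans_lt (lt_add_one _))

theorem exists_perturbation {S : Set ℝ} (hS : IsCompact S) (hu : ∀ τ ∈ S, ContDiffAt ℝ 2 u τ)
    (hode : ∀ τ ∈ S, deriv (deriv u) τ = k * (1 - deriv u τ ^ 2))
    (hpos : ∀ τ ∈ S, 0 < (1 - deriv u τ ^ 2) / ς) :
    ∃ h : ℝ → ℝ, ContDiff ℝ 2 h ∧ ∀ᶠ ε in 𝓝 0, ∀ τ ∈ S,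
      0 < (1 - deriv (fun s => u s - ε * h s) τ ^ 2) / ς ∧ ∃ c > 0,
        deriv (deriv fun s => u s - ε * h s) τ =
          k * (1 - deriv (fun s => u s - ε * h s) τ ^ 2) - ε * c := by
  have hcont (τ : ℝ) (hτ : τ ∈ S) : ContinuousAt (deriv u) τ :=
    (differentiableAt_deriv_of_contDiffAt (hu τ hτ)).continuousAt
  obtain ⟨K, hK, hKu⟩ := exists_pos_forall_lt_of_isCompact hS
    (f := fun τ => -(2 * k * deriv u τ)) fun τ hτ =>
      (continuousAt_const.mul (hcont τ hτ)).neg.continuousWithinAt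
  have hsmooth : ContDiff ℝ 2 fun s => Real.exp (K * s) := by fun_prop
  have hsmall : ∀ᶠ ε in 𝓝 0, ∀ τ ∈ S,
      0 < (1 - (deriv u τ - ε * (K * Real.exp (K * τ))) ^ 2) / ς ∧
        0 < K + 2 * k * deriv u τ - k * (ε * (K * Real.exp (K * τ))) := by
    refine hS.eventually_forall_of_forall_eventually fun τ hτ => ?_
    have hcont' : ContinuousAt (fun z : ℝ × ℝ => deriv u z.2) (0, τ) :=
      ContinuousAt.comp (g := deriv u) (hcont τ hτ) continuousAt_snd
    have hexp : ContinuousAt (fun z : ℝ × ℝ => z.1 * (K * Real.exp (K * z.2))) (0, τ) := by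
      fun_prop
    have hfst : ContinuousAt (fun z : ℝ × ℝ =>
        (1 - (deriv u z.2 - z.1 * (K * Real.exp (K * z.2))) ^ 2) / ς) (0, τ) :=
      (continuousAt_const.sub ((hcont'.sub hexp).pow 2)).div_const ς
    have hsnd : ContinuousAt (fun z : ℝ × ℝ =>
        K + 2 * k * deriv u z.2 - k * (z.1 * (K * Real.exp (K * z.2)))) (0, τ) :=
      (continuousAt_const.add (continuousAt_const.mul hcont')).sub (continuousAt_const.mul hexp)
    exact (hfst.tendsto.eventually_const_lt (by simpa using hpos τ hτ)).and
      (hsnd.tendsto.eventually_const_lt (by simpa [neg_lt_iff_pos_add] using hKu τ hτ))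
  refine ⟨fun s => Real.exp (K * s), hsmooth, hsmall.mono fun ε hε τ hτ => ?_⟩
  rw [deriv_deriv_sub_const_mul (hu τ hτ) hsmooth.contDiffAt, deriv_sub_const_mul
    ((hu τ hτ).differentiableAt two_ne_zero) (hsmooth.differentiable two_ne_zero τ),
    deriv_deriv_exp_mul, deriv_exp_mul, hode τ hτ]
  refine ⟨(hε τ hτ).1, _, mul_pos (mul_pos hK (Real.exp_pos (K * τ))) (hε τ hτ).2, ?_⟩
  ring

end ScalarEquation

section Solvability

variable {n : ℕ} {Γ : Set (Fin n → ℝ)} {a b α β : ℝ} {u : ℝ → ℝ} {k ς σ : ℝ}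

theorem forall_headTail {P : ℝ → Prop} {p q : ℝ} (hp : P p) (hq : P q) (i : Fin n) :
    P (headTail n p q i) := by
  unfold headTail
  split_ifs
  exacts [hp, hq]

theorem exists_cylEig_affine_sub_eq (hσ : σ ^ 2 = 1) {S : Set ℝ} (hS : IsCompact S) (A t₀ : ℝ) :
    ∃ h : ℝ → ℝ, ContDiff ℝ 2 h ∧ ∀ᶠ ε in 𝓝 0, ∀ τ ∈ S, ∃ p > 0, ∃ q > 0,
      cylEig n (fun s => A + σ * (s - t₀) - ε * h s) τ = headTail n (ε * p) (ε * q) := by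
  have hsmall : ∀ᶠ ε in 𝓝 (0 : ℝ), ∀ τ ∈ S, |ε * Real.exp (2 * σ * τ)| < 1 := by
    refine hS.eventually_forall_of_forall_eventually fun τ _ => ?_
    have hcont : ContinuousAt (fun z : ℝ × ℝ => |z.1 * Real.exp (2 * σ * z.2)|) (0, τ) := by
      fun_prop
    exact hcont.tendsto.eventually_lt_const (by simp)
  have hexp : ContDiff ℝ 2 fun s => Real.exp (2 * σ * s) := by fun_prop
  have haffine : ContDiff ℝ 2 fun s => A + σ * (s - t₀) := by fun_prop
  have hderiv : (deriv fun s => A + σ * (s - t₀)) = fun _ => σ := by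
    funext s
    simp
  refine ⟨_, hexp, hsmall.mono fun ε hε τ hτ => ?_⟩
  obtain ⟨hlt, hgt⟩ := abs_lt.1 (hε τ hτ)
  have hpos := Real.exp_pos (2 * σ * τ)
  refine ⟨2 * Real.exp (2 * σ * τ) * (1 + ε * Real.exp (2 * σ * τ)), by nlinarith,
    2 * Real.exp (2 * σ * τ) * (1 - ε * Real.exp (2 * σ * τ)), by nlinarith, ?_⟩
  rw [cylEig, deriv_deriv_sub_const_mul haffine.contDiffAt hexp.contDiffAt,
    deriv_sub_const_mul (haffine.differentiable two_ne_zero τ)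
      (hexp.differentiable two_ne_zero τ), deriv_deriv_exp_mul, deriv_exp_mul, hderiv,
    deriv_const]
  congr 1
  · linear_combination
      (1 / 2 + 2 * ε * Real.exp (2 * σ * τ) + 2 * (ε * Real.exp (2 * σ * τ)) ^ 2) * hσ
  · linear_combination
      (-1 / 2 + 2 * ε * Real.exp (2 * σ * τ) - 2 * (ε * Real.exp (2 * σ * τ)) ^ 2) * hσ

variable [NeZero n]

theorem uniquelySolvable_of_deriv_deriv_eq (hΓ : CondC Γ) (ha : 0 < a)
    (hς : headTail n (-ς * (2 * k + 1)) ς ∈ frontier Γ)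
    (hu : ∀ τ ∈ Icc (Real.log a) (Real.log b), ContDiffAt ℝ 2 u τ)
    (hode : ∀ τ ∈ Icc (Real.log a) (Real.log b),
      deriv (deriv u) τ = k * (1 - deriv u τ ^ 2))
    (hpos : ∀ τ ∈ Icc (Real.log a) (Real.log b), 0 < (1 - deriv u τ ^ 2) / ς)
    (hua : u (Real.log a) = α + Real.log a) (hub : u (Real.log b) = β + Real.log b) :
    UniquelySolvable Γ a b α β := by
  obtain ⟨h, hh, hε⟩ := exists_perturbation isCompact_Icc hu hode hpos
  rw [hΓ.isOpen.frontier_eq] at hς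
  refine uniquelySolvable_of_perturbation hΓ ha hu
    (fun τ _ => hh.contDiffAt) ?_ ?_ hua hub
  · filter_upwards [hε.filter_mono nhdsWithin_le_nhds, self_mem_nhdsWithin] with ε hε hε₀ τ hτ
    obtain ⟨hpos', c, hc, heq⟩ := hε τ hτ
    exact hΓ.cylEig_mem hς.1 hpos' (heq ▸ sub_lt_self _ (mul_pos hε₀ hc))
  · filter_upwards [hε.filter_mono nhdsWithin_le_nhds, self_mem_nhdsWithin] with ε hε hε₀ τ hτ
    obtain ⟨hpos', c, hc, heq⟩ := hε τ hτ
    refine hΓ.cylEig_notMem_closure hς.2 hpos' ?_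
    linarith [mul_neg_of_neg_of_pos hε₀ hc]

theorem uniquelySolvable_of_abs_eq (hΓ : CondC Γ) (ha : 0 < a) (hσ : σ ^ 2 = 1)
    (hαβ : β - α + (Real.log b - Real.log a) = σ * (Real.log b - Real.log a)) :
    UniquelySolvable Γ a b α β := by
  obtain ⟨h, hh, hε⟩ := exists_cylEig_affine_sub_eq (n := n) hσ
    (isCompact_Icc (a := Real.log a) (b := Real.log b)) (α + Real.log a) (Real.log a)
  refine uniquelySolvable_of_perturbation hΓ ha
    (u := fun s => α + Real.log a + σ * (s - Real.log a)) (fun τ _ => by fun_prop)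
    (fun τ _ => hh.contDiffAt) ?_ ?_ (by simp) (by linarith)
  · filter_upwards [hε.filter_mono nhdsWithin_le_nhds, self_mem_nhdsWithin] with ε hε hε₀ τ hτ
    obtain ⟨p, hp, q, hq, heq⟩ := hε τ hτ
    rw [heq]
    exact hΓ.mem_of_forall_pos (forall_headTail (mul_pos hε₀ hp) (mul_pos hε₀ hq))
  · filter_upwards [hε.filter_mono nhdsWithin_le_nhds, self_mem_nhdsWithin] with ε hε hε₀ τ hτ
    obtain ⟨p, hp, q, hq, heq⟩ := hε τ hτ
    rw [heq]
    exact hΓ.notMem_closure_of_forall_neg (forall_headTail (P := (· < 0))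
      (mul_neg_of_neg_of_pos hε₀ hp) (mul_neg_of_neg_of_pos hε₀ hq))

end Solvability

section BoundaryValueProblem

variable {u w : ℝ → ℝ} {k ς t₁ t₂ τ : ℝ}

/- The substitution `w = exp (k u)` linearises `u'' = k (1 - u' ^ 2)` to `w'' = k ^ 2 w`. -/
theorem deriv_deriv_log_div (hw : ContDiffAt ℝ 2 w τ) (hwτ : w τ ≠ 0) (hk : k ≠ 0)
    (hlin : deriv (deriv w) τ = k ^ 2 * w τ) :
    deriv (deriv fun s => Real.log (w s) / k) τ =
      k * (1 - deriv (fun s => Real.log (w s) / k) τ ^ 2) := by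
  have hderiv : deriv (fun s => Real.log (w s) / k) =ᶠ[𝓝 τ] fun s => deriv w s / w s / k := by
    filter_upwards [hw.eventually (by simp), hw.continuousAt.eventually_ne hwτ] with s hs hs₀
    rw [deriv_div_const, deriv.log (hs.differentiableAt two_ne_zero) hs₀]
  rw [hderiv.deriv_eq, hderiv.eq_of_nhds, deriv_div_const, deriv_fun_div
    (differentiableAt_deriv_of_contDiffAt hw) (hw.differentiableAt two_ne_zero) hwτ, hlin]
  field_simp

theorem deriv_deriv_sinh_add_sinh (p q k t₁ t₂ τ : ℝ) :
    deriv (deriv fun s => p * Real.sinh (k * (t₂ - s)) + q * Real.sinh (k * (s - t₁))) τ =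
      k ^ 2 * (p * Real.sinh (k * (t₂ - τ)) + q * Real.sinh (k * (τ - t₁))) := by
  have hsub₁ (s : ℝ) : HasDerivAt (fun s => k * (t₂ - s)) (k * -1) s :=
    ((hasDerivAt_id s).const_sub t₂).const_mul k
  have hsub₂ (s : ℝ) : HasDerivAt (fun s => k * (s - t₁)) (k * 1) s :=
    ((hasDerivAt_id s).sub_const t₁).const_mul k
  have hderiv : (deriv fun s => p * Real.sinh (k * (t₂ - s)) + q * Real.sinh (k * (s - t₁))) =
      fun s => p * (Real.cosh (k * (t₂ - s)) * (k * -1)) +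
        q * (Real.cosh (k * (s - t₁)) * (k * 1)) :=
    funext fun s => (((hsub₁ s).sinh.const_mul p).fun_add ((hsub₂ s).sinh.const_mul q)).deriv
  rw [hderiv, ((((hsub₁ τ).cosh.mul_const _).const_mul p).fun_add
    (((hsub₂ τ).cosh.mul_const _).const_mul q)).deriv]
  ring

theorem exists_pos_deriv_deriv_eq_sq_mul (hk : 0 < k) (ht : t₁ < t₂) {p q : ℝ} (hp : 0 < p)
    (hq : 0 < q) :
    ∃ w : ℝ → ℝ, ContDiff ℝ 2 w ∧ (∀ τ, deriv (deriv w) τ = k ^ 2 * w τ) ∧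
      (∀ τ ∈ Icc t₁ t₂, 0 < w τ) ∧ w t₁ = p ∧ w t₂ = q := by
  have hsinh {t : ℝ} (h : 0 < t) : 0 < Real.sinh (k * t) := Real.sinh_pos_iff.2 (mul_pos hk h)
  have hT : 0 < Real.sinh (k * (t₂ - t₁)) := hsinh (sub_pos.2 ht)
  refine ⟨_, by fun_prop, deriv_deriv_sinh_add_sinh (p / Real.sinh (k * (t₂ - t₁)))
    (q / Real.sinh (k * (t₂ - t₁))) k t₁ t₂, fun τ hτ => ?_, ?_, ?_⟩
  · have h₂ : 0 ≤ Real.sinh (k * (t₂ - τ)) :=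
      Real.sinh_nonneg_iff.2 (mul_nonneg hk.le (sub_nonneg.2 hτ.2))
    obtain hτ₁ | rfl := hτ.1.lt_or_eq
    · exact add_pos_of_nonneg_of_pos (by positivity)
        (mul_pos (div_pos hq hT) (hsinh (sub_pos.2 hτ₁)))
    · rw [sub_self, mul_zero, Real.sinh_zero, mul_zero, add_zero]
      positivity
  · simp [hT.ne']
  · simp [hT.ne']

theorem exists_deriv_deriv_eq_mul_one_sub_sq (k : ℝ) (ht : t₁ < t₂) (A B : ℝ) :
    ∃ u : ℝ → ℝ, (∀ τ ∈ Icc t₁ t₂, ContDiffAt ℝ 2 u τ) ∧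
      (∀ τ ∈ Icc t₁ t₂, deriv (deriv u) τ = k * (1 - deriv u τ ^ 2)) ∧ u t₁ = A ∧ u t₂ = B := by
  obtain rfl | hk := eq_or_ne k 0
  · refine ⟨fun s => A + (B - A) / (t₂ - t₁) * (s - t₁), fun τ _ => by fun_prop, fun τ _ => ?_,
      by simp, ?_⟩
    · have hderiv : (deriv fun s => A + (B - A) / (t₂ - t₁) * (s - t₁)) =
          fun _ => (B - A) / (t₂ - t₁) := by
        funext s
        simp
      simp [hderiv]
    · simp [div_mul_cancel₀ _ (sub_pos.2 ht).ne']
  · obtain ⟨w, hw, hlin, hpos, hw₁, hw₂⟩ := exists_pos_deriv_deriv_eq_sq_mul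
      (abs_pos.2 hk) ht (Real.exp_pos (k * A)) (Real.exp_pos (k * B))
    refine ⟨fun s => Real.log (w s) / k, fun τ hτ => ?_, fun τ hτ => ?_, ?_, ?_⟩
    · exact (hw.contDiffAt.log (hpos τ hτ).ne').div_const k
    · exact deriv_deriv_log_div hw.contDiffAt (hpos τ hτ).ne' hk
        (by rw [hlin, sq_abs])
    · simp [hw₁, hk]
    · simp [hw₂, hk]

theorem one_sub_sq_mul_exp_eq (hu : ∀ τ ∈ Icc t₁ t₂, ContDiffAt ℝ 2 u τ)
    (hode : ∀ τ ∈ Icc t₁ t₂, deriv (deriv u) τ = k * (1 - deriv u τ ^ 2)) (hτ : τ ∈ Icc t₁ t₂) :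
    (1 - deriv u τ ^ 2) * Real.exp (2 * k * u τ) =
      (1 - deriv u t₁ ^ 2) * Real.exp (2 * k * u t₁) := by
  have hderiv (s : ℝ) (hs : s ∈ Icc t₁ t₂) :
      HasDerivAt (fun s => (1 - deriv u s ^ 2) * Real.exp (2 * k * u s)) 0 s := by
    have hu' := (differentiableAt_deriv_of_contDiffAt (hu s hs)).hasDerivAt
    have hu₀ := ((hu s hs).differentiableAt two_ne_zero).hasDerivAt
    refine (((hu'.fun_pow 2).const_sub 1).mul (hu₀.const_mul (2 * k)).exp).congr_deriv ?_
    rw [hode s hs]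
    push_cast
    ring
  exact constant_of_has_deriv_right_zero
    (fun s hs => (hderiv s hs).continuousAt.continuousWithinAt)
    (fun s hs => (hderiv s (Ico_subset_Icc_self hs)).hasDerivWithinAt) τ hτ

theorem one_sub_sq_div_pos (ht : t₁ < t₂) (hu : ∀ τ ∈ Icc t₁ t₂, ContDiffAt ℝ 2 u τ)
    (hode : ∀ τ ∈ Icc t₁ t₂, deriv (deriv u) τ = k * (1 - deriv u τ ^ 2))
    (hslope : 0 < (1 - ((u t₂ - u t₁) / (t₂ - t₁)) ^ 2) / ς) (hτ : τ ∈ Icc t₁ t₂) :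
    0 < (1 - deriv u τ ^ 2) / ς := by
  have hdiff (s : ℝ) (hs : s ∈ Icc t₁ t₂) : DifferentiableAt ℝ u s :=
    (hu s hs).differentiableAt two_ne_zero
  obtain ⟨c, hc, hcslope⟩ := exists_deriv_eq_slope u ht
    (fun s hs => (hdiff s hs).continuousAt.continuousWithinAt)
    (fun s hs => (hdiff s (Ioo_subset_Icc_self hs)).differentiableWithinAt)
  rw [← hcslope] at hslope
  have hconst : (1 - deriv u τ ^ 2) / ς * Real.exp (2 * k * u τ) =
      (1 - deriv u c ^ 2) / ς * Real.exp (2 * k * u c) := by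
    rw [div_mul_eq_mul_div, div_mul_eq_mul_div, one_sub_sq_mul_exp_eq hu hode hτ,
      one_sub_sq_mul_exp_eq hu hode (Ioo_subset_Icc_self hc)]
  exact pos_of_mul_pos_left (hconst ▸ mul_pos hslope (Real.exp_pos _)) (Real.exp_pos _).le

theorem uniquelySolvable_of_slope {n : ℕ} [NeZero n] {Γ : Set (Fin n → ℝ)}
    {a b α β m : ℝ} (hΓ : CondC Γ) (ha : 0 < a) (hab : a < b)
    (hς : headTail n (-ς * m) ς ∈ frontier Γ)
    (hslope : 0 <
      (1 - ((β - α + (Real.log b - Real.log a)) / (Real.log b - Real.log a)) ^ 2) / ς) :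
    UniquelySolvable Γ a b α β := by
  have hlog : Real.log a < Real.log b := Real.log_lt_log ha hab
  obtain ⟨u, hu, hode, hua, hub⟩ := exists_deriv_deriv_eq_mul_one_sub_sq ((m - 1) / 2) hlog
    (α + Real.log a) (β + Real.log b)
  refine uniquelySolvable_of_deriv_deriv_eq hΓ ha
    (by rwa [mul_div_cancel₀ _ two_ne_zero, sub_add_cancel]) hu hode
    (fun τ hτ => one_sub_sq_div_pos hlog hu hode ?_ hτ) hua hub
  rwa [hua, hub, add_sub_add_comm]

end BoundaryValueProblem

section Nonexistence

variable {n : ℕ} {Γ : Set (Fin n → ℝ)} {a b α β c σ t₀ : ℝ} {v w : Euc n → ℝ}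

theorem annulus_Icc_subset_closure_annulus_Ioo (ha : 0 < a) (hab : a < b) :
    annulus n (Icc a b) ⊆ closure (annulus n (Ioo a b)) := by
  intro x hx
  have hx₀ : 0 < ‖x‖ := ha.trans_le hx.1
  have hmaps : MapsTo (fun r : ℝ => (r / ‖x‖) • x) (Ioo a b) (annulus n (Ioo a b)) := by
    intro r hr
    have hnorm : ‖(r / ‖x‖) • x‖ = r := by
      rw [norm_smul, norm_div, norm_norm, div_mul_cancel₀ _ hx₀.ne',
        Real.norm_of_nonneg (ha.trans hr.1).le]
    rwa [annulus, mem_ofPred_eq, hnorm]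
  have hx' : ‖x‖ ∈ closure (Ioo a b) := by rwa [closure_Ioo hab.ne]
  simpa [hx₀.ne'] using map_mem_closure (by fun_prop) hx' hmaps

theorem one_lt_deriv_sq_of_barrier (hσ : σ ^ 2 = 1) {η K : ℝ} (hη : 0 < η) (hK : 0 < K) (τ : ℝ) :
    1 < deriv (fun s => c + σ * s - η * Real.exp (-K * (σ * (s - t₀)))) τ ^ 2 := by
  have hexp := (((((hasDerivAt_id' τ).sub_const t₀).const_mul σ).const_mul (-K)).exp).const_mul η
  have hderiv := (((hasDerivAt_id' τ).const_mul σ).const_add c).fun_sub hexp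
  rw [hderiv.deriv]
  simp only [mul_one]
  have hE : 0 < η * K * Real.exp (-K * (σ * (τ - t₀))) := by positivity
  calc (1 : ℝ) < (1 + η * K * Real.exp (-K * (σ * (τ - t₀)))) ^ 2 := by nlinarith
    _ = (σ - η * (Real.exp (-K * (σ * (τ - t₀))) * (-K * σ))) ^ 2 := by
      linear_combination -(1 + η * K * Real.exp (-K * (σ * (τ - t₀)))) ^ 2 * hσ

theorem Supersol.barrier_le [NeZero n] (hw : Supersol Γ (annulus n (Ioo a b)) w) (hΓ : CondC Γ)
    (hmu : ¬ muMinus Γ < ⊤) (ha : 0 < a) (hcont : ContinuousOn w (annulus n (Icc a b)))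
    (hσ : σ ^ 2 = 1) {η K : ℝ} (hη : 0 < η) (hK : 0 < K)
    (hbd : ∀ x ∈ annulus n (Icc a b) \ annulus n (Ioo a b),
      c + σ * Real.log ‖x‖ - η * Real.exp (-K * (σ * (Real.log ‖x‖ - t₀))) ≤ w x + Real.log ‖x‖)
    {x : Euc n} (hx : x ∈ annulus n (Icc a b)) :
    c + σ * Real.log ‖x‖ - η * Real.exp (-K * (σ * (Real.log ‖x‖ - t₀))) ≤
      w x + Real.log ‖x‖ := by
  have hle := hw.le_sub_radial (c := 0) hΓ.isSymmetricCone ha hcont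
    (u := fun s => c + σ * s - η * Real.exp (-K * (σ * (s - t₀)))) (fun τ _ => by fun_prop)
    (fun τ _ => hΓ.headTail_notMem_closure_of_neg hmu
      (by linarith [one_lt_deriv_sq_of_barrier (c := c) (t₀ := t₀) hσ hη hK τ]))
    (fun y hy => by unfold radial; linarith [hbd y hy]) hx
  unfold radial at hle
  linarith

/- The barriers `c + σ τ - η exp (-K σ (τ - t₀))` have slope `> 1` in absolute value, which is
incompatible with `closure Γ` when `μ_Γ⁻ = ∞`. As `K → ∞` they increase to `c + σ τ` away from
`t₀`, so the boundary condition at `t₀` is lost. -/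
theorem Supersol.add_mul_log_norm_le [NeZero n] (hw : Supersol Γ (annulus n (Ioo a b)) w)
    (hΓ : CondC Γ) (hmu : ¬ muMinus Γ < ⊤) (ha : 0 < a) (hab : a < b)
    (hcont : ContinuousOn w (annulus n (Icc a b))) (hσ : σ ^ 2 = 1)
    (hside : ∀ τ ∈ Ioo (Real.log a) (Real.log b), 0 < σ * (τ - t₀))
    (hbd : ∀ x ∈ annulus n (Icc a b) \ annulus n (Ioo a b), Real.log ‖x‖ ≠ t₀ →
      c + σ * Real.log ‖x‖ ≤ w x + Real.log ‖x‖) {x : Euc n} (hx : x ∈ annulus n (Icc a b)) :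
    c + σ * Real.log ‖x‖ ≤ w x + Real.log ‖x‖ := by
  have hlog : ContinuousOn (fun y : Euc n => Real.log ‖y‖) (annulus n (Icc a b)) :=
    continuous_norm.continuousOn.log fun y hy => (ha.trans_le hy.1).ne'
  have hleft : ContinuousOn (fun y : Euc n => c + σ * Real.log ‖y‖) (annulus n (Icc a b)) := by
    fun_prop
  have hright : ContinuousOn (fun y => w y + Real.log ‖y‖) (annulus n (Icc a b)) :=
    hcont.add hlog
  have hsub : annulus n (Ioo a b) ⊆ annulus n (Icc a b) := annulus_mono Ioo_subset_Icc_self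
  obtain ⟨η, hη, hηw⟩ :=
    exists_pos_forall_lt_of_isCompact (isCompact_annulus_Icc a b) (hleft.sub hright)
  have hinterior (y : Euc n) (hy : y ∈ annulus n (Ioo a b)) :
      c + σ * Real.log ‖y‖ ≤ w y + Real.log ‖y‖ := by
    have hpos : 0 < σ * (Real.log ‖y‖ - t₀) := hside _
      ⟨Real.log_lt_log ha hy.1, Real.log_lt_log (ha.trans hy.1) hy.2⟩
    have hexp : Tendsto (fun K : ℝ => Real.exp (-K * (σ * (Real.log ‖y‖ - t₀)))) atTop (𝓝 0) :=
      Real.tendsto_exp_atBot.comp (tendsto_neg_atTop_atBot.atBot_mul_const hpos)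
    have hlim := (hexp.const_mul η).const_sub (c + σ * Real.log ‖y‖)
    rw [mul_zero, sub_zero] at hlim
    refine le_of_tendsto hlim ?_
    filter_upwards [eventually_gt_atTop 0] with K hK
    refine hw.barrier_le hΓ hmu ha hcont hσ hη hK (fun z hz => ?_) (hsub hy)
    by_cases hz₀ : Real.log ‖z‖ = t₀
    · simpa [hz₀] using (sub_lt_comm.1 (hηw z hz.1)).le
    · exact (sub_le_self _ (by positivity)).trans (hbd z hz hz₀)
  exact ContinuousWithinAt.closure_le (annulus_Icc_subset_closure_annulus_Ioo ha hab hx)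
    ((hleft x hx).mono hsub) ((hright x hx).mono hsub) hinterior

theorem IsDirichletSolution.sub_mem_Icc [NeZero n] (hv : IsDirichletSolution Γ a b α β v)
    (hΓ : CondC Γ) (hmu : ¬ muMinus Γ < ⊤) (ha : 0 < a) (hab : a < b) :
    β - α ∈ Icc (-2 * (Real.log b - Real.log a)) 0 := by
  have hsphere (r : ℝ) (hr : r ∈ Icc a b) :
      ∃ x : Euc n, ‖x‖ = r ∧ x ∈ annulus n (Icc a b) := by
    obtain ⟨x, rfl⟩ : ∃ x : Euc n, ‖x‖ = r :=
      ⟨EuclideanSpace.single 0 r, by simp [(ha.trans_le hr.1).le]⟩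
    exact ⟨x, rfl, hr⟩
  constructor
  · obtain ⟨x, hxb, hx⟩ := hsphere b ⟨hab.le, le_rfl⟩
    have hle := hv.supersol.add_mul_log_norm_le (c := α + 2 * Real.log a) (σ := -1)
      (t₀ := Real.log b) hΓ hmu ha hab hv.continuousOn (by norm_num)
      (fun τ hτ => by linarith [hτ.2]) (fun y hy hyb => ?_) hx
    · rw [hxb, hv.eq_of_norm_eq_right x hxb] at hle
      linarith
    · have hya := (norm_eq_or_norm_eq_of_mem_annulus hy).resolve_right (mt (congrArg _) hyb)
      rw [hya, hv.eq_of_norm_eq_left y hya]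
      linarith
  · obtain ⟨x, hxa, hx⟩ := hsphere a ⟨le_rfl, hab.le⟩
    have hle := hv.supersol.add_mul_log_norm_le (c := β) (σ := 1)
      (t₀ := Real.log a) hΓ hmu ha hab hv.continuousOn (by norm_num)
      (fun τ hτ => by linarith [hτ.1]) (fun y hy hya => ?_) hx
    · rw [hxa, hv.eq_of_norm_eq_left x hxa] at hle
      linarith
    · have hyb := (norm_eq_or_norm_eq_of_mem_annulus hy).resolve_left (mt (congrArg _) hya)
      rw [hyb, hv.eq_of_norm_eq_right y hyb]
      linarith

end Nonexistence

section Existence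

variable {n : ℕ} [NeZero n] {Γ : Set (Fin n → ℝ)} {a b α β : ℝ}

theorem uniquelySolvable_of_mem_Icc (hΓ : CondC Γ) (hmu : muPlus Γ ≠ ⊤)
    (ha : 0 < a) (hab : a < b) (hαβ : β - α ∈ Icc (-2 * (Real.log b - Real.log a)) 0) :
    UniquelySolvable Γ a b α β := by
  have hT : 0 < Real.log b - Real.log a := sub_pos.2 (Real.log_lt_log ha hab)
  obtain hlow | hlow := hαβ.1.eq_or_lt
  · exact uniquelySolvable_of_abs_eq hΓ ha (σ := -1) (by norm_num) (by linarith)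
  obtain hhigh | hhigh := hαβ.2.eq_or_lt
  · exact uniquelySolvable_of_abs_eq hΓ ha (σ := 1) (by norm_num) (by linarith)
  obtain ⟨m, hm⟩ := hΓ.exists_headTail_one_mem_frontier hmu
  refine uniquelySolvable_of_slope hΓ ha hab (ς := 1) (m := m) (by simpa) ?_
  rw [div_one, sub_pos, div_pow, div_lt_one (by positivity)]
  exact sq_lt_sq' (by linarith) (by linarith)

theorem uniquelySolvable_of_notMem_Icc (hΓ : CondC Γ) (hmu : muMinus Γ < ⊤)
    (ha : 0 < a) (hab : a < b) (hαβ : β - α ∉ Icc (-2 * (Real.log b - Real.log a)) 0) :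
    UniquelySolvable Γ a b α β := by
  have hT : 0 < Real.log b - Real.log a := sub_pos.2 (Real.log_lt_log ha hab)
  have hsq : (Real.log b - Real.log a) ^ 2 < (β - α + (Real.log b - Real.log a)) ^ 2 := by
    refine sq_lt_sq.2 ((abs_of_pos hT).trans_lt (lt_of_not_ge fun hle => hαβ ?_))
    obtain ⟨hlow, hhigh⟩ := abs_le.1 hle
    constructor <;> linarith
  obtain ⟨m, hm⟩ := hΓ.exists_headTail_neg_one_mem_frontier hmu
  refine uniquelySolvable_of_slope hΓ ha hab (ς := -1) (m := m) (by simpa) ?_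
  rw [div_neg, div_one, neg_sub, sub_pos, div_pow]
  exact (one_lt_div (by positivity)).2 hsq

end Existence

/-- **Solvability of the Dirichlet problem on an annulus, `μ_Γ⁺ < ∞`** (Proposition 3.4):
the Dirichlet problem for `λ(A[v]) ∈ ∂Γ` on `{a < |x| < b}` with constant boundary values
`α, β` has a (unique) continuous viscosity solution iff
(a) `β - α ∈ [-2(log b - log a), 0]`, or
(b) `β - α ∉ [-2(log b - log a), 0]` and `μ_Γ⁻ < +∞`. -/
theorem dirichlet_annulus_muPlus_finite
    {n : ℕ} (hn : 2 ≤ n) (Γ : Set (Fin n → ℝ)) (hΓ : CondC Γ)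
    (hmu : muPlus Γ ≠ ⊤)
    (a b : ℝ) (ha : 0 < a) (hab : a < b) (α β : ℝ)
    (A Abar : Set (Euc n))
    (hA : A = {x : Euc n | a < ‖x‖ ∧ ‖x‖ < b})
    (hAbar : Abar = {x : Euc n | a ≤ ‖x‖ ∧ ‖x‖ ≤ b})
    (Sol : (Euc n → ℝ) → Prop)
    (hSol : ∀ v, Sol v ↔ (ContinuousOn v Abar ∧ Supersol Γ A v ∧ Subsol Γ A v ∧
      (∀ x : Euc n, ‖x‖ = a → v x = α) ∧ (∀ x : Euc n, ‖x‖ = b → v x = β))) :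
    (∃ v, Sol v ∧ ∀ w, Sol w → Set.EqOn w v Abar) ↔
      (β - α ∈ Set.Icc (-2 * (Real.log b - Real.log a)) 0 ∨
        (β - α ∉ Set.Icc (-2 * (Real.log b - Real.log a)) 0 ∧ muMinus Γ < ⊤)) := by
  have : NeZero n := ⟨by lia⟩
  subst hA hAbar
  have hSol' (v : Euc n → ℝ) : Sol v ↔ IsDirichletSolution Γ a b α β v :=
    (hSol v).trans ⟨fun ⟨hcont, hsuper, hsub, hleft, hright⟩ =>
      ⟨hcont, hsuper, hsub, hleft, hright⟩, fun ⟨hcont, hsuper, hsub, hleft, hright⟩ =>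
      ⟨hcont, hsuper, hsub, hleft, hright⟩⟩
  simp only [hSol']
  change UniquelySolvable Γ a b α β ↔ _
  by_cases hαβ : β - α ∈ Icc (-2 * (Real.log b - Real.log a)) 0
  · exact iff_of_true (uniquelySolvable_of_mem_Icc hΓ hmu ha hab hαβ) (.inl hαβ)
  · rw [or_iff_right hαβ, and_iff_right hαβ]
    refine ⟨fun ⟨v, hv, _⟩ => ?_, fun hmu' =>
      uniquelySolvable_of_notMem_Icc hΓ hmu' ha hab hαβ⟩
    by_contra hmu'
    exact hαβ (hv.sub_mem_Icc hΓ hmu' ha hab)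
end
end

section
/- Let n ≥ 2 and let Γ ⊂ ℝⁿ satisfy condition (C) with μ_Γ⁻ = +∞ (equivalently, (c,−1,…,−1) ∉ closure(Γ) for all c ∈ ℝ). Let 0 < a < b and suppose v is a continuous radially symmetric function (v(x) = v(|x|)) on the annulus {a < |x| < b} satisfying λ(A[v]) ∈ closure(Γ) there in the viscosity sense. Then r ↦ v(r) is non-increasing and r ↦ v(r) + 2·log r is non-decreasing on (a,b). -/
open Filter Topology MeasureTheory Metric Set
open scoped BigOperators ENNReal NNReal

noncomputable section

/-!
Write `v x = f (‖x‖ ^ 2)`. If a smooth `φ : ℝ → ℝ` touches `f` from below at `t = r ^ 2`, then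
`x ↦ φ (‖x‖ ^ 2)` is an admissible test function for `v` at the point `r e` of any coordinate axis.
There the Möbius Hessian is diagonal, with `n - 1` entries equal to a positive multiple of
`-(φ' + t φ' ^ 2)`. If this quantity were negative, rescaling the spectrum would put some
`(c, -1, …, -1)` into `closure Γ`; hence `-1 / t ≤ φ' t ≤ 0`. So, in the viscosity sense, `f' ≤ 0`
and `(f + log)' ≥ 0`, and one-sided viscosity bounds on the derivative of a lower semicontinuous
function of one variable imply monotonicity.
-/

section OneVariable

variable {k : WithTop ℕ∞} {s : Set ℝ} {f : ℝ → ℝ}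

lemma exists_contDiff_deriv_pos_lt_sub_forall_sub_lt (k : WithTop ℕ∞) {a x D δ : ℝ} (hax : a < x)
    (hδ : 0 < δ) :
    ∃ φ : ℝ → ℝ, ContDiff ℝ k φ ∧ (∀ u, 0 < deriv φ u) ∧ D < φ x - φ a ∧
      ∀ y, φ y - φ x < δ := by
  have hxa : 0 < x - a := sub_pos.2 hax
  set L := (|D| + 1) / (δ * (x - a)) with hL
  refine ⟨fun u => -δ * Real.exp (L * (x - u)), by fun_prop, fun u => ?_, ?_, fun y => ?_⟩
  · have hderiv : HasDerivAt (fun u => -δ * Real.exp (L * (x - u)))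
        (-δ * (Real.exp (L * (x - u)) * (L * (-1)))) u :=
      ((((hasDerivAt_id u).const_sub x).const_mul L).exp).const_mul (-δ)
    rw [hderiv.deriv]
    have : 0 < δ * (Real.exp (L * (x - u)) * L) := by positivity
    linarith
  · have hδL : δ * (L * (x - a)) = |D| + 1 := by rw [hL]; field_simp
    have hexp := mul_le_mul_of_nonneg_left (Real.add_one_le_exp (L * (x - a))) hδ.le
    simp only [sub_self, mul_zero, Real.exp_zero]
    linarith [le_abs_self D]
  · have : 0 < δ * Real.exp (L * (x - y)) := by positivity
    simp only [sub_self, mul_zero, Real.exp_zero]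
    linarith

lemma antitoneOn_of_forall_isLocalMin_sub (hs : IsOpen s) (hs' : s.OrdConnected)
    (hf : LowerSemicontinuousOn f s)
    (h : ∀ t ∈ s, ∀ φ : ℝ → ℝ, ContDiff ℝ k φ → IsLocalMin (fun u => f u - φ u) t →
      deriv φ t ≤ 0) :
    AntitoneOn f s := by
  intro x hx y hy hxy
  by_contra! hlt
  have hxy' : x < y := hxy.lt_of_ne fun e => hlt.ne (congrArg f e)
  obtain ⟨a, hax, has⟩ : ∃ a < x, a ∈ s :=
    ((eventually_mem_nhdsWithin (s := Iio x)).and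
      ((hs.eventually_mem hx).filter_mono nhdsWithin_le_nhds)).exists
  have hsub : Icc a y ⊆ s := hs'.out has hy
  -- A barrier steep on `[a, x]` and nearly flat on `[x, y]` makes `f - φ` smaller at `x` than at
  -- both endpoints, so its minimum over `[a, y]` is interior.
  obtain ⟨φ, hφ, hφ', hφa, hφy⟩ := exists_contDiff_deriv_pos_lt_sub_forall_sub_lt k
    (D := f x - f a) hax (sub_pos.2 hlt)
  have hlsc : LowerSemicontinuousOn (fun u => f u + -φ u) (Icc a y) :=
    (hf.mono hsub).add hφ.continuous.neg.continuousOn.lowerSemicontinuousOn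
  simp only [← sub_eq_add_neg] at hlsc
  obtain ⟨t, ht, hmin⟩ :=
    hlsc.exists_isMinOn (nonempty_Icc.2 (hax.trans hxy').le) isCompact_Icc
  have htx : f t - φ t ≤ f x - φ x := hmin ⟨hax.le, hxy⟩
  have hta : a < t := ht.1.lt_of_ne (by rintro rfl; linarith)
  have hty : t < y := ht.2.lt_of_ne (by rintro rfl; linarith [hφy t])
  exact (h t (hsub ht) φ hφ (hmin.isLocalMin (Icc_mem_nhds hta hty))).not_gt (hφ' t)

lemma monotoneOn_of_forall_isLocalMin_sub (hs : IsOpen s) (hs' : s.OrdConnected)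
    (hf : LowerSemicontinuousOn f s)
    (h : ∀ t ∈ s, ∀ φ : ℝ → ℝ, ContDiff ℝ k φ → IsLocalMin (fun u => f u - φ u) t →
      0 ≤ deriv φ t) :
    MonotoneOn f s := by
  have hanti : AntitoneOn (fun u => f (-u)) (Neg.neg ⁻¹' s) := by
    refine antitoneOn_of_forall_isLocalMin_sub (k := k) (hs.preimage continuous_neg)
      (hs'.preimage_anti fun _ _ => neg_le_neg)
      (hf.comp continuous_neg.continuousOn (mapsTo_preimage _ _)) fun t ht φ hφ hmin => ?_
    have hmin' : IsLocalMin (fun u => f u - φ (-u)) (-t) := by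
      rw [← neg_neg t] at hmin
      simpa [Function.comp_def] using
        hmin.comp_continuous (g := Neg.neg) (b := -t) continuous_neg.continuousAt
    simpa [deriv_comp_neg] using h (-t) ht (fun u => φ (-u)) (hφ.comp contDiff_neg) hmin'
  intro x hx y hy hxy
  simpa using hanti (a := -y) (by simpa) (b := -x) (by simpa) (neg_le_neg hxy)

lemma log_le_log_add_div {t u : ℝ} (ht : 0 < t) (hu : 0 < u) :
    Real.log u ≤ Real.log t + (u - t) / t := by
  have h := Real.log_le_sub_one_of_pos (div_pos hu ht)
  rw [Real.log_div hu.ne' ht.ne'] at h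
  rw [sub_div, div_self ht.ne']
  linarith

lemma monotoneOn_add_log_of_forall_isLocalMin_sub (hs : IsOpen s) (hs' : s.OrdConnected)
    (hpos : s ⊆ Ioi 0) (hk : k ≠ 0) (hf : LowerSemicontinuousOn f s)
    (h : ∀ t ∈ s, ∀ φ : ℝ → ℝ, ContDiff ℝ k φ → IsLocalMin (fun u => f u - φ u) t →
      -t⁻¹ ≤ deriv φ t) :
    MonotoneOn (fun u => f u + Real.log u) s := by
  have hlog : ContinuousOn Real.log s :=
    Real.continuousOn_log.mono fun u hu => (hpos hu).ne'
  refine monotoneOn_of_forall_isLocalMin_sub (k := k) hs hs' (hf.add hlog.lowerSemicontinuousOn)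
    fun t ht φ hφ hmin => ?_
  -- `log` lies below its tangent line, so it may be replaced by that line, smooth on all of `ℝ`.
  have hmin' : IsLocalMin (fun u => f u - (φ u - u * t⁻¹)) t := by
    filter_upwards [hmin, lt_mem_nhds (hpos ht)] with u hu hu0
    have := log_le_log_add_div (hpos ht) hu0
    rw [div_eq_mul_inv] at this
    linarith
  have hderiv : deriv (fun u => φ u - u * t⁻¹) t = deriv φ t - t⁻¹ := by
    rw [deriv_fun_sub (hφ.differentiable hk t) (by fun_prop), deriv_mul_const (by fun_prop)]
    simp
  linarith [hderiv ▸ h t ht _ (hφ.sub (contDiff_id.mul contDiff_const)) hmin']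

end OneVariable

section Spectrum

/-- `S ⊆ ℝⁿ` is a symmetric cone with vertex at the origin: the part of condition (C) that makes
membership of a spectrum in `S` independent of its ordering and of positive rescaling. -/
structure IsSymmetricCone_s10 {n : ℕ} (S : Set (Fin n → ℝ)) : Prop where
  comp_perm_mem : ∀ σ : Equiv.Perm (Fin n), ∀ lam ∈ S, lam ∘ σ ∈ S
  smul_mem : ∀ lam ∈ S, ∀ t : ℝ, 0 < t → t • lam ∈ S

lemma exists_perm_comp_eq_of_map_univ_eq {α β : Type*} [Fintype α] {f g : α → β}
    (h : Finset.univ.val.map f = Finset.univ.val.map g) : ∃ σ : Equiv.Perm α, f ∘ σ = g := by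
  classical
  have hcard (c : β) : Fintype.card {i // g i = c} = Fintype.card {i // f i = c} := by
    have hcount := congrArg (Multiset.count c) h
    simp only [Multiset.count_map, eq_comm (a := c)] at hcount
    simpa only [Fintype.card_subtype, Finset.card, Finset.filter_val] using hcount.symm
  exact ⟨Equiv.ofFiberEquiv fun c => Fintype.equivOfCardEq (hcard c),
    funext (Equiv.ofFiberEquiv_map _)⟩

variable {n : ℕ} {Γ S : Set (Fin n → ℝ)}

lemma CondC.isSymmetricCone_s10 (hΓ : CondC Γ) : IsSymmetricCone_s10 Γ :=
  ⟨hΓ.2.2.2.1, hΓ.2.2.2.2.1⟩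

lemma IsSymmetricCone_s10.closure (hS : IsSymmetricCone_s10 S) : IsSymmetricCone_s10 (closure S) where
  comp_perm_mem σ _ h :=
    map_mem_closure (f := fun lam : Fin n → ℝ => lam ∘ σ) (by fun_prop) h (hS.comp_perm_mem σ)
  smul_mem _ h t ht :=
    map_mem_closure (continuous_const_smul t) h fun lam hlam => hS.smul_mem lam hlam t ht

lemma EigIn.mem_of_diagonal {d : Fin n → ℝ} (hS : IsSymmetricCone_s10 S)
    (h : EigIn (Matrix.diagonal d) S) : d ∈ S := by
  obtain ⟨hM, hmem⟩ := h
  have hroots : Finset.univ.val.map hM.eigenvalues = Finset.univ.val.map d := by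
    have := hM.roots_charpoly_eq_eigenvalues
    rw [Matrix.charpoly_diagonal, Polynomial.roots_prod _ _ (Finset.prod_ne_zero_iff.2 fun i _ =>
      Polynomial.X_sub_C_ne_zero (d i))] at this
    simpa using this.symm
  obtain ⟨σ, hσ⟩ := exists_perm_comp_eq_of_map_univ_eq hroots
  exact hσ ▸ hS.comp_perm_mem σ _ hmem

lemma IsSymmetricCone_s10.nonneg_of_ite_mem (hS : IsSymmetricCone_s10 S) {i₀ : Fin n}
    (hmu : ∀ c : ℝ, (fun i => if i = i₀ then c else -1) ∉ S) {p q : ℝ}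
    (h : (fun i => if i = i₀ then p else q) ∈ S) : 0 ≤ q := by
  by_contra! hq
  refine hmu ((-q)⁻¹ * p) ?_
  convert hS.smul_mem _ h (-q)⁻¹ (inv_pos.2 (neg_pos.2 hq)) using 1
  ext i
  simp [inv_neg, hq.ne, mul_ite]

end Spectrum

section MobiusRadial

variable {n : ℕ} {g : ℝ → ℝ}

lemma pgrad_radial {x : Euc n} (hg : DifferentiableAt ℝ g (‖x‖ ^ 2)) (i : Fin n) :
    pgrad (fun y => g (‖y‖ ^ 2)) x i = 2 * deriv g (‖x‖ ^ 2) * x i := by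
  have h : HasFDerivAt (fun y : Euc n => g (‖y‖ ^ 2)) _ x :=
    hg.hasDerivAt.comp_hasFDerivAt x (hasStrictFDerivAt_norm_sq x).hasFDerivAt
  rw [pgrad, h.fderiv]
  simp [EuclideanSpace.inner_single_right]
  ring

lemma phess_radial (hg : ContDiff ℝ 2 g) (x : Euc n) (i j : Fin n) :
    phess (fun y => g (‖y‖ ^ 2)) x i j =
      2 * deriv g (‖x‖ ^ 2) * (if i = j then 1 else 0) +
        4 * deriv (deriv g) (‖x‖ ^ 2) * (x i * x j) := by
  have hgrad : (fun y : Euc n => fderiv ℝ (fun y => g (‖y‖ ^ 2)) y (EuclideanSpace.single j 1)) =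
      fun y => 2 * deriv g (‖y‖ ^ 2) * y j :=
    funext fun y => pgrad_radial (hg.differentiable two_ne_zero _) j
  have hg' : Differentiable ℝ (deriv g) :=
    ((contDiff_succ_iff_deriv (n := 1)).1 hg).2.2.differentiable one_ne_zero
  have hcoord : HasFDerivAt (fun y : Euc n => y j)
      (EuclideanSpace.proj j : Euc n →L[ℝ] ℝ) x :=
    (EuclideanSpace.proj j : Euc n →L[ℝ] ℝ).hasFDerivAt
  have h : HasFDerivAt (fun y : Euc n => 2 * deriv g (‖y‖ ^ 2) * y j) _ x :=
    (((hg' _).hasDerivAt.comp_hasFDerivAt x (hasStrictFDerivAt_norm_sq x).hasFDerivAt).const_mul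
      2).mul hcoord
  rw [phess, hgrad, h.fderiv]
  simp [EuclideanSpace.inner_single_right, eq_comm (a := j)]
  ring

lemma mobius_radial_s10 (hg : ContDiff ℝ 2 g) (x : Euc n) :
    mobius (fun y => g (‖y‖ ^ 2)) x = Real.exp (-2 * g (‖x‖ ^ 2)) •
      ((-2 * (deriv g (‖x‖ ^ 2) + ‖x‖ ^ 2 * deriv g (‖x‖ ^ 2) ^ 2)) • (1 : Matrix _ _ ℝ) +
        (4 * (deriv g (‖x‖ ^ 2) ^ 2 - deriv (deriv g) (‖x‖ ^ 2))) • Matrix.vecMulVec x x) := by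
  have hgrad (i : Fin n) : pgrad (fun y => g (‖y‖ ^ 2)) x i = 2 * deriv g (‖x‖ ^ 2) * x i :=
    pgrad_radial (hg.differentiable two_ne_zero _) i
  have hsum : ∑ i, (2 * deriv g (‖x‖ ^ 2) * x i) ^ 2 = 4 * deriv g (‖x‖ ^ 2) ^ 2 * ‖x‖ ^ 2 := by
    simp only [mul_pow, ← Finset.mul_sum, ← EuclideanSpace.real_norm_sq_eq]
    ring
  ext i j
  simp only [mobius, hgrad, hsum, phess_radial hg, Matrix.smul_apply, Matrix.of_apply,
    Matrix.add_apply, Matrix.one_apply, Matrix.vecMulVec_apply, smul_eq_mul]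
  ring

lemma mobius_radial_single (hg : ContDiff ℝ 2 g) (i₀ : Fin n) (r : ℝ) :
    ∃ p, mobius (fun y : Euc n => g (‖y‖ ^ 2)) (EuclideanSpace.single i₀ r) =
      Matrix.diagonal fun i => if i = i₀ then p else
        Real.exp (-2 * g (r ^ 2)) * (-2 * (deriv g (r ^ 2) + r ^ 2 * deriv g (r ^ 2) ^ 2)) := by
  have hnorm : ‖(EuclideanSpace.single i₀ r : Euc n)‖ ^ 2 = r ^ 2 := by simp
  refine ⟨Real.exp (-2 * g (r ^ 2)) * (-2 * (deriv g (r ^ 2) + r ^ 2 * deriv g (r ^ 2) ^ 2) +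
    4 * (deriv g (r ^ 2) ^ 2 - deriv (deriv g) (r ^ 2)) * r ^ 2), ?_⟩
  rw [mobius_radial_s10 hg, hnorm]
  ext i j
  by_cases hij : i = j
  · subst hij
    by_cases hi : i = i₀ <;> simp [hi, Matrix.vecMulVec_apply, sq]
  · by_cases hi : i = i₀
    · simp [hij, Matrix.vecMulVec_apply, show j ≠ i₀ from fun hj => hij (hi.trans hj.symm)]
    · simp [hij, hi, Matrix.vecMulVec_apply]

lemma deriv_add_mul_sq_nonpos_of_eigIn_mobius {S : Set (Fin n → ℝ)} {i₀ : Fin n}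
    (hS : IsSymmetricCone_s10 S) (hmu : ∀ c : ℝ, (fun i => if i = i₀ then c else -1) ∉ S)
    (hg : ContDiff ℝ 2 g) {r : ℝ}
    (h : EigIn (mobius (fun y : Euc n => g (‖y‖ ^ 2)) (EuclideanSpace.single i₀ r)) S) :
    deriv g (r ^ 2) + r ^ 2 * deriv g (r ^ 2) ^ 2 ≤ 0 := by
  obtain ⟨p, hp⟩ := mobius_radial_single hg i₀ r
  have hnonneg := hS.nonneg_of_ite_mem hmu (EigIn.mem_of_diagonal hS (hp ▸ h))
  linarith [(mul_nonneg_iff_of_pos_left (Real.exp_pos _)).1 hnonneg]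

end MobiusRadial

section RadialSupersolution

lemma exists_lowerSemicontinuousOn_radial_profile {E β : Type*} [NormedAddCommGroup E]
    [NormedSpace ℝ E] [Nontrivial E] [Preorder β] {a b : ℝ} (ha : 0 ≤ a) (hb : 0 ≤ b) {v : E → β}
    (hv : LowerSemicontinuousOn v {x | a < ‖x‖ ∧ ‖x‖ < b})
    (hrad : ∀ x ∈ {x | a < ‖x‖ ∧ ‖x‖ < b}, ∀ y ∈ {x | a < ‖x‖ ∧ ‖x‖ < b}, ‖x‖ = ‖y‖ → v x = v y) :
    ∃ f : ℝ → β, LowerSemicontinuousOn f (Ioo (a ^ 2) (b ^ 2)) ∧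
      ∀ x ∈ {x | a < ‖x‖ ∧ ‖x‖ < b}, v x = f (‖x‖ ^ 2) := by
  obtain ⟨e, he⟩ := exists_norm_eq E zero_le_one
  have hnorm (t : ℝ) : ‖√t • e‖ = √t := by
    rw [norm_smul, he, mul_one, Real.norm_of_nonneg (Real.sqrt_nonneg t)]
  refine ⟨fun t => v (√t • e), hv.comp (by fun_prop) fun t ht => ?_, fun x hx => ?_⟩
  · rw [mem_ofPred_eq, hnorm, Real.lt_sqrt ha, Real.sqrt_lt ((sq_nonneg a).trans ht.1.le) hb]
    exact ht
  · have hxe : ‖x‖ = ‖√(‖x‖ ^ 2) • e‖ := by rw [hnorm, Real.sqrt_sq (norm_nonneg x)]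
    exact hrad x hx _ (by simpa only [mem_ofPred_eq, ← hxe] using hx) hxe

variable {n : ℕ} {Γ : Set (Fin n → ℝ)} {i₀ : Fin n}

lemma Supersol.deriv_add_mul_sq_nonpos {Ω : Set (Euc n)} {v : Euc n → ℝ} {f φ : ℝ → ℝ} {r : ℝ}
    (hΓ : IsSymmetricCone_s10 Γ)
    (hmu : ∀ c : ℝ, (fun i => if i = i₀ then c else -1) ∉ closure Γ)
    (hsup : Supersol Γ Ω v) (hvf : ∀ x ∈ Ω, v x = f (‖x‖ ^ 2))
    (hr : EuclideanSpace.single i₀ r ∈ Ω) (hφ : ContDiff ℝ 2 φ)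
    (hmin : IsLocalMin (fun u => f u - φ u) (r ^ 2)) :
    deriv φ (r ^ 2) + r ^ 2 * deriv φ (r ^ 2) ^ 2 ≤ 0 := by
  set x₀ : Euc n := EuclideanSpace.single i₀ r with hx₀
  have hnorm : ‖x₀‖ ^ 2 = r ^ 2 := by simp [hx₀]
  have hg : ContDiff ℝ 2 fun u => φ u + (f (r ^ 2) - φ (r ^ 2)) := hφ.add contDiff_const
  have htouch : ∀ᶠ x in 𝓝[Ω] x₀, φ (‖x‖ ^ 2) + (f (r ^ 2) - φ (r ^ 2)) ≤ v x := by
    have htend : Tendsto (fun x : Euc n => ‖x‖ ^ 2) (𝓝 x₀) (𝓝 (r ^ 2)) :=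
      hnorm ▸ (continuous_norm.pow 2).tendsto x₀
    filter_upwards [nhdsWithin_le_nhds (htend.eventually hmin), self_mem_nhdsWithin] with x hx hxΩ
    rw [hvf x hxΩ]
    linarith
  have heig := hsup x₀ hr _ (hg.comp (contDiff_norm_sq ℝ)) (by simp [hvf x₀ hr, hnorm]) htouch
  simpa only [deriv_add_const] using
    deriv_add_mul_sq_nonpos_of_eigIn_mobius hΓ.closure hmu hg heig

lemma nonpos_and_neg_inv_le_of_add_mul_sq_nonpos {t d : ℝ} (ht : 0 < t)
    (h : d + t * d ^ 2 ≤ 0) : d ≤ 0 ∧ -t⁻¹ ≤ d := by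
  have hd : d ≤ 0 := by linarith [mul_nonneg ht.le (sq_nonneg d)]
  refine ⟨hd, ?_⟩
  rw [neg_le, ← one_div, le_div_iff₀ ht]
  nlinarith

lemma Supersol.antitoneOn_and_monotoneOn_add_log {a b : ℝ} {v : Euc n → ℝ} {f : ℝ → ℝ}
    (hΓ : IsSymmetricCone_s10 Γ)
    (hmu : ∀ c : ℝ, (fun i => if i = i₀ then c else -1) ∉ closure Γ) (ha : 0 ≤ a) (hb : 0 ≤ b)
    (hsup : Supersol Γ {x | a < ‖x‖ ∧ ‖x‖ < b} v)
    (hf : LowerSemicontinuousOn f (Ioo (a ^ 2) (b ^ 2)))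
    (hvf : ∀ x ∈ {x | a < ‖x‖ ∧ ‖x‖ < b}, v x = f (‖x‖ ^ 2)) :
    AntitoneOn f (Ioo (a ^ 2) (b ^ 2)) ∧
      MonotoneOn (fun t => f t + Real.log t) (Ioo (a ^ 2) (b ^ 2)) := by
  have hpos : Ioo (a ^ 2) (b ^ 2) ⊆ Ioi 0 := fun t ht => (sq_nonneg a).trans_lt ht.1
  have hderiv : ∀ t ∈ Ioo (a ^ 2) (b ^ 2), ∀ φ : ℝ → ℝ, ContDiff ℝ 2 φ →
      IsLocalMin (fun u => f u - φ u) t → deriv φ t ≤ 0 ∧ -t⁻¹ ≤ deriv φ t := by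
    intro t ht φ hφ hmin
    have ht0 : 0 < t := hpos ht
    have hmem : (EuclideanSpace.single i₀ √t : Euc n) ∈ {x : Euc n | a < ‖x‖ ∧ ‖x‖ < b} := by
      simpa [abs_of_nonneg, Real.lt_sqrt ha, Real.sqrt_lt ht0.le hb] using ht
    have := hsup.deriv_add_mul_sq_nonpos hΓ hmu hvf hmem hφ
    rw [Real.sq_sqrt ht0.le] at this
    exact nonpos_and_neg_inv_le_of_add_mul_sq_nonpos ht0 (this hmin)
  exact ⟨antitoneOn_of_forall_isLocalMin_sub isOpen_Ioo ordConnected_Ioo hf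
      fun t ht φ hφ hmin => (hderiv t ht φ hφ hmin).1,
    monotoneOn_add_log_of_forall_isLocalMin_sub isOpen_Ioo ordConnected_Ioo hpos two_ne_zero hf
      fun t ht φ hφ hmin => (hderiv t ht φ hφ hmin).2⟩

end RadialSupersolution

theorem radial_supersolution_monotone_general
    {n : ℕ} {Γ : Set (Fin n → ℝ)} (hΓ : IsSymmetricCone_s10 Γ)
    (hmu : ∀ c : ℝ, (fun i : Fin n => if i.val = 0 then c else -1) ∉ closure Γ)
    {a b : ℝ} (ha : 0 ≤ a) {A : Set (Euc n)} (hA : A = {x : Euc n | a < ‖x‖ ∧ ‖x‖ < b})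
    {v : Euc n → ℝ} (hlsc : LowerSemicontinuousOn v A)
    (hrad : ∀ x ∈ A, ∀ y ∈ A, ‖x‖ = ‖y‖ → v x = v y) (hsup : Supersol Γ A v)
    (x y : Euc n) (hax : a < ‖x‖) (hxy : ‖x‖ ≤ ‖y‖) (hyb : ‖y‖ < b) :
    v y ≤ v x ∧ v x + 2 * Real.log ‖x‖ ≤ v y + 2 * Real.log ‖y‖ := by
  subst hA
  have : Nontrivial (Euc n) := ⟨x, 0, norm_pos_iff.1 (ha.trans_lt hax)⟩
  have : NeZero n := ⟨by rintro rfl; exact not_subsingleton (Euc 0) inferInstance⟩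
  have hb : 0 ≤ b := (norm_nonneg y).trans hyb.le
  have hmem {z : Euc n} (hza : a < ‖z‖) (hzb : ‖z‖ < b) : ‖z‖ ^ 2 ∈ Ioo (a ^ 2) (b ^ 2) :=
    ⟨by gcongr, by gcongr⟩
  have hx := hmem hax (hxy.trans_lt hyb)
  have hy := hmem (hax.trans_le hxy) hyb
  have hxy2 : ‖x‖ ^ 2 ≤ ‖y‖ ^ 2 := by gcongr
  obtain ⟨f, hf, hvf⟩ := exists_lowerSemicontinuousOn_radial_profile ha hb hlsc hrad
  obtain ⟨hanti, hmono⟩ := hsup.antitoneOn_and_monotoneOn_add_log (i₀ := 0) hΓ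
    (by simpa only [Fin.val_eq_zero_iff] using hmu) ha hb hf hvf
  rw [hvf x ⟨hax, hxy.trans_lt hyb⟩, hvf y ⟨hax.trans_le hxy, hyb⟩]
  exact ⟨hanti hx hy hxy2, by simpa only [Real.log_pow, Nat.cast_ofNat] using hmono hx hy hxy2⟩

/-- **Monotonicity of radial supersolutions when `μ_Γ⁻ = ∞`** (Lemma 3.8): if `Γ` satisfies
condition (C) and `(c,-1,…,-1) ∉ closure Γ` for all `c`, then every continuous radially
symmetric viscosity supersolution `v` of `λ(A[v]) ∈ ∂Γ` on the annulus `{a < |x| < b}`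
is non-increasing in `r`, and `v + 2 log r` is non-decreasing in `r`. -/
theorem radial_supersolution_monotone
    {n : ℕ} (hn : 2 ≤ n) (Γ : Set (Fin n → ℝ)) (hΓ : CondC Γ)
    (hmu : ∀ c : ℝ, (fun i : Fin n => if i.val = 0 then c else -1) ∉ closure Γ)
    (a b : ℝ) (ha : 0 < a) (hab : a < b)
    (A : Set (Euc n)) (hA : A = {x : Euc n | a < ‖x‖ ∧ ‖x‖ < b})
    (v : Euc n → ℝ) (hcont : ContinuousOn v A)
    (hrad : ∀ x y : Euc n, ‖x‖ = ‖y‖ → v x = v y)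
    (hsup : Supersol Γ A v) :
    ∀ x y : Euc n, a < ‖x‖ → ‖x‖ ≤ ‖y‖ → ‖y‖ < b →
      v y ≤ v x ∧ v x + 2 * Real.log ‖x‖ ≤ v y + 2 * Real.log ‖y‖ :=
  radial_supersolution_monotone_general hΓ.isSymmetricCone_s10 hmu ha.le hA
    hcont.lowerSemicontinuousOn (fun x _ y _ => hrad x y) hsup
end
end

section
/- Let n ≥ 2, let Γ ⊂ ℝⁿ satisfy condition (C) with λ* = (1,−1,…,−1) ∉ closure(Γ), and let B be the open unit ball of ℝⁿ. Suppose v satisfies λ(A[v]) ∈ closure(Γ) in B∖{0} in the viscosity sense. Then liminf_{x→0} v(x) > −∞, and if one sets v(0) := liminf_{x→0} v(x) (possibly +∞), then v is lower semi-continuous on B and is lowerconical at 0. -/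
open Filter Topology MeasureTheory Metric Set
open scoped BigOperators ENNReal NNReal Classical

noncomputable section

/-- Viscosity supersolution of `λ(A[v]) ∈ ∂Γ` in `Ω`, i.e. `λ(A[v]) ∈ closure Γ` in the
viscosity sense, for an extended-real-valued `v`. -/
def SupersolE {n : ℕ} (Γ : Set (Fin n → ℝ)) (Ω : Set (Euc n)) (v : Euc n → EReal) : Prop :=
  ∀ x₀ ∈ Ω, ∀ φ : Euc n → ℝ, ContDiff ℝ 2 φ → (φ x₀ : EReal) = v x₀ →
    (∀ᶠ x in 𝓝[Ω] x₀, (φ x : EReal) ≤ v x) → EigIn (mobius φ x₀) (closure Γ)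

/-- Viscosity subsolution of `λ(A[v]) ∈ ∂Γ` in `Ω`, i.e. `λ(A[v]) ∈ ℝⁿ ∖ Γ` in the
viscosity sense, for an extended-real-valued `v`. -/
def SubsolE {n : ℕ} (Γ : Set (Fin n → ℝ)) (Ω : Set (Euc n)) (v : Euc n → EReal) : Prop :=
  ∀ x₀ ∈ Ω, ∀ φ : Euc n → ℝ, ContDiff ℝ 2 φ → (φ x₀ : EReal) = v x₀ →
    (∀ᶠ x in 𝓝[Ω] x₀, v x ≤ (φ x : EReal)) → EigIn (mobius φ x₀) Γᶜ

/-- `v` is lowerconical at `x₀ ∈ Ω` (Caffarelli–Li–Nirenberg): either `v x₀ = +∞`, or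
`v x₀ < +∞` and for every `ε > 0` and every smooth `η`,
`inf_{x ∈ Ω} ((v-η)(x) - (v-η)(x₀) - ε|x-x₀|) < 0`. -/
def LowerConical {n : ℕ} (Ω : Set (Euc n)) (v : Euc n → EReal) (x₀ : Euc n) : Prop :=
  v x₀ = ⊤ ∨ (v x₀ ≠ ⊤ ∧ ∀ ε : ℝ, 0 < ε → ∀ η : Euc n → ℝ, ContDiff ℝ (⊤ : ℕ∞) η →
    ∃ x ∈ Ω, v x - (η x : EReal) <
      v x₀ - (η x₀ : EReal) + ((ε * ‖x - x₀‖ : ℝ) : EReal))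

/-- `v` is upperconical at `x₀ ∈ Ω` iff `-v` is lowerconical at `x₀`. -/
def UpperConical {n : ℕ} (Ω : Set (Euc n)) (v : Euc n → EReal) (x₀ : Euc n) : Prop :=
  LowerConical Ω (fun x => -(v x)) x₀

/-!
Around the puncture `z` we compare `v` with the barriers
`c + ⟪p, x - z⟫ + μ s + θ⁻¹ log (1 - (σ / s) ^ θ)`, where `s = |x - z|²`. The Möbius Hessian of a
radial function has one eigenvalue in the radial direction and `n - 1` equal ones, and
`λ* ∉ closure Γ` leaves enough room for these barriers to be strict subsolutions as soon as `θ` is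
small, `μ` is large compared with `|p|²` and `|p| |x - z| ≤ θ`. They tend to `-∞` as `s ↓ σ`, so
they lie below `v` on the sphere `s = σ` whatever `v` does near `z`; letting `σ → 0` gives a
comparison principle through the puncture: `v ≥ c + ⟪p, x - z⟫` on `|x - z| = R` implies
`liminf v ≥ c - μ R²`.

With `p = 0` this bounds the `liminf` from below. If `v` is not lowerconical at `z` because of `η`
and `ε`, then on small spheres `v` lies `ε R / 2` above the tangent plane of `η` translated to
height `v(z)`, so `p = ∇η(z)` yields `v(z) ≥ v(z) + ε R / 2 - μ R²`, which is false for small `R`.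
-/

section Cones

variable {n : ℕ}

/-- The properties of `closure Γ` that survive from condition (C): a symmetric cone that is upward
closed for the coordinatewise order. -/
structure IsSymmetricUpperCone (K : Set (Fin n → ℝ)) : Prop where
  isUpperSet : IsUpperSet K
  comp_perm_mem : ∀ σ : Equiv.Perm (Fin n), ∀ lam ∈ K, lam ∘ σ ∈ K
  smul_mem : ∀ t : ℝ, 0 < t → ∀ lam ∈ K, t • lam ∈ K

theorem isUpperSet_closure_of_add_gammaN_mem {Γ : Set (Fin n → ℝ)}
    (hadd : ∀ lam ∈ Γ, ∀ mu ∈ GammaN n, lam + mu ∈ Γ) : IsUpperSet (closure Γ) := by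
  intro lam mu hle hlam
  have add_const_mem (k : ℝ) (hk : 0 < k) : mu + (fun _ => k) ∈ closure Γ := by
    have hmaps : MapsTo (fun l : Fin n → ℝ => l + (mu - lam + fun _ => k)) Γ Γ := fun l hl =>
      hadd l hl _ fun i => add_pos_of_nonneg_of_pos (sub_nonneg.2 (hle i)) hk
    simpa only [← add_assoc, add_sub_cancel] using hmaps.closure (by fun_prop) hlam
  have hlim : Tendsto (fun k : ℝ => mu + (fun _ : Fin n => k)) (𝓝[>] 0) (𝓝 mu) := by
    have hcont : Continuous fun k : ℝ => mu + (fun _ : Fin n => k) := by fun_prop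
    refine tendsto_nhdsWithin_of_tendsto_nhds (hcont.tendsto' 0 mu ?_)
    ext i
    simp
  exact isClosed_closure.mem_of_tendsto hlim (eventually_nhdsWithin_of_forall add_const_mem)

theorem CondC.isSymmetricUpperCone_closure {Γ : Set (Fin n → ℝ)} (hΓ : CondC Γ) :
    IsSymmetricUpperCone (closure Γ) := by
  obtain ⟨-, -, -, hperm, hcone, hadd⟩ := hΓ
  refine ⟨isUpperSet_closure_of_add_gammaN_mem hadd, fun σ lam hlam => ?_, fun t ht lam hlam => ?_⟩
  · have hmaps : MapsTo (fun l : Fin n → ℝ => l ∘ σ) Γ Γ := hperm σ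
    exact hmaps.closure (by fun_prop) hlam
  · have hmaps : MapsTo (fun l : Fin n → ℝ => t • l) Γ Γ := fun l hl => hcone l hl t ht
    exact hmaps.closure (by fun_prop) hlam

/-- The vector `(a + b, a, …, a)`: the eigenvalues of `a I + b e ⊗ e` for a unit vector `e`. -/
def axialVec (n : ℕ) (a b : ℝ) : Fin n → ℝ := fun i => a + if i.val = 0 then b else 0

theorem lamStar_eq_axialVec : lamStar n = axialVec n (-1) 2 := by
  ext i
  simp only [lamStar, axialVec]
  split_ifs <;> norm_num

theorem axialVec_mul (t a b : ℝ) : axialVec n (t * a) (t * b) = t • axialVec n a b := by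
  ext i
  simp only [axialVec, Pi.smul_apply, smul_eq_mul, mul_add, mul_ite, mul_zero]

/-- `θ` is a barrier exponent for the cone `K` if perturbing `λ* = (1, -1, …, -1)` to
`(1 + 6θ, -1 + 4θ, …, -1 + 4θ)` does not enter `K`. This is how much room `λ* ∉ K` leaves for the
error terms of the barriers below. -/
structure IsBarrierExponent (K : Set (Fin n → ℝ)) (θ : ℝ) : Prop where
  isSymmetricUpperCone : IsSymmetricUpperCone K
  pos : 0 < θ
  axialVec_notMem : axialVec n (-(1 - 4 * θ)) (2 * (1 + θ)) ∉ K

theorem exists_isBarrierExponent {K : Set (Fin n → ℝ)} (hK : IsSymmetricUpperCone K)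
    (hclosed : IsClosed K) (hstar : lamStar n ∉ K) : ∃ θ, IsBarrierExponent K θ := by
  have hcont : Continuous fun θ : ℝ => axialVec n (-(1 - 4 * θ)) (2 * (1 + θ)) := by
    refine continuous_pi fun i => ?_
    simp only [axialVec]
    split_ifs <;> fun_prop
  have hnhds : ∀ᶠ θ in 𝓝 (0 : ℝ), axialVec n (-(1 - 4 * θ)) (2 * (1 + θ)) ∉ K :=
    hcont.continuousAt.eventually_mem
      (hclosed.isOpen_compl.mem_nhds (by simpa [← lamStar_eq_axialVec] using hstar))
  obtain ⟨θ, hθK, hθ⟩ :=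
    ((hnhds.filter_mono nhdsWithin_le_nhds).and (self_mem_nhdsWithin (s := Ioi (0 : ℝ)))).exists
  exact ⟨θ, hK, hθ, hθK⟩

end Cones

section Spectral

open Matrix

variable {ι : Type*} [Fintype ι] [DecidableEq ι] {M : Matrix ι ι ℝ} (hM : M.IsHermitian)

theorem eigenvectorBasis_dotProduct (i j : ι) :
    (hM.eigenvectorBasis i).ofLp ⬝ᵥ (hM.eigenvectorBasis j).ofLp = if i = j then 1 else 0 := by
  have h := orthonormal_iff_ite.1 hM.eigenvectorBasis.orthonormal j i
  rw [EuclideanSpace.inner_eq_star_dotProduct, star_trivial] at h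
  simpa only [eq_comm (a := j)] using h

theorem eigenvalues_le_of_forall_dotProduct_le {a : ℝ}
    (h : ∀ y : ι → ℝ, y ⬝ᵥ M *ᵥ y ≤ a * (y ⬝ᵥ y)) (i : ι) : hM.eigenvalues i ≤ a := by
  simpa [hM.mulVec_eigenvectorBasis, eigenvectorBasis_dotProduct] using
    h (hM.eigenvectorBasis i).ofLp

-- Some combination of two eigenvectors is orthogonal to `e`.
theorem eigenvalues_le_or_le_of_forall_orthogonal {a : ℝ} {e : ι → ℝ}
    (h : ∀ y : ι → ℝ, e ⬝ᵥ y = 0 → y ⬝ᵥ M *ᵥ y ≤ a * (y ⬝ᵥ y)) {i j : ι} (hij : i ≠ j) :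
    hM.eigenvalues i ≤ a ∨ hM.eigenvalues j ≤ a := by
  by_contra! hlt
  set u : ι → ℝ := (hM.eigenvectorBasis i).ofLp with hu
  set w : ι → ℝ := (hM.eigenvectorBasis j).ofLp with hw
  obtain ⟨α, β, hαβ, horth⟩ :
      ∃ α β : ℝ, 0 < α ^ 2 + β ^ 2 ∧ α * (e ⬝ᵥ u) + β * (e ⬝ᵥ w) = 0 := by
    by_cases hew : e ⬝ᵥ w = 0
    · exact ⟨0, 1, by norm_num, by simp [hew]⟩
    · exact ⟨e ⬝ᵥ w, -(e ⬝ᵥ u), by positivity, by ring⟩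
  have hform := h (α • u + β • w) (by simpa [dotProduct_add, dotProduct_smul] using horth)
  simp only [hu, hw, mulVec_add, mulVec_smul, hM.mulVec_eigenvectorBasis, add_dotProduct,
    dotProduct_add, smul_dotProduct, dotProduct_smul, eigenvectorBasis_dotProduct, smul_eq_mul,
    hij, hij.symm, if_true, if_false] at hform
  have hgap : 0 < (α ^ 2 + β ^ 2) * (min (hM.eigenvalues i) (hM.eigenvalues j) - a) :=
    mul_pos hαβ (sub_pos.2 (lt_min hlt.1 hlt.2))
  nlinarith [mul_le_mul_of_nonneg_left (min_le_left (hM.eigenvalues i) (hM.eigenvalues j))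
      (sq_nonneg α),
    mul_le_mul_of_nonneg_left (min_le_right (hM.eigenvalues i) (hM.eigenvalues j)) (sq_nonneg β)]

theorem exists_forall_eigenvalues_le_ite {a b : ℝ} (hb : 0 ≤ b) {e : ι → ℝ} (he : e ⬝ᵥ e = 1)
    (h : ∀ y : ι → ℝ, y ⬝ᵥ M *ᵥ y ≤ a * (y ⬝ᵥ y) + b * (e ⬝ᵥ y) ^ 2) :
    ∃ i₀, ∀ i, hM.eigenvalues i ≤ a + if i = i₀ then b else 0 := by
  have : Nonempty ι := not_isEmpty_iff.1 fun _ => by simp at he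
  obtain ⟨i₀, hmax⟩ := Finite.exists_max hM.eigenvalues
  refine ⟨i₀, fun i => ?_⟩
  split_ifs with hi
  · refine eigenvalues_le_of_forall_dotProduct_le hM (fun y => (h y).trans ?_) i
    have cauchy_schwarz : (e ⬝ᵥ y) ^ 2 ≤ (e ⬝ᵥ e) * (y ⬝ᵥ y) := by
      simpa only [dotProduct, sq] using Finset.sum_mul_sq_le_sq_mul_sq Finset.univ e y
    rw [he, one_mul] at cauchy_schwarz
    rw [add_mul]
    gcongr
  · rw [add_zero]
    have horth (y : ι → ℝ) (hy : e ⬝ᵥ y = 0) : y ⬝ᵥ M *ᵥ y ≤ a * (y ⬝ᵥ y) := by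
      simpa [hy] using h y
    exact (eigenvalues_le_or_le_of_forall_orthogonal hM horth hi).elim id (hmax i).trans

theorem IsSymmetricUpperCone.axialVec_mem_of_eigIn {n : ℕ} {K : Set (Fin n → ℝ)}
    (hK : IsSymmetricUpperCone K) {M : Matrix (Fin n) (Fin n) ℝ} (hMK : EigIn M K) {a b : ℝ}
    (hb : 0 ≤ b) {e : Fin n → ℝ} (he : e ⬝ᵥ e = 1)
    (h : ∀ y : Fin n → ℝ, y ⬝ᵥ M *ᵥ y ≤ a * (y ⬝ᵥ y) + b * (e ⬝ᵥ y) ^ 2) :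
    axialVec n a b ∈ K := by
  obtain ⟨hM, hmem⟩ := hMK
  obtain ⟨i₀, hi₀⟩ := exists_forall_eigenvalues_le_ite hM hb he h
  have hn : 0 < n := i₀.pos
  convert hK.comp_perm_mem (Equiv.swap i₀ ⟨0, hn⟩) _ (hK.isUpperSet hi₀ hmem) using 1
  ext i
  have hswap : Equiv.swap i₀ ⟨0, hn⟩ i = i₀ ↔ i.val = 0 := by
    rw [Equiv.swap_apply_eq_iff, Equiv.swap_apply_left, Fin.ext_iff]
  simp only [axialVec, Function.comp_apply, hswap]

theorem IsBarrierExponent.not_eigIn {n : ℕ} {K : Set (Fin n → ℝ)} {θ : ℝ}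
    (hθ : IsBarrierExponent K θ) {M : Matrix (Fin n) (Fin n) ℝ} {t : ℝ} (ht : 0 < t)
    {e : Fin n → ℝ} (he : e ⬝ᵥ e = 1)
    (h : ∀ y : Fin n → ℝ, y ⬝ᵥ M *ᵥ y ≤
      t * (-(1 - 4 * θ) * (y ⬝ᵥ y) + 2 * (1 + θ) * (e ⬝ᵥ y) ^ 2)) :
    ¬ EigIn M K := by
  intro hMK
  have hpos := hθ.pos
  have hmem := hθ.isSymmetricUpperCone.axialVec_mem_of_eigIn hMK
    (a := t * -(1 - 4 * θ)) (b := t * (2 * (1 + θ))) (by positivity) he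
    fun y => (h y).trans_eq (by ring)
  rw [axialVec_mul] at hmem
  have hscaled := hθ.isSymmetricUpperCone.smul_mem t⁻¹ (inv_pos.2 ht) _ hmem
  rw [inv_smul_smul₀ ht.ne'] at hscaled
  exact hθ.axialVec_notMem hscaled

end Spectral

section TiltedRadial

open scoped InnerProductSpace

variable {E : Type*} [NormedAddCommGroup E] [InnerProductSpace ℝ E]

/-- The sum of the linear function `⟪p, · - z⟫` and of the radial function around `z` with profile
`f`, a function of the *squared* distance to `z`. Both the barriers and the test functions of the
comparison argument have this form. -/
def tiltedRadial (p z : E) (f : ℝ → ℝ) (x : E) : ℝ := ⟪p, x - z⟫_ℝ + f (‖x - z‖ ^ 2)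

variable {p z : E} {f : ℝ → ℝ} {x : E}

theorem contDiff_tiltedRadial {k : WithTop ℕ∞} (hf : ContDiff ℝ k f) :
    ContDiff ℝ k (tiltedRadial p z f) :=
  (contDiff_const.inner ℝ (contDiff_id.sub contDiff_const)).add
    (hf.comp ((contDiff_id.sub contDiff_const).norm_sq ℝ))

theorem continuousOn_tiltedRadial {S : Set ℝ} (hf : ContinuousOn f S) :
    ContinuousOn (tiltedRadial p z f) ((fun x => ‖x - z‖ ^ 2) ⁻¹' S) := by
  have hlin : Continuous fun x : E => ⟪p, x - z⟫_ℝ := by fun_prop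
  exact hlin.continuousOn.add (hf.comp (by fun_prop) (mapsTo_preimage _ _))

theorem tiltedRadial_const_add (c : ℝ) :
    tiltedRadial p z (fun s => c + f s) x = c + tiltedRadial p z f x := by
  simp only [tiltedRadial]
  ring

theorem fderiv_tiltedRadial (hf : DifferentiableAt ℝ f (‖x - z‖ ^ 2)) (y : E) :
    fderiv ℝ (tiltedRadial p z f) x y = ⟪p + (2 * deriv f (‖x - z‖ ^ 2)) • (x - z), y⟫_ℝ := by
  have hlin : HasFDerivAt (fun x => ⟪p, x - z⟫_ℝ) (innerSL ℝ p) x :=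
    (innerSL ℝ p).hasFDerivAt.comp x ((hasFDerivAt_id x).sub_const z)
  have hrad := hf.hasDerivAt.comp_hasFDerivAt x ((hasFDerivAt_id x).sub_const z).norm_sq
  have hsum : HasFDerivAt (tiltedRadial p z f) _ x := hlin.add hrad
  rw [hsum.fderiv]
  simp [inner_add_left, inner_sub_left, inner_smul_left]
  ring

theorem fderiv_fderiv_tiltedRadial (hf : ContDiffAt ℝ 2 f (‖x - z‖ ^ 2)) (y y' : E) :
    fderiv ℝ (fun x => fderiv ℝ (tiltedRadial p z f) x y') x y =
      2 * deriv f (‖x - z‖ ^ 2) * ⟪y, y'⟫_ℝ +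
        4 * deriv (deriv f) (‖x - z‖ ^ 2) * ⟪x - z, y⟫_ℝ * ⟪x - z, y'⟫_ℝ := by
  have hcont : ContinuousAt (fun x : E => ‖x - z‖ ^ 2) x := by fun_prop
  have hfst : (fun x => fderiv ℝ (tiltedRadial p z f) x y') =ᶠ[𝓝 x]
      fun x => ⟪p, y'⟫_ℝ + 2 * deriv f (‖x - z‖ ^ 2) * ⟪x - z, y'⟫_ℝ := by
    filter_upwards [hcont.eventually (hf.eventually (by simp))] with t ht
    rw [fderiv_tiltedRadial (ht.differentiableAt two_ne_zero), inner_add_left,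
      real_inner_smul_left]
  have hdf : DifferentiableAt ℝ (deriv f) (‖x - z‖ ^ 2) :=
    (hf.derivWithin (m := 1) one_add_one_eq_two.le).differentiableAt one_ne_zero
  have hrad := (hdf.hasDerivAt.comp_hasFDerivAt x
    ((hasFDerivAt_id x).sub_const z).norm_sq).const_mul 2
  have hlin : HasFDerivAt (fun x => ⟪x - z, y'⟫_ℝ) (innerSL ℝ y') x := by
    have hswap : HasFDerivAt (fun x => ⟪y', x - z⟫_ℝ) (innerSL ℝ y') x :=
      (innerSL ℝ y').hasFDerivAt.comp x ((hasFDerivAt_id x).sub_const z)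
    simpa only [real_inner_comm] using hswap
  have hprod := (hrad.mul hlin).const_add ⟪p, y'⟫_ℝ
  rw [hfst.fderiv_eq]
  refine (congrArg (· y) hprod.fderiv).trans ?_
  simp [inner_sub_left, real_inner_comm y y']
  ring

theorem inner_mul_inner_le_norm_mul_norm_mul_sq (p X Y : E) :
    ⟪p, Y⟫_ℝ * ⟪X, Y⟫_ℝ ≤ ‖p‖ * ‖X‖ * ‖Y‖ ^ 2 := by
  calc ⟪p, Y⟫_ℝ * ⟪X, Y⟫_ℝ ≤ |⟪p, Y⟫_ℝ| * |⟪X, Y⟫_ℝ| := by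
        rw [← abs_mul]
        exact le_abs_self _
    _ ≤ (‖p‖ * ‖Y‖) * (‖X‖ * ‖Y‖) := by
        gcongr <;> exact abs_real_inner_le_norm _ _
    _ = ‖p‖ * ‖X‖ * ‖Y‖ ^ 2 := by ring

/-- The form on the left is `e^{2φ} A[φ](x)` for `φ = tiltedRadial p z f`, with `X = x - z`, `b` and
`d` the first two derivatives of `f` and `p + 2bX` the gradient of `φ`. -/
theorem mobius_form_le {θ b d : ℝ} {p X : E} (hX : X ≠ 0) (hb : 0 < b) (hpX : ‖p‖ * ‖X‖ ≤ θ)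
    (hpb : ‖p‖ ^ 2 ≤ 2 * θ * b)
    (hd : -d * ‖X‖ ^ 2 ≤ (1 + θ) * b + θ * b ^ 2 * ‖X‖ ^ 2) (Y : E) :
    -(2 * b) * ‖Y‖ ^ 2 - 4 * d * ⟪X, Y⟫_ℝ ^ 2 + ⟪p + (2 * b) • X, Y⟫_ℝ ^ 2
        - 1 / 2 * ‖p + (2 * b) • X‖ ^ 2 * ‖Y‖ ^ 2 ≤
      2 * (b + b ^ 2 * ‖X‖ ^ 2) *
        (-(1 - 4 * θ) * ‖Y‖ ^ 2 + 2 * (1 + θ) * ⟪‖X‖⁻¹ • X, Y⟫_ℝ ^ 2) := by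
  set ζ := ⟪‖X‖⁻¹ • X, Y⟫_ℝ with hζ
  have hXY : ⟪X, Y⟫_ℝ = ‖X‖ * ζ := by
    rw [hζ, real_inner_smul_left, mul_inv_cancel_left₀ (norm_ne_zero_iff.2 hX)]
  have hgrad : ⟪p + (2 * b) • X, Y⟫_ℝ = ⟪p, Y⟫_ℝ + 2 * b * (‖X‖ * ζ) := by
    rw [inner_add_left, real_inner_smul_left, hXY]
  have hnorm : ‖p + (2 * b) • X‖ ^ 2 = ‖p‖ ^ 2 + 4 * b * ⟪p, X⟫_ℝ + 4 * b ^ 2 * ‖X‖ ^ 2 := by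
    rw [norm_add_sq_real, norm_smul, inner_smul_right, Real.norm_of_nonneg (by positivity)]
    ring
  have curvature_term : -4 * d * (‖X‖ * ζ) ^ 2 ≤
      (4 * (1 + θ) * b + 4 * θ * b ^ 2 * ‖X‖ ^ 2) * ζ ^ 2 := by
    nlinarith [mul_le_mul_of_nonneg_right hd (sq_nonneg ζ)]
  have square_term : ⟪p, Y⟫_ℝ ^ 2 ≤ 2 * θ * b * ‖Y‖ ^ 2 := by
    rw [sq]
    refine (inner_mul_inner_le_norm_mul_norm_mul_sq p p Y).trans ?_
    rw [← sq]
    gcongr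
  have cross_term : b * (⟪p, Y⟫_ℝ * (‖X‖ * ζ)) ≤ b * (θ * ‖Y‖ ^ 2) := by
    rw [← hXY]
    refine mul_le_mul_of_nonneg_left
      ((inner_mul_inner_le_norm_mul_norm_mul_sq p X Y).trans ?_) hb.le
    gcongr
  have norm_term : -(b * ⟪p, X⟫_ℝ * ‖Y‖ ^ 2) ≤ b * θ * ‖Y‖ ^ 2 := by
    have hqθ : -⟪p, X⟫_ℝ ≤ θ := by linarith [(abs_le.1 (abs_real_inner_le_norm p X)).1]
    nlinarith [mul_le_mul_of_nonneg_right hqθ (by positivity : 0 ≤ b * ‖Y‖ ^ 2)]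
  have hpN : 0 ≤ ‖p‖ ^ 2 * ‖Y‖ ^ 2 := by positivity
  have hθN : 0 ≤ θ * (b ^ 2 * ‖X‖ ^ 2) * ‖Y‖ ^ 2 := by
    have hθ : 0 ≤ θ := (by positivity : 0 ≤ ‖p‖ * ‖X‖).trans hpX
    positivity
  rw [hXY, hgrad, hnorm]
  linarith

end TiltedRadial

section MobiusHessian

open Matrix
open scoped InnerProductSpace

variable {n : ℕ} {p z x : Euc n} {f : ℝ → ℝ}

theorem pgrad_tiltedRadial (hf : DifferentiableAt ℝ f (‖x - z‖ ^ 2)) (i : Fin n) :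
    pgrad (tiltedRadial p z f) x i = (p + (2 * deriv f (‖x - z‖ ^ 2)) • (x - z)) i := by
  rw [pgrad, fderiv_tiltedRadial hf, EuclideanSpace.inner_single_right]
  simp

theorem phess_tiltedRadial (hf : ContDiffAt ℝ 2 f (‖x - z‖ ^ 2)) (i j : Fin n) :
    phess (tiltedRadial p z f) x i j = 2 * deriv f (‖x - z‖ ^ 2) * (if i = j then 1 else 0) +
      4 * deriv (deriv f) (‖x - z‖ ^ 2) * (x - z) i * (x - z) j := by
  rw [phess, fderiv_fderiv_tiltedRadial hf]
  simp [EuclideanSpace.inner_single_right, PiLp.single_apply, eq_comm]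

theorem mobius_tiltedRadial (hf : ContDiffAt ℝ 2 f (‖x - z‖ ^ 2)) {b d : ℝ}
    (hb : deriv f (‖x - z‖ ^ 2) = b) (hd : deriv (deriv f) (‖x - z‖ ^ 2) = d) :
    mobius (tiltedRadial p z f) x = Real.exp (-2 * tiltedRadial p z f x) •
      ((-(2 * b) - 1 / 2 * ‖p + (2 * b) • (x - z)‖ ^ 2) • (1 : Matrix (Fin n) (Fin n) ℝ)
        - (4 * d) • vecMulVec (x - z).ofLp (x - z).ofLp
        + vecMulVec (p + (2 * b) • (x - z)).ofLp (p + (2 * b) • (x - z)).ofLp) := by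
  have hgrad (i : Fin n) : pgrad (tiltedRadial p z f) x i = (p + (2 * b) • (x - z)) i := by
    rw [pgrad_tiltedRadial (hf.differentiableAt two_ne_zero), hb]
  rw [mobius, EuclideanSpace.real_norm_sq_eq (p + _)]
  congr 1
  ext i j
  simp only [of_apply, hgrad, phess_tiltedRadial hf, hb, hd, Matrix.add_apply, Matrix.sub_apply,
    Matrix.smul_apply, smul_eq_mul, Matrix.one_apply, vecMulVec_apply]
  ring

theorem dotProduct_mobius_tiltedRadial_mulVec (hf : ContDiffAt ℝ 2 f (‖x - z‖ ^ 2)) {b d : ℝ}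
    (hb : deriv f (‖x - z‖ ^ 2) = b) (hd : deriv (deriv f) (‖x - z‖ ^ 2) = d) (Y : Euc n) :
    Y.ofLp ⬝ᵥ mobius (tiltedRadial p z f) x *ᵥ Y.ofLp = Real.exp (-2 * tiltedRadial p z f x) *
      (-(2 * b) * ‖Y‖ ^ 2 - 4 * d * ⟪x - z, Y⟫_ℝ ^ 2 + ⟪p + (2 * b) • (x - z), Y⟫_ℝ ^ 2
        - 1 / 2 * ‖p + (2 * b) • (x - z)‖ ^ 2 * ‖Y‖ ^ 2) := by
  rw [mobius_tiltedRadial hf hb hd, ← real_inner_self_eq_norm_sq Y]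
  simp only [EuclideanSpace.inner_eq_star_dotProduct, star_trivial, smul_mulVec, add_mulVec,
    sub_mulVec, one_mulVec, vecMulVec_mulVec, dotProduct_smul, dotProduct_add, dotProduct_sub,
    smul_eq_mul, MulOpposite.smul_eq_mul_unop, MulOpposite.unop_op, dotProduct_comm _ Y.ofLp]
  ring

theorem IsBarrierExponent.not_eigIn_mobius_tiltedRadial {K : Set (Fin n → ℝ)} {θ : ℝ}
    (hθ : IsBarrierExponent K θ) (hf : ContDiffAt ℝ 2 f (‖x - z‖ ^ 2)) {b d : ℝ}
    (hb : deriv f (‖x - z‖ ^ 2) = b) (hd : deriv (deriv f) (‖x - z‖ ^ 2) = d) (hxz : x ≠ z)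
    (hbpos : 0 < b) (hpx : ‖p‖ * ‖x - z‖ ≤ θ) (hpb : ‖p‖ ^ 2 ≤ 2 * θ * b)
    (hdb : -d * ‖x - z‖ ^ 2 ≤ (1 + θ) * b + θ * b ^ 2 * ‖x - z‖ ^ 2) :
    ¬ EigIn (mobius (tiltedRadial p z f) x) K := by
  have hX : x - z ≠ 0 := sub_ne_zero.2 hxz
  have dotProduct_eq_inner (e y : Euc n) : e.ofLp ⬝ᵥ y.ofLp = ⟪e, y⟫_ℝ := by
    rw [EuclideanSpace.inner_eq_star_dotProduct, star_trivial, dotProduct_comm]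
  refine hθ.not_eigIn (e := (‖x - z‖⁻¹ • (x - z)).ofLp)
    (t := Real.exp (-2 * tiltedRadial p z f x) * (2 * (b + b ^ 2 * ‖x - z‖ ^ 2)))
    (by positivity) ?_ fun y => ?_
  · rw [dotProduct_eq_inner, real_inner_self_eq_norm_sq, norm_smul, norm_inv, norm_norm,
      inv_mul_cancel₀ (norm_ne_zero_iff.2 hX), one_pow]
  · obtain ⟨Y, rfl⟩ : ∃ Y : Euc n, Y.ofLp = y := ⟨WithLp.toLp 2 y, rfl⟩
    rw [dotProduct_mobius_tiltedRadial_mulVec hf hb hd, dotProduct_eq_inner, dotProduct_eq_inner,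
      real_inner_self_eq_norm_sq, mul_assoc (Real.exp _)]
    exact mul_le_mul_of_nonneg_left (mobius_form_le hX hbpos hpx hpb hdb Y) (Real.exp_nonneg _)

end MobiusHessian

section Touching

variable {X : Type*} [TopologicalSpace X] {K : Set X} {v : X → EReal}

theorem exists_real_forall_le (hK : IsCompact K) (hlsc : LowerSemicontinuousOn v K)
    (hbot : ∀ x ∈ K, ⊥ < v x) : ∃ m : ℝ, ∀ x ∈ K, (m : EReal) ≤ v x := by
  rcases K.eq_empty_or_nonempty with rfl | hne
  · exact ⟨0, by simp⟩
  · obtain ⟨x₀, hx₀, hmin⟩ := LowerSemicontinuousOn.exists_isMinOn hne hK hlsc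
    obtain ⟨m, -, hm⟩ := EReal.lt_iff_exists_real_btwn.1 (hbot x₀ hx₀)
    exact ⟨m, fun x hx => hm.le.trans (hmin hx)⟩

theorem exists_translate_touching (hK : IsCompact K) (hlsc : LowerSemicontinuousOn v K)
    (hbot : ∀ x ∈ K, ⊥ < v x) {φ : X → ℝ} (hφ : ContinuousOn φ K) {x₁ : X} (hx₁ : x₁ ∈ K)
    (hlt : v x₁ < φ x₁) :
    ∃ c < 0, ∃ x₀ ∈ K, ((c + φ x₀ : ℝ) : EReal) = v x₀ ∧
      ∀ x ∈ K, ((c + φ x : ℝ) : EReal) ≤ v x := by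
  have hlscsub : LowerSemicontinuousOn (fun x => v x + -(φ x : EReal)) K := by
    refine hlsc.add' (ContinuousOn.lowerSemicontinuousOn ?_) fun x _ =>
      EReal.continuousAt_add (Or.inr (EReal.coe_ne_bot (-φ x)))
        (Or.inr (EReal.coe_ne_top (-φ x)))
    exact continuous_coe_real_ereal.comp_continuousOn hφ.neg
  obtain ⟨x₀, hx₀, hmin⟩ := LowerSemicontinuousOn.exists_isMinOn ⟨x₁, hx₁⟩ hK hlscsub
  have hneg : v x₀ - φ x₀ < 0 :=
    (hmin hx₁).trans_lt ((EReal.sub_lt_iff (by simp) (by simp)).2 (by simpa using hlt))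
  have hvtop : v x₀ ≠ ⊤ := by
    rintro h
    simp [h] at hneg
  obtain ⟨a, ha⟩ : ∃ a : ℝ, (a : EReal) = v x₀ :=
    ⟨(v x₀).toReal, EReal.coe_toReal hvtop (hbot x₀ hx₀).ne'⟩
  refine ⟨a - φ x₀, ?_, x₀, hx₀, by rw [sub_add_cancel, ha], fun x hx => ?_⟩
  · rw [← ha] at hneg
    exact_mod_cast hneg
  · have hle : v x₀ - φ x₀ ≤ v x - φ x := hmin hx
    rw [EReal.coe_add, EReal.coe_sub, ha]
    exact EReal.add_le_of_le_sub hle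

end Touching

section Comparison

open scoped InnerProductSpace

theorem eventually_le_of_deriv_deriv_lt {f g : ℝ → ℝ} {s : ℝ} (hf : ContDiffAt ℝ 2 f s)
    (hg : ContDiffAt ℝ 2 g s) (heq : g s = f s) (hderiv : deriv g s = deriv f s)
    (hlt : deriv (deriv g) s < deriv (deriv f) s) : ∀ᶠ t in 𝓝 s, g t ≤ f t := by
  have eventually_differentiable {h : ℝ → ℝ} (hh : ContDiffAt ℝ 2 h s) :
      ∀ᶠ t in 𝓝 s, DifferentiableAt ℝ h t :=
    (hh.eventually (by simp)).mono fun t ht => ht.differentiableAt two_ne_zero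
  have differentiable_deriv {h : ℝ → ℝ} (hh : ContDiffAt ℝ 2 h s) :
      DifferentiableAt ℝ (deriv h) s :=
    (hh.derivWithin (m := 1) one_add_one_eq_two.le).differentiableAt one_ne_zero
  have hsub : deriv (f - g) =ᶠ[𝓝 s] deriv f - deriv g := by
    filter_upwards [eventually_differentiable hf, eventually_differentiable hg] with t hft hgt
    exact deriv_sub hft hgt
  have hmin : IsLocalMin (f - g) s := by
    refine isLocalMin_of_deriv_deriv_pos ?_ ?_ (hf.continuousAt.sub hg.continuousAt)
    · rw [hsub.deriv_eq, deriv_sub (differentiable_deriv hf) (differentiable_deriv hg)]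
      exact sub_pos.2 hlt
    · rw [hsub.eq_of_nhds, Pi.sub_apply, hderiv, sub_self]
  filter_upwards [hmin] with t ht
  simpa only [Pi.sub_apply, heq, sub_self, sub_nonneg] using ht

theorem exists_contDiff_le_of_lt_deriv_deriv {f : ℝ → ℝ} {s d : ℝ} (hf : ContDiffAt ℝ 2 f s)
    (hd : d < deriv (deriv f) s) :
    ∃ g : ℝ → ℝ, ContDiff ℝ 2 g ∧ g s = f s ∧ deriv g s = deriv f s ∧ deriv (deriv g) s = d ∧
      ∀ᶠ t in 𝓝 s, g t ≤ f t := by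
  set g : ℝ → ℝ := fun t => f s + deriv f s * (t - s) + d / 2 * (t - s) ^ 2 with hg
  have hderiv : deriv g = fun t => deriv f s + d * (t - s) := by
    ext t
    have hsub : HasDerivAt (fun t => t - s) 1 t := (hasDerivAt_id t).sub_const s
    refine (((hsub.const_mul (deriv f s)).const_add (f s)).add
      ((hsub.pow 2).const_mul (d / 2))).deriv.trans ?_
    norm_num
    ring
  have hgC : ContDiff ℝ 2 g := by fun_prop
  have hgs : g s = f s := by simp [hg]
  have hg' : deriv g s = deriv f s := by simp [hderiv]
  have hg'' : deriv (deriv g) s = d := by simp [hderiv]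
  exact ⟨g, hgC, hgs, hg', hg'',
    eventually_le_of_deriv_deriv_lt hf hgC.contDiffAt hgs hg' (hg''.trans_lt hd)⟩

/-- A radial profile, as a function of the squared distance `s`, that makes a tilted radial function
a strict subsolution at distance `√s` when `θ` is a barrier exponent. The slope bound `μ ≤ f'`
absorbs the tilt. -/
structure IsStrictProfileAt (θ μ : ℝ) (f : ℝ → ℝ) (s : ℝ) : Prop where
  contDiffAt : ContDiffAt ℝ 2 f s
  le_deriv : μ ≤ deriv f s
  neg_deriv_deriv_lt : -(deriv (deriv f) s * s) < (1 + θ) * deriv f s + θ * deriv f s ^ 2 * s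

theorem IsStrictProfileAt.const_add {θ μ s : ℝ} {f : ℝ → ℝ} (hf : IsStrictProfileAt θ μ f s)
    (c : ℝ) : IsStrictProfileAt θ μ (fun s => c + f s) s := by
  have hderiv : deriv (fun s => c + f s) = deriv f := funext fun s => deriv_const_add c
  exact ⟨contDiffAt_const.add hf.contDiffAt, hderiv ▸ hf.le_deriv, hderiv ▸ hf.neg_deriv_deriv_lt⟩

/-- Lower semicontinuous functions `v : U → (-∞, ∞]` with `λ(A[v]) ∈ closure Γ` in the viscosity
sense. -/
structure IsViscositySupersolution {n : ℕ} (Γ : Set (Fin n → ℝ)) (U : Set (Euc n))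
    (v : Euc n → EReal) : Prop where
  lowerSemicontinuousOn : LowerSemicontinuousOn v U
  bot_lt : ∀ x ∈ U, ⊥ < v x
  supersolE : SupersolE Γ U v

variable {n : ℕ} {Γ : Set (Fin n → ℝ)} {U : Set (Euc n)} {v : Euc n → EReal} {θ μ R : ℝ}
  {p z : Euc n} {f : ℝ → ℝ}

theorem SupersolE.not_eventually_tiltedRadial_le (hv : SupersolE Γ U v)
    (hθ : IsBarrierExponent (closure Γ) θ) (hμ : 0 < μ) (hpμ : ‖p‖ ^ 2 ≤ 2 * θ * μ) {x₀ : Euc n}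
    (hx₀ : x₀ ∈ U) (hx₀z : x₀ ≠ z) (hpx : ‖p‖ * ‖x₀ - z‖ ≤ θ)
    (hf : IsStrictProfileAt θ μ f (‖x₀ - z‖ ^ 2))
    (heq : (tiltedRadial p z f x₀ : EReal) = v x₀) :
    ¬ ∀ᶠ x in 𝓝 x₀, (tiltedRadial p z f x : EReal) ≤ v x := by
  intro hle
  set s := ‖x₀ - z‖ ^ 2 with hs
  have hspos : 0 < s := pow_pos (norm_pos_iff.2 (sub_ne_zero.2 hx₀z)) 2
  have hd : -((1 + θ) * deriv f s + θ * deriv f s ^ 2 * s) / s < deriv (deriv f) s := by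
    rw [div_lt_iff₀ hspos, neg_lt]
    exact hf.neg_deriv_deriv_lt
  obtain ⟨g, hgC, hgs, hg', hg'', hgf⟩ := exists_contDiff_le_of_lt_deriv_deriv hf.contDiffAt hd
  have hcont : ContinuousAt (fun x : Euc n => ‖x - z‖ ^ 2) x₀ := by fun_prop
  refine hθ.not_eigIn_mobius_tiltedRadial (p := p) hgC.contDiffAt hg' hg'' hx₀z
    (hμ.trans_le hf.le_deriv) hpx ?_ ?_
    (hv x₀ hx₀ _ (contDiff_tiltedRadial hgC) ?_ (nhdsWithin_le_nhds ?_))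
  · have := hθ.pos
    exact hpμ.trans (by gcongr; exact hf.le_deriv)
  · rw [← hs, neg_div, neg_neg, div_mul_cancel₀ _ hspos.ne']
  · rw [← heq, tiltedRadial, tiltedRadial, ← hs, hgs]
  · filter_upwards [hle, hcont.eventually hgf] with x hx hgx
    exact (EReal.coe_le_coe_iff.2 (add_le_add_right hgx _)).trans hx

theorem isCompact_preimage_norm_sub_sq_Icc {E : Type*} [NormedAddCommGroup E] [ProperSpace E]
    (z : E) (a b : ℝ) : IsCompact ((fun x => ‖x - z‖ ^ 2) ⁻¹' Icc a b) := by
  refine (isCompact_closedBall z √b).of_isClosed_subset (isClosed_Icc.preimage (by fun_prop)) ?_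
  intro x hx
  exact mem_closedBall_iff_norm.2 (Real.le_sqrt_of_sq_le hx.2)

theorem IsViscositySupersolution.tiltedRadial_le_of_le_boundary
    (hv : IsViscositySupersolution Γ U v) (hθ : IsBarrierExponent (closure Γ) θ) (hμ : 0 < μ)
    (hpμ : ‖p‖ ^ 2 ≤ 2 * θ * μ) (hpR : ‖p‖ * R ≤ θ) (hR : 0 ≤ R) {a : ℝ} (ha : 0 < a)
    (hU : (fun x => ‖x - z‖ ^ 2) ⁻¹' Icc a (R ^ 2) ⊆ U)
    (hf : ∀ s ∈ Icc a (R ^ 2), IsStrictProfileAt θ μ f s)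
    (hinner : ∀ x, ‖x - z‖ ^ 2 = a → (tiltedRadial p z f x : EReal) ≤ v x)
    (houter : ∀ x, ‖x - z‖ ^ 2 = R ^ 2 → (tiltedRadial p z f x : EReal) ≤ v x)
    {x : Euc n} (hx : ‖x - z‖ ^ 2 ∈ Icc a (R ^ 2)) : (tiltedRadial p z f x : EReal) ≤ v x := by
  by_contra! hlt
  have hfcont : ContinuousOn f (Icc a (R ^ 2)) := fun s hs =>
    (hf s hs).contDiffAt.continuousAt.continuousWithinAt
  obtain ⟨c, hc, x₀, hx₀, heq, hle⟩ :=
    exists_translate_touching (isCompact_preimage_norm_sub_sq_Icc z a (R ^ 2))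
      (hv.lowerSemicontinuousOn.mono hU) (fun x hx => hv.bot_lt x (hU hx))
      (continuousOn_tiltedRadial hfcont) hx hlt
  have hbelow : v x₀ < tiltedRadial p z f x₀ := by
    rw [← heq, EReal.coe_lt_coe_iff]
    linarith
  have hinterior : ‖x₀ - z‖ ^ 2 ∈ Ioo a (R ^ 2) :=
    ⟨hx₀.1.lt_of_ne fun h => hbelow.not_ge (hinner x₀ h.symm),
      hx₀.2.lt_of_ne fun h => hbelow.not_ge (houter x₀ h)⟩
  have hx₀z : x₀ ≠ z := by
    rintro rfl
    simpa using ha.trans hinterior.1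
  have hpx : ‖p‖ * ‖x₀ - z‖ ≤ θ :=
    (mul_le_mul_of_nonneg_left (abs_le_of_sq_le_sq' hx₀.2 hR).2 (norm_nonneg p)).trans hpR
  simp only [← tiltedRadial_const_add] at heq hle
  refine hv.supersolE.not_eventually_tiltedRadial_le hθ hμ hpμ (hU hx₀) hx₀z hpx
    ((hf _ hx₀).const_add c) heq ?_
  have hcont : ContinuousAt (fun x : Euc n => ‖x - z‖ ^ 2) x₀ := by fun_prop
  filter_upwards [hcont.eventually_mem (Ioo_mem_nhds hinterior.1 hinterior.2)] with y hy
  exact hle y (Ioo_subset_Icc_self hy)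

end Comparison

section BarrierProfile

/-- The profile, in the squared distance `s > σ`, of the barriers. For `μ = 0` it attains
equality in `IsStrictProfileAt.neg_deriv_deriv_lt`, and it tends to `-∞` as `s ↓ σ`. -/
def barrierProfile (θ μ σ s : ℝ) : ℝ := μ * s + θ⁻¹ * Real.log (1 - (σ / s) ^ θ)

variable {θ μ σ s : ℝ}

theorem one_sub_div_rpow_pos (hθ : 0 < θ) (hσ : 0 < σ) (hs : σ < s) : 0 < 1 - (σ / s) ^ θ :=
  sub_pos.2 (Real.rpow_lt_one (div_pos hσ (hσ.trans hs)).le ((div_lt_one (hσ.trans hs)).2 hs) hθ)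

theorem hasDerivAt_one_sub_div_rpow (hσ : 0 < σ) (hs : 0 < s) :
    HasDerivAt (fun s => 1 - (σ / s) ^ θ) (θ * (σ / s) ^ θ / s) s := by
  have hdiv : HasDerivAt (fun s => σ / s) (-(σ / s) / s) s := by
    refine ((hasDerivAt_inv hs.ne').const_mul σ).congr_deriv ?_
    field_simp
  refine ((hdiv.rpow_const (Or.inl (div_pos hσ hs).ne')).const_sub 1).congr_deriv ?_
  rw [Real.rpow_sub_one (div_pos hσ hs).ne']
  field_simp

theorem hasDerivAt_barrierProfile (hθ : 0 < θ) (hσ : 0 < σ) (hs : σ < s) :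
    HasDerivAt (barrierProfile θ μ σ) (μ + ((1 - (σ / s) ^ θ)⁻¹ - 1) / s) s := by
  have hy := one_sub_div_rpow_pos hθ hσ hs
  have hspos := hσ.trans hs
  refine (((hasDerivAt_id s).const_mul μ).add (((hasDerivAt_one_sub_div_rpow hσ hspos).log
    hy.ne').const_mul θ⁻¹)).congr_deriv ?_
  field_simp
  ring

theorem deriv_deriv_barrierProfile (hθ : 0 < θ) (hσ : 0 < σ) (hs : σ < s) :
    deriv (deriv (barrierProfile θ μ σ)) s =
      -(θ * (((1 - (σ / s) ^ θ)⁻¹ - 1) / s) ^ 2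
        + (1 + θ) * (((1 - (σ / s) ^ θ)⁻¹ - 1) / s) / s) := by
  have hy := one_sub_div_rpow_pos hθ hσ hs
  have hspos := hσ.trans hs
  have hderiv : deriv (barrierProfile θ μ σ) =ᶠ[𝓝 s]
      fun s => μ + ((1 - (σ / s) ^ θ)⁻¹ - 1) / s :=
    (lt_mem_nhds hs).mono fun t ht => (hasDerivAt_barrierProfile hθ hσ ht).deriv
  have hinv := (hasDerivAt_one_sub_div_rpow (θ := θ) hσ hspos).inv hy.ne'
  have hslope := ((hinv.sub_const 1).div (hasDerivAt_id s) hspos.ne').const_add μ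
  refine hderiv.deriv_eq.trans (hslope.deriv.trans ?_)
  simp only [Pi.inv_apply, id]
  field_simp
  ring

theorem contDiffAt_barrierProfile {k : WithTop ℕ∞} (hθ : 0 < θ) (hσ : 0 < σ) (hs : σ < s) :
    ContDiffAt ℝ k (barrierProfile θ μ σ) s := by
  have hspos := hσ.trans hs
  have hpow : ContDiffAt ℝ k (fun s => (σ / s) ^ θ) s :=
    (contDiffAt_const.div contDiffAt_id hspos.ne').rpow_const_of_ne
      (div_pos hσ hspos).ne'
  exact (contDiffAt_const.mul contDiffAt_id).add
    (contDiffAt_const.mul ((contDiffAt_const.sub hpow).log (one_sub_div_rpow_pos hθ hσ hs).ne'))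

theorem isStrictProfileAt_barrierProfile (hθ : 0 < θ) (hμ : 0 < μ) (hσ : 0 < σ) (hs : σ < s) :
    IsStrictProfileAt θ μ (barrierProfile θ μ σ) s := by
  have hspos := hσ.trans hs
  set ℓ := ((1 - (σ / s) ^ θ)⁻¹ - 1) / s with hℓ
  have hderiv : deriv (barrierProfile θ μ σ) s = μ + ℓ :=
    (hasDerivAt_barrierProfile hθ hσ hs).deriv
  have hℓnonneg : 0 ≤ ℓ := by
    refine div_nonneg (sub_nonneg.2 ((one_le_inv₀ (one_sub_div_rpow_pos hθ hσ hs)).2 ?_)) hspos.le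
    exact sub_le_self 1 (by positivity)
  refine ⟨contDiffAt_barrierProfile hθ hσ hs, by linarith, ?_⟩
  rw [hderiv, deriv_deriv_barrierProfile hθ hσ hs, ← hℓ]
  calc -(-(θ * ℓ ^ 2 + (1 + θ) * ℓ / s) * s) = (1 + θ) * ℓ + θ * ℓ ^ 2 * s := by
        field_simp
        ring
    _ < (1 + θ) * (μ + ℓ) + θ * (μ + ℓ) ^ 2 * s := by
        gcongr <;> exact lt_add_of_pos_left ℓ hμ

theorem barrierProfile_le (hθ : 0 < θ) (hσ : 0 < σ) (hs : σ < s) :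
    barrierProfile θ μ σ s ≤ μ * s := by
  have hspos := hσ.trans hs
  have hlog : Real.log (1 - (σ / s) ^ θ) ≤ 0 :=
    Real.log_nonpos (one_sub_div_rpow_pos hθ hσ hs).le (sub_le_self 1 (by positivity))
  exact add_le_of_nonpos_right (mul_nonpos_of_nonneg_of_nonpos (inv_nonneg.2 hθ.le) hlog)

theorem tendsto_barrierProfile_atBot (hθ : 0 < θ) (hσ : 0 < σ) :
    Tendsto (barrierProfile θ μ σ) (𝓝[>] σ) atBot := by
  have hcont : ContinuousAt (fun s => 1 - (σ / s) ^ θ) σ :=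
    (hasDerivAt_one_sub_div_rpow hσ hσ).continuousAt
  have hzero : Tendsto (fun s => 1 - (σ / s) ^ θ) (𝓝[>] σ) (𝓝[>] 0) := by
    refine tendsto_nhdsWithin_iff.2 ⟨?_, ?_⟩
    · convert hcont.tendsto.mono_left nhdsWithin_le_nhds
      simp [hσ.ne']
    · exact eventually_nhdsWithin_of_forall fun s hs => one_sub_div_rpow_pos hθ hσ hs
  have hlin : Tendsto (fun s => μ * s) (𝓝[>] σ) (𝓝 (μ * σ)) :=
    (tendsto_id.const_mul μ).mono_left nhdsWithin_le_nhds
  exact hlin.add_atBot ((Real.tendsto_log_nhdsGT_zero.comp hzero).const_mul_atBot (inv_pos.2 hθ))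

theorem tendsto_barrierProfile_nhds_zero (hθ : 0 < θ) :
    Tendsto (fun σ => barrierProfile θ μ σ s) (𝓝 0) (𝓝 (μ * s)) := by
  have hpow : Tendsto (fun σ => (σ / s) ^ θ) (𝓝 0) (𝓝 0) := by
    have hcont : Continuous fun σ : ℝ => (σ / s) ^ θ :=
      (continuous_id.div_const s).rpow_const fun _ => Or.inr hθ.le
    exact hcont.tendsto' 0 0 (by simp [hθ.ne'])
  have hlog : Tendsto (fun σ => Real.log (1 - (σ / s) ^ θ)) (𝓝 0) (𝓝 0) := by
    simpa using (hpow.const_sub 1).log (by norm_num)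
  simpa only [barrierProfile, mul_zero, add_zero] using (hlog.const_mul θ⁻¹).const_add (μ * s)

end BarrierProfile

section SphereToCenter

open scoped InnerProductSpace

variable {n : ℕ} {Γ : Set (Fin n → ℝ)} {U : Set (Euc n)} {v : Euc n → EReal} {θ μ σ R c : ℝ}
  {p z x : Euc n}

theorem IsViscositySupersolution.tiltedRadial_barrierProfile_le
    (hv : IsViscositySupersolution Γ U v) (hθ : IsBarrierExponent (closure Γ) θ) (hμ : 0 < μ)
    (hpμ : ‖p‖ ^ 2 ≤ 2 * θ * μ) (hpR : ‖p‖ * R ≤ θ)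
    (hU : ∀ x, x ≠ z → ‖x - z‖ ≤ R → x ∈ U)
    (hsphere : ∀ x, ‖x - z‖ = R → ((c + ⟪p, x - z⟫_ℝ + μ * R ^ 2 : ℝ) : EReal) ≤ v x)
    (hσ : 0 < σ) (hσx : σ < ‖x - z‖ ^ 2) (hxR : ‖x - z‖ ≤ R) :
    ((c + tiltedRadial p z (barrierProfile θ μ σ) x : ℝ) : EReal) ≤ v x := by
  have hR : 0 ≤ R := (norm_nonneg _).trans hxR
  have annulus_subset : (fun x => ‖x - z‖ ^ 2) ⁻¹' Icc σ (R ^ 2) ⊆ U := by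
    refine fun y hy => hU y ?_ (abs_le_of_sq_le_sq' hy.2 hR).2
    rintro rfl
    simpa using hσ.trans_le hy.1
  obtain ⟨m, hm⟩ := exists_real_forall_le (isCompact_preimage_norm_sub_sq_Icc z σ (R ^ 2))
    (hv.lowerSemicontinuousOn.mono annulus_subset) fun y hy => hv.bot_lt y (annulus_subset hy)
  obtain ⟨τ, hτm, hστ, hτx⟩ : ∃ τ, barrierProfile θ μ σ τ ≤ m - c - ‖p‖ * R ∧ σ < τ ∧
      τ < ‖x - z‖ ^ 2 :=
    (((tendsto_barrierProfile_atBot hθ.pos hσ).eventually_le_atBot (m - c - ‖p‖ * R)).and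
      (Ioo_mem_nhdsGT hσx)).exists
  have hτR : τ < R ^ 2 := hτx.trans_le (pow_le_pow_left₀ (norm_nonneg _) hxR 2)
  rw [← tiltedRadial_const_add]
  refine hv.tiltedRadial_le_of_le_boundary hθ hμ hpμ hpR hR (hσ.trans hστ)
    ((preimage_mono (Icc_subset_Icc_left hστ.le)).trans annulus_subset)
    (fun s hs => (isStrictProfileAt_barrierProfile hθ.pos hμ hσ (hστ.trans_le hs.1)).const_add c)
    (fun y hy => ?_) (fun y hy => ?_) ⟨hτx.le, pow_le_pow_left₀ (norm_nonneg _) hxR 2⟩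
  · refine (EReal.coe_le_coe_iff.2 ?_).trans (hm y (by simp [hy, hστ.le, hτR.le]))
    have hinner : ⟪p, y - z⟫_ℝ ≤ ‖p‖ * R := (real_inner_le_norm p _).trans
      (by gcongr; exact (abs_le_of_sq_le_sq' (hy.trans_le hτR.le) hR).2)
    rw [tiltedRadial_const_add, tiltedRadial, hy]
    linarith
  · refine (EReal.coe_le_coe_iff.2 ?_).trans (hsphere y ((sq_eq_sq₀ (norm_nonneg _) hR).1 hy))
    rw [tiltedRadial_const_add, tiltedRadial, hy]
    linarith [barrierProfile_le (μ := μ) hθ.pos hσ (hστ.trans hτR)]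

theorem IsViscositySupersolution.add_inner_add_mul_sq_le
    (hv : IsViscositySupersolution Γ U v) (hθ : IsBarrierExponent (closure Γ) θ) (hμ : 0 < μ)
    (hpμ : ‖p‖ ^ 2 ≤ 2 * θ * μ) (hpR : ‖p‖ * R ≤ θ)
    (hU : ∀ x, x ≠ z → ‖x - z‖ ≤ R → x ∈ U)
    (hsphere : ∀ x, ‖x - z‖ = R → ((c + ⟪p, x - z⟫_ℝ + μ * R ^ 2 : ℝ) : EReal) ≤ v x)
    (hxz : x ≠ z) (hxR : ‖x - z‖ ≤ R) :
    ((c + (⟪p, x - z⟫_ℝ + μ * ‖x - z‖ ^ 2) : ℝ) : EReal) ≤ v x := by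
  have hlim : Tendsto (fun σ => c + tiltedRadial p z (barrierProfile θ μ σ) x) (𝓝[>] 0)
      (𝓝 (c + (⟪p, x - z⟫_ℝ + μ * ‖x - z‖ ^ 2))) :=
    (((tendsto_barrierProfile_nhds_zero hθ.pos).const_add _).const_add c).mono_left
      nhdsWithin_le_nhds
  have hxpos : 0 < ‖x - z‖ ^ 2 := pow_pos (norm_pos_iff.2 (sub_ne_zero.2 hxz)) 2
  refine le_of_tendsto ((continuous_coe_real_ereal.tendsto _).comp hlim) ?_
  filter_upwards [Ioo_mem_nhdsGT hxpos] with σ hσ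
  exact hv.tiltedRadial_barrierProfile_le hθ hμ hpμ hpR hU hsphere hσ.1 hσ.2 hxR

theorem le_liminf_of_tendsto_of_eventually_le {α β : Type*} [CompleteLinearOrder β]
    [DenselyOrdered β] [TopologicalSpace β] [OrderTopology β] {l : Filter α} {f g : α → β} {b : β}
    (hg : Tendsto g l (𝓝 b)) (hle : g ≤ᶠ[l] f) : b ≤ liminf f l :=
  le_of_forall_lt_imp_le_of_dense fun a ha => le_liminf_of_le isCobounded_ge_of_top <| by
    filter_upwards [hg.eventually_const_lt ha, hle] with x hax hx
    exact hax.le.trans hx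

theorem eventually_nhdsGT_forall_norm_sub_le {E : Type*} [NormedAddCommGroup E] {z : E}
    {P : E → Prop} (hP : ∀ᶠ x in 𝓝[≠] z, P x) :
    ∀ᶠ R in 𝓝[>] (0 : ℝ), ∀ x, x ≠ z → ‖x - z‖ ≤ R → P x := by
  obtain ⟨δ, hδ, hball⟩ := Metric.eventually_nhds_iff.1 (eventually_nhdsWithin_iff.1 hP)
  filter_upwards [Ioo_mem_nhdsGT hδ] with R hR x hxz hxR
  exact hball ((dist_eq_norm x z).trans_lt (hxR.trans_lt hR.2)) hxz

theorem IsViscositySupersolution.exists_eventually_sub_le_liminf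
    (hv : IsViscositySupersolution Γ U v) (hθ : IsBarrierExponent (closure Γ) θ)
    (hU : U ∈ 𝓝[≠] z) (p : Euc n) :
    ∃ C, ∀ᶠ R in 𝓝[>] (0 : ℝ), ∀ c : ℝ,
      (∀ x, ‖x - z‖ = R → ((c + ⟪p, x - z⟫_ℝ : ℝ) : EReal) ≤ v x) →
        ((c - C * R ^ 2 : ℝ) : EReal) ≤ liminf v (𝓝[≠] z) := by
  have hθpos := hθ.pos
  set μ := (‖p‖ ^ 2 + 1) / (2 * θ) with hμ
  have hμpos : 0 < μ := by positivity
  have hpμ : ‖p‖ ^ 2 ≤ 2 * θ * μ := by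
    rw [hμ, mul_div_cancel₀ _ (by positivity)]
    exact (lt_add_one _).le
  have hpR : ∀ᶠ R in 𝓝[>] (0 : ℝ), ‖p‖ * R ≤ θ := by
    have hcont : Continuous fun R => ‖p‖ * R := by fun_prop
    refine ((hcont.tendsto' 0 0 (mul_zero _)).eventually_le_const hθpos).filter_mono
      nhdsWithin_le_nhds
  refine ⟨μ, ?_⟩
  filter_upwards [hpR, eventually_nhdsGT_forall_norm_sub_le hU, self_mem_nhdsWithin]
    with R hpR hRU hR c hsphere
  have hlim : Tendsto (fun x => c - μ * R ^ 2 + (⟪p, x - z⟫_ℝ + μ * ‖x - z‖ ^ 2)) (𝓝 z)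
      (𝓝 (c - μ * R ^ 2)) := by
    have hcont : Continuous fun x => c - μ * R ^ 2 + (⟪p, x - z⟫_ℝ + μ * ‖x - z‖ ^ 2) := by fun_prop
    exact hcont.tendsto' z _ (by simp)
  refine le_liminf_of_tendsto_of_eventually_le
    ((continuous_coe_real_ereal.tendsto _).comp (hlim.mono_left nhdsWithin_le_nhds)) ?_
  filter_upwards [self_mem_nhdsWithin, mem_nhdsWithin_of_mem_nhds (closedBall_mem_nhds z hR)]
    with x hxz hxR
  refine hv.add_inner_add_mul_sq_le hθ hμpos hpμ hpR hRU (fun y hy => ?_) hxz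
    (mem_closedBall_iff_norm.1 hxR)
  convert hsphere y hy using 2
  ring

end SphereToCenter

section Puncture

open scoped InnerProductSpace

variable {n : ℕ} {Γ : Set (Fin n → ℝ)} {U Ω : Set (Euc n)} {v : Euc n → EReal} {θ : ℝ} {z : Euc n}

theorem IsViscositySupersolution.bot_lt_liminf (hv : IsViscositySupersolution Γ U v)
    (hθ : IsBarrierExponent (closure Γ) θ) (hU : U ∈ 𝓝[≠] z) : ⊥ < liminf v (𝓝[≠] z) := by
  obtain ⟨C, hC⟩ := hv.exists_eventually_sub_le_liminf hθ hU 0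
  obtain ⟨R, hCR, hRU, hR⟩ :=
    (hC.and ((eventually_nhdsGT_forall_norm_sub_le hU).and self_mem_nhdsWithin)).exists
  have sphere_subset : sphere z R ⊆ U := fun x hx =>
    hRU x (ne_of_mem_sphere hx (ne_of_gt hR)) (mem_sphere_iff_norm.1 hx).le
  obtain ⟨m, hm⟩ := exists_real_forall_le (isCompact_sphere z R)
    (hv.lowerSemicontinuousOn.mono sphere_subset) fun x hx => hv.bot_lt x (sphere_subset hx)
  refine (EReal.bot_lt_coe _).trans_le (hCR m fun x hx => ?_)
  simpa using hm x (mem_sphere_iff_norm.2 hx)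

theorem eventually_sphere_add_inner_gradient_le {η : Euc n → ℝ} (hη : DifferentiableAt ℝ η z)
    {l ε : ℝ} (hε : 0 < ε)
    (hv : ∀ᶠ x in 𝓝[≠] z, ((l - η z + ε * ‖x - z‖ : ℝ) : EReal) ≤ v x - η x) :
    ∀ᶠ R in 𝓝[>] (0 : ℝ), ∀ x, ‖x - z‖ = R →
      ((l + ε / 2 * R + ⟪gradient η z, x - z⟫_ℝ : ℝ) : EReal) ≤ v x := by
  have hlinear := hη.hasGradientAt.hasFDerivAt.isLittleO.def (half_pos hε)
  have hle : ∀ᶠ x in 𝓝[≠] z,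
      ((l + ε / 2 * ‖x - z‖ + ⟪gradient η z, x - z⟫_ℝ : ℝ) : EReal) ≤ v x := by
    filter_upwards [hv, nhdsWithin_le_nhds hlinear] with x hx hηx
    refine le_trans ?_ (EReal.add_le_of_le_sub hx)
    rw [← EReal.coe_add, EReal.coe_le_coe_iff]
    rw [InnerProductSpace.toDual_apply_apply, Real.norm_eq_abs] at hηx
    linarith [(abs_le.1 hηx).1]
  filter_upwards [eventually_nhdsGT_forall_norm_sub_le hle, self_mem_nhdsWithin]
    with R hR hRpos x hx
  have hxz : x ≠ z := sub_ne_zero.1 (norm_pos_iff.1 (hx ▸ hRpos))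
  exact hx ▸ hR x hxz hx.le

theorem IsViscositySupersolution.lowerConical_update_liminf
    (hv : IsViscositySupersolution Γ U v) (hθ : IsBarrierExponent (closure Γ) θ)
    (hU : U ∈ 𝓝[≠] z) (hΩ : Ω ∈ 𝓝 z) :
    LowerConical Ω (Function.update v z (liminf v (𝓝[≠] z))) z := by
  rw [LowerConical, Function.update_self]
  refine or_iff_not_imp_left.2 fun htop => ⟨htop, fun ε hε η hη => ?_⟩
  by_contra! hcon
  obtain ⟨l, hl⟩ : ∃ l : ℝ, (l : EReal) = liminf v (𝓝[≠] z) :=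
    ⟨_, EReal.coe_toReal htop (hv.bot_lt_liminf hθ hU).ne'⟩
  have hcone : ∀ᶠ x in 𝓝[≠] z, ((l - η z + ε * ‖x - z‖ : ℝ) : EReal) ≤ v x - η x := by
    filter_upwards [self_mem_nhdsWithin, mem_nhdsWithin_of_mem_nhds hΩ] with x hxz hxΩ
    simpa [← hl, Function.update_of_ne hxz] using hcon x hxΩ
  obtain ⟨C, hC⟩ := hv.exists_eventually_sub_le_liminf hθ hU (gradient η z)
  have hsmall : ∀ᶠ R in 𝓝[>] (0 : ℝ), C * R < ε / 2 := by
    have hcont : Continuous fun R => C * R := by fun_prop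
    exact ((hcont.tendsto' 0 0 (mul_zero _)).eventually_lt_const (half_pos hε)).filter_mono
      nhdsWithin_le_nhds
  obtain ⟨R, hCR, hsphere, hRε, hR⟩ := (hC.and ((eventually_sphere_add_inner_gradient_le
    (hη.differentiable (by simp) z) hε hcone).and (hsmall.and self_mem_nhdsWithin))).exists
  have hle := hCR _ hsphere
  rw [← hl, EReal.coe_le_coe_iff] at hle
  nlinarith [mul_lt_mul_of_pos_right hRε hR]

theorem lowerSemicontinuousOn_update_liminf {X β : Type*} [TopologicalSpace X] [T1Space X]
    [DecidableEq X] [CompleteLinearOrder β] {f : X → β} {s : Set X} {a : X}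
    (hf : LowerSemicontinuousOn f (s \ {a})) :
    LowerSemicontinuousOn (Function.update f a (liminf f (𝓝[s \ {a}] a))) s := by
  intro x hx y hy
  have hupdate {l : Filter X} (hl : ∀ᶠ t in l, t ≠ a) (hlt : ∀ᶠ t in l, y < f t) :
      ∀ᶠ t in l, y < Function.update f a (liminf f (𝓝[s \ {a}] a)) t := by
    filter_upwards [hl, hlt] with t hta ht
    rwa [Function.update_of_ne hta]
  rcases eq_or_ne x a with rfl | hxa
  · have hpunctured : 𝓝[s] x = pure x ⊔ 𝓝[s \ {x}] x := by
      rw [← nhdsWithin_insert, insert_sdiff_self_of_mem hx]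
    rw [hpunctured, eventually_sup, eventually_pure]
    refine ⟨hy, hupdate (eventually_nhdsWithin_of_forall fun t ht => ht.2) ?_⟩
    rw [Function.update_self] at hy
    exact eventually_lt_of_lt_liminf hy
  · rw [Function.update_of_ne hxa] at hy
    have hne : {a}ᶜ ∈ 𝓝[s] x := mem_nhdsWithin_of_mem_nhds (compl_singleton_mem_nhds hxa)
    have hlt := hf x ⟨hx, hxa⟩ y hy
    rw [sdiff_eq, inter_comm, nhdsWithin_inter_of_mem hne] at hlt
    exact hupdate hne hlt

end Puncture

theorem lowerconical_criterion_general {n : ℕ} {Γ : Set (Fin n → ℝ)}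
    (hΓ : IsSymmetricUpperCone (closure Γ)) (hstar : lamStar n ∉ closure Γ) {Ω : Set (Euc n)}
    {z : Euc n} (hΩ : Ω ∈ 𝓝 z) {v : Euc n → EReal}
    (hv : IsViscositySupersolution Γ (Ω \ {z}) v) :
    ⊥ < liminf v (𝓝[Ω \ {z}] z) ∧
      LowerSemicontinuousOn (Function.update v z (liminf v (𝓝[Ω \ {z}] z))) Ω ∧
      LowerConical Ω (Function.update v z (liminf v (𝓝[Ω \ {z}] z))) z := by
  obtain ⟨θ, hθ⟩ := exists_isBarrierExponent hΓ isClosed_closure hstar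
  have hnhds : 𝓝[Ω \ {z}] z = 𝓝[≠] z := by
    rw [sdiff_eq, nhdsWithin_inter_of_mem (mem_nhdsWithin_of_mem_nhds hΩ)]
  have hU : Ω \ {z} ∈ 𝓝[≠] z := hnhds ▸ self_mem_nhdsWithin
  refine ⟨?_, lowerSemicontinuousOn_update_liminf hv.lowerSemicontinuousOn, ?_⟩
  · exact hnhds ▸ hv.bot_lt_liminf hθ hU
  · exact hnhds ▸ hv.lowerConical_update_liminf hθ hU hΩ

/-- **Criterion for lowerconical behaviour** (Proposition 4.4): for a cone `Γ` satisfying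
condition (C) with `λ* ∉ closure Γ`, any viscosity supersolution `v` of `λ(A[v]) ∈ ∂Γ` in
`B ∖ {0}` satisfies `liminf_{x→0} v > -∞`; moreover, after setting
`v(0) := liminf_{x→0} v` (possibly `+∞`), `v` is lower semi-continuous on `B` and
lowerconical at `0`. -/
theorem lowerconical_criterion
    {n : ℕ} (hn : 2 ≤ n) (Γ : Set (Fin n → ℝ)) (hΓ : CondC Γ)
    (hstar : lamStar n ∉ closure Γ)
    (B : Set (Euc n)) (hB : B = Metric.ball (0 : Euc n) 1)
    (v : Euc n → EReal) (hlsc : LowerSemicontinuousOn v (B \ {0}))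
    (hbot : ∀ x ∈ B \ {0}, ⊥ < v x) (hnetop : ∃ x ∈ B \ {0}, v x ≠ ⊤)
    (hsup : SupersolE Γ (B \ {0}) v)
    (w : Euc n → EReal)
    (hw : w = fun x => if x = (0 : Euc n) then Filter.liminf v (𝓝[B \ {0}] (0 : Euc n)) else v x) :
    ⊥ < Filter.liminf v (𝓝[B \ {0}] (0 : Euc n)) ∧
      LowerSemicontinuousOn w B ∧ LowerConical B w 0 := by
  obtain rfl : w = Function.update v 0 (liminf v (𝓝[B \ {0}] 0)) :=
    hw.trans (funext fun x => (Function.update_apply v 0 _ x).symm)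
  exact lowerconical_criterion_general hΓ.isSymmetricUpperCone_closure hstar
    (hB ▸ ball_mem_nhds 0 one_pos) ⟨hlsc, hbot, hsup⟩
end
end
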